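/- Let D be a compact subset of ℝ² with nonempty interior. Then D is homeomorphic to the closed 2-dimensional disk if and only if: (1) the interior of D is connected; (2) ℝ² \ D is connected; (3) every point of the boundary ∂D is accessible from the interior of D; (4) every point of ∂D is accessible from ℝ² \ D. -/

import Mathlib

/-- A point `x` of the boundary of `U` is *accessible* from `U` if there is a continuous
injective path in the closure of `U` ending at `x` and otherwise staying in `U`. -/
def Accessible {X : Type*} [TopologicalSpace X] (U : Set X) (x : X) : Prop :=
  ∃ φ : unitInterval → X, Continuous φ ∧ Function.Injective φ ∧
    (∀ t, φ t ∈ closure U) ∧ (∀ t : unitInterval, (t : ℝ) < 1 → φ t ∈ U) ∧ φ 1 = x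

open Set Filter Topology Metric

/-- `g` has a continuous logarithm on `K`. -/
def HasLogOn (g : ℂ → ℂ) (K : Set ℂ) : Prop :=
  ∃ l : ℂ → ℂ, ContinuousOn l K ∧ ∀ z ∈ K, Complex.exp (l z) = g z

/-- Every nonvanishing continuous function on `K` has a continuous logarithm. -/
def AllLogs (K : Set ℂ) : Prop :=
  ∀ g : ℂ → ℂ, ContinuousOn g K → (∀ z ∈ K, g z ≠ 0) → HasLogOn g K

namespace HasLogOn

variable {g h : ℂ → ℂ} {K X Y : Set ℂ}

theorem congr (hg : HasLogOn g K) (he : ∀ z ∈ K, h z = g z) : HasLogOn h K := by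
  obtain ⟨l, hl, hle⟩ := hg
  exact ⟨l, hl, fun z hz => (hle z hz).trans (he z hz).symm⟩

theorem mono (hg : HasLogOn g Y) (hXY : X ⊆ Y) : HasLogOn g X := by
  obtain ⟨l, hl, hle⟩ := hg
  exact ⟨l, hl.mono hXY, fun z hz => hle z (hXY hz)⟩

theorem mul (hg : HasLogOn g K) (hh : HasLogOn h K) : HasLogOn (fun z => g z * h z) K := by
  obtain ⟨l, hl, hle⟩ := hg
  obtain ⟨m, hm, hme⟩ := hh
  exact ⟨fun z => l z + m z, hl.add hm, fun z hz => by rw [Complex.exp_add, hle z hz, hme z hz]⟩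

theorem inv (hg : HasLogOn g K) : HasLogOn (fun z => (g z)⁻¹) K := by
  obtain ⟨l, hl, hle⟩ := hg
  exact ⟨fun z => -l z, hl.neg, fun z hz => by rw [Complex.exp_neg, hle z hz]⟩

theorem of_slitPlane (hg : ContinuousOn g K) (hs : ∀ z ∈ K, g z ∈ Complex.slitPlane) :
    HasLogOn g K :=
  ⟨fun z => Complex.log (g z), hg.clog hs,
    fun z hz => Complex.exp_log (Complex.slitPlane_ne_zero (hs z hz))⟩

theorem const {c : ℂ} (hc : c ≠ 0) : HasLogOn (fun _ => c) K :=
  ⟨fun _ => Complex.log c, continuousOn_const, fun _ _ => Complex.exp_log hc⟩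

theorem of_close {c : ℂ} (hg : ContinuousOn g K) (hs : ∀ z ∈ K, ‖g z - c‖ < ‖c‖) :
    HasLogOn g K := by
  by_cases hc : c = 0
  · refine of_slitPlane hg fun z hz => ?_
    have := hs z hz
    rw [hc, norm_zero] at this
    exact absurd this (not_lt.2 (norm_nonneg _))
  · have h1 : HasLogOn (fun z => g z / c) K := by
      refine of_slitPlane (hg.div_const c) fun z hz => Complex.ball_one_subset_slitPlane ?_
      rw [mem_ball, dist_eq_norm, div_sub_one hc, norm_div, div_lt_one (norm_pos_iff.2 hc)]
      exact hs z hz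
    exact (h1.mul (const hc)).congr fun z _ => by field_simp

end HasLogOn

theorem isDiscrete_two_pi_I :
    IsDiscrete ((AddSubgroup.zmultiples (2 * Real.pi * Complex.I) : AddSubgroup ℂ) : Set ℂ) :=
  ⟨NormedSpace.discreteTopology_zmultiples _⟩

theorem mem_zmultiples_of_exp_eq_one {x : ℂ} (h : Complex.exp x = 1) :
    x ∈ ((AddSubgroup.zmultiples (2 * Real.pi * Complex.I) : AddSubgroup ℂ) : Set ℂ) := by
  obtain ⟨n, hn⟩ := Complex.exp_eq_one_iff.1 h
  exact AddSubgroup.mem_zmultiples_iff.2 ⟨n, by rw [hn]; simp⟩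

/-- A continuous function with `exp ∘ d = 1` is constant on preconnected sets. -/
theorem IsPreconnected.eq_of_exp_eq_one {X : Type*} [TopologicalSpace X] {S : Set X}
    (hS : IsPreconnected S) {d : X → ℂ} (hd : ContinuousOn d S)
    (h1 : ∀ x ∈ S, Complex.exp (d x) = 1) {a b : X} (ha : a ∈ S) (hb : b ∈ S) : d a = d b :=
  hS.constant_of_mapsTo isDiscrete_two_pi_I hd (fun x hx => mem_zmultiples_of_exp_eq_one (h1 x hx))
    ha hb

/-- Two logarithms of the same function differ by a constant on preconnected sets. -/
theorem IsPreconnected.sub_eq_sub_of_exp_eq {X : Type*} [TopologicalSpace X] {S : Set X}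
    (hS : IsPreconnected S) {l m : X → ℂ} (hl : ContinuousOn l S) (hm : ContinuousOn m S)
    (h1 : ∀ x ∈ S, Complex.exp (l x) = Complex.exp (m x)) {a b : X} (ha : a ∈ S) (hb : b ∈ S) :
    l a - m a = l b - m b :=
  hS.eq_of_exp_eq_one (d := fun x => l x - m x) (hl.sub hm)
    (fun x hx => by rw [Complex.exp_sub, h1 x hx, div_self (Complex.exp_ne_zero _)]) ha hb

theorem ContinuousOn.exists_glue {X Y : Set ℂ} (hX : IsClosed X) (hY : IsClosed Y)
    {l m : ℂ → ℂ} (hl : ContinuousOn l X) (hm : ContinuousOn m Y)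
    (h : ∀ z ∈ X ∩ Y, l z = m z) :
    ∃ k : ℂ → ℂ, ContinuousOn k (X ∪ Y) ∧ EqOn k l X ∧ EqOn k m Y := by
  classical
  have h1 : EqOn (X.piecewise l m) l X := fun z hz => by simp [hz]
  have h2 : EqOn (X.piecewise l m) m Y := fun z hz => by
    by_cases hx : z ∈ X
    · simp [hx, h z ⟨hx, hz⟩]
    · simp [hx]
  exact ⟨_, ContinuousOn.union_of_isClosed (hl.congr h1) (hm.congr h2) hX hY, h1, h2⟩

theorem HasLogOn.union {g : ℂ → ℂ} {X Y : Set ℂ} (hX : IsClosed X) (hY : IsClosed Y)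
    (hgX : HasLogOn g X) (hgY : HasLogOn g Y) (hc : IsPreconnected (X ∩ Y)) :
    HasLogOn g (X ∪ Y) := by
  obtain ⟨l, hl, hle⟩ := hgX
  obtain ⟨m, hm, hme⟩ := hgY
  obtain ⟨c, hc1, hcc⟩ : ∃ c : ℂ, Complex.exp c = 1 ∧ ∀ z ∈ X ∩ Y, l z = m z + c := by
    rcases (X ∩ Y).eq_empty_or_nonempty with he | ⟨a, ha⟩
    · exact ⟨0, by simp, by simp [he]⟩
    · have key : ∀ z ∈ X ∩ Y, Complex.exp (l z) = Complex.exp (m z) := fun z hz => by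
        rw [hle z hz.1, hme z hz.2]
      refine ⟨l a - m a, ?_, fun z hz => ?_⟩
      · rw [Complex.exp_sub, key a ha, div_self (Complex.exp_ne_zero _)]
      · have := hc.sub_eq_sub_of_exp_eq (hl.mono inter_subset_left) (hm.mono inter_subset_right)
          key hz ha
        linear_combination this
  obtain ⟨k, hk, hkl, hkm⟩ := ContinuousOn.exists_glue hX hY hl (hm.add continuousOn_const) hcc
  refine ⟨k, hk, ?_⟩
  rintro z (hz | hz)
  · rw [hkl hz, hle z hz]
  · rw [hkm hz]
    rw [Pi.add_apply, Complex.exp_add, hc1, mul_one, hme z hz]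

theorem AllLogs.union {X Y : Set ℂ} (hX : IsClosed X) (hY : IsClosed Y)
    (hgX : AllLogs X) (hgY : AllLogs Y) (hc : IsPreconnected (X ∩ Y)) : AllLogs (X ∪ Y) :=
  fun g hg h0 => HasLogOn.union hX hY
    (hgX g (hg.mono subset_union_left) fun z hz => h0 z (.inl hz))
    (hgY g (hg.mono subset_union_right) fun z hz => h0 z (.inr hz)) hc

theorem allLogs_univ : AllLogs univ := by
  intro g hg h0
  have hs : IsSimplyConnected (univ : Set ℂ) := by
    have : SimplyConnectedSpace (univ : Set ℂ) :=
      (Homeomorph.Set.univ ℂ).toHomotopyEquiv.simplyConnectedSpace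
    exact this
  obtain ⟨f, hf, hfe⟩ := Complex.exists_continuousOn_eqOn_exp_comp hs isOpen_univ hg
    (by rintro ⟨z, hz, h⟩; exact h0 z hz h)
  exact ⟨f, hf, hfe⟩

theorem exists_continuous_eqOn {K : Set ℂ} (hK : IsClosed K) {g : ℂ → ℂ} (hg : ContinuousOn g K) :
    ∃ G : ℂ → ℂ, Continuous G ∧ EqOn G g K := by
  obtain ⟨G, hG⟩ := ContinuousMap.exists_restrict_eq hK ⟨_, hg.domRestrict⟩
  refine ⟨G, G.continuous, fun z hz => ?_⟩
  simpa using DFunLike.congr_fun hG ⟨z, hz⟩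

/-- `z - p` has no logarithm on a circle around `p`. -/
theorem not_hasLogOn_sphere (p : ℂ) {R : ℝ} (hR : 0 < R) :
    ¬ HasLogOn (fun z => z - p) (sphere p R) := by
  rintro ⟨l, hl, hle⟩
  have hm : ∀ t : ℝ, circleMap p R t ∈ sphere p R := circleMap_mem_sphere p hR.le
  have h1 : Continuous fun t : ℝ => l (circleMap p R t) :=
    hl.comp_continuous (continuous_circleMap p R) hm
  have hR' : (R : ℂ) ≠ 0 := by exact_mod_cast hR.ne'
  have h := isPreconnected_univ.sub_eq_sub_of_exp_eq (S := (univ : Set ℝ))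
    (l := fun t : ℝ => l (circleMap p R t)) (m := fun t : ℝ => Complex.log R + t * Complex.I)
    h1.continuousOn (by fun_prop) (fun t _ => by
      rw [hle _ (hm t), Complex.exp_add, Complex.exp_log hR']
      simp [circleMap]) (mem_univ 0) (mem_univ (2 * Real.pi))
  have h2 : circleMap p R (2 * Real.pi) = circleMap p R 0 := by
    simpa using (periodic_circleMap p R) 0
  simp only [h2] at h
  have : (2 * Real.pi : ℂ) * Complex.I = 0 := by
    push_cast at h
    linear_combination h
  simp [Real.pi_ne_zero] at this

theorem isPreconnected_norm_gt {R : ℝ} (hR : 0 < R) : IsPreconnected {z : ℂ | R < ‖z‖} := by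
  have : {z : ℂ | R < ‖z‖} = Complex.exp '' {w : ℂ | Real.log R < w.re} := by
    ext z
    simp only [mem_ofPred_eq, mem_image]
    constructor
    · intro hz
      have hz0 : z ≠ 0 := norm_pos_iff.1 (hR.trans hz)
      exact ⟨Complex.log z, by rw [Complex.log_re]; exact Real.log_lt_log hR hz,
        Complex.exp_log hz0⟩
    · rintro ⟨w, hw, rfl⟩
      rw [Complex.norm_exp]
      exact (Real.log_lt_iff_lt_exp hR).1 hw
  rw [this]
  exact (convex_halfSpace_re_gt _).isPreconnected.image _ Complex.continuous_exp.continuousOn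

/-- `(z - p) / (z - q)` has a logarithm on `K` when `p`, `q` lie in a connected set off `K`. -/
theorem hasLogOn_of_isPreconnected {K C : Set ℂ} (hK : IsClosed K) (hC : IsPreconnected C)
    (hCK : Disjoint C K) {p q : ℂ} (hp : p ∈ C) (hq : q ∈ C) :
    HasLogOn (fun z => (z - p) / (z - q)) K := by
  have hne : ∀ x ∈ C, ∀ z ∈ K, z - x ≠ 0 := fun x hx z hz h =>
    disjoint_left.1 hCK hx (by rwa [← sub_eq_zero.1 h])
  refine hC.induction₂ (fun p q => HasLogOn (fun z => (z - p) / (z - q)) K) ?_ ?_ ?_ hp hq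
  · intro x hx
    have hxK : x ∈ Kᶜ := disjoint_left.1 hCK hx
    obtain ⟨ε, hε, hb⟩ := Metric.isOpen_iff.1 hK.isOpen_compl x hxK
    have : HasLogOn (fun _ => (1 : ℂ)) K := HasLogOn.const one_ne_zero
    filter_upwards [mem_nhdsWithin_of_mem_nhds (ball_mem_nhds x hε), self_mem_nhdsWithin]
      with y hy hyC
    have h1 : HasLogOn (fun z => (z - y) / (z - x)) K := by
      refine HasLogOn.of_close (c := 1) (ContinuousOn.div (by fun_prop) (by fun_prop) (hne x hx))
        fun z hz => ?_
      rw [div_sub_one (hne x hx z hz), norm_one, norm_div,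
        div_lt_one (norm_pos_iff.2 (hne x hx z hz))]
      have h2 : ε ≤ ‖z - x‖ := by
        by_contra! h
        exact hb (mem_ball_iff_norm.2 h) hz
      have h3 : z - y - (z - x) = -(y - x) := by ring
      rw [h3, norm_neg]
      exact (mem_ball_iff_norm.1 hy).trans_le h2
    exact h1.inv.congr fun z _ => by rw [inv_div]
  · intro x y w hx hy hw h1 h2
    exact (h1.mul h2).congr fun z hz => by
      have := hne y hy z hz
      have := hne w hw z hz
      field_simp
  · intro x y hx hy h
    exact h.inv.congr fun z _ => by rw [inv_div]

theorem frontier_connectedComponentIn_subset {K : Set ℂ} (hK : IsClosed K) (p : ℂ) :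
    frontier (connectedComponentIn Kᶜ p) ⊆ K := by
  intro z hz
  by_contra hzK
  have ho : IsOpen (connectedComponentIn Kᶜ p) := hK.isOpen_compl.connectedComponentIn
  have hoz : IsOpen (connectedComponentIn Kᶜ z) := hK.isOpen_compl.connectedComponentIn
  have hzm : z ∈ connectedComponentIn Kᶜ z := mem_connectedComponentIn hzK
  rw [ho.frontier_eq] at hz
  obtain ⟨w, hw1, hw2⟩ := mem_closure_iff.1 hz.1 _ hoz hzm
  have := (connectedComponentIn_eq hw1).trans (connectedComponentIn_eq hw2).symm
  exact hz.2 (this ▸ hzm)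

theorem mem_of_hasLogOn_of_isBounded {K : Set ℂ} (hK : IsClosed K) {p q : ℂ} (hp : p ∉ K)
    (h : HasLogOn (fun z => (z - p) / (z - q)) K)
    (hb : Bornology.IsBounded (connectedComponentIn Kᶜ p)) (hqK : q ∉ K) :
    q ∈ connectedComponentIn Kᶜ p := by
  classical
  by_contra hq
  obtain ⟨l, hl, hle⟩ := h
  obtain ⟨G, hG, hGe⟩ := exists_continuous_eqOn hK hl
  set U := connectedComponentIn Kᶜ p with hU
  have hpU : p ∈ U := mem_connectedComponentIn hp
  let H : ℂ → ℂ := fun z => if z ∈ U then (z - q) * Complex.exp (G z) else z - p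
  have hH : Continuous H := by
    refine Continuous.if ?_ (by fun_prop) (by fun_prop)
    intro a ha
    have haK : a ∈ K := frontier_connectedComponentIn_subset hK p ha
    have haq : a - q ≠ 0 := fun h => hqK (by rwa [← sub_eq_zero.1 h])
    rw [hGe haK, hle a haK]
    field_simp
  have hH0 : ∀ z ∈ univ, H z ≠ 0 := by
    intro z _
    by_cases hz : z ∈ U
    · simp only [H, hz, if_true]
      refine mul_ne_zero (fun h => hq ?_) (Complex.exp_ne_zero _)
      rwa [← sub_eq_zero.1 h]
    · simp only [H, hz, if_false]
      intro h
      exact hz (by rwa [sub_eq_zero.1 h])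
  obtain ⟨R, hR, hUR⟩ := hb.subset_ball_lt 0 p
  refine not_hasLogOn_sphere p hR
    (((allLogs_univ H hH.continuousOn hH0).mono (subset_univ _)).congr fun z hz => ?_)
  have : z ∉ U := fun hz' => by
    have h1 := hUR hz'
    rw [mem_ball] at h1
    rw [mem_sphere] at hz
    exact h1.ne hz
  simp [H, this]

/-- Eilenberg's criterion. -/
theorem mem_connectedComponentIn_of_hasLogOn {K : Set ℂ} (hK : IsCompact K) {p q : ℂ}
    (hp : p ∉ K) (hq : q ∉ K) (h : HasLogOn (fun z => (z - p) / (z - q)) K) :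
    q ∈ connectedComponentIn Kᶜ p := by
  by_cases hbp : Bornology.IsBounded (connectedComponentIn Kᶜ p)
  · exact mem_of_hasLogOn_of_isBounded hK.isClosed hp h hbp hq
  by_cases hbq : Bornology.IsBounded (connectedComponentIn Kᶜ q)
  · have := mem_of_hasLogOn_of_isBounded hK.isClosed hq
      (h.inv.congr fun z _ => by rw [inv_div]) hbq hp
    rw [← connectedComponentIn_eq this]
    exact mem_connectedComponentIn hq
  obtain ⟨R, hR, hKR⟩ := hK.isBounded.subset_ball_lt 0 0
  have hsub : {z : ℂ | R < ‖z‖} ⊆ Kᶜ := fun z hz hzK => by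
    have := hKR hzK
    rw [mem_ball_zero_iff] at this
    exact lt_asymm this hz
  have hex : ∀ S : Set ℂ, ¬ Bornology.IsBounded S → ∃ z ∈ S, R < ‖z‖ := by
    intro S hS
    by_contra! hc
    exact hS (isBounded_closedBall.subset fun z hz => mem_closedBall_zero_iff.2 (hc z hz))
  obtain ⟨a, ha, haR⟩ := hex _ hbp
  obtain ⟨b, hb, hbR⟩ := hex _ hbq
  have h1 := (isPreconnected_norm_gt hR).subset_connectedComponentIn haR hsub
  rw [connectedComponentIn_eq ha, connectedComponentIn_eq (h1 hbR), ← connectedComponentIn_eq hb]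
  exact mem_connectedComponentIn hq

theorem isPreconnected_compl_of_allLogs {K : Set ℂ} (hK : IsCompact K) (h : AllLogs K) :
    IsPreconnected Kᶜ := by
  rcases Kᶜ.eq_empty_or_nonempty with he | ⟨p, hp⟩
  · rw [he]; exact isPreconnected_empty
  have : Kᶜ = connectedComponentIn Kᶜ p := by
    refine Subset.antisymm (fun q hq => ?_) (connectedComponentIn_subset _ _)
    have h0 : ∀ x ∈ Kᶜ, ∀ z ∈ K, z - x ≠ 0 := fun x hx z hz h =>
      hx (by rwa [← sub_eq_zero.1 h])
    exact mem_connectedComponentIn_of_hasLogOn hK hp hq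
      (h _ (ContinuousOn.div (by fun_prop) (by fun_prop) (h0 q hq))
        fun z hz => div_ne_zero (h0 p hp z hz) (h0 q hq z hz))
  rw [this]
  exact isPreconnected_connectedComponentIn

/-- Janiszewski's theorem. -/
theorem janiszewski {X Y : Set ℂ} (hX : IsCompact X) (hY : IsCompact Y)
    (hXY : IsPreconnected (X ∩ Y)) {C D : Set ℂ} (hC : IsPreconnected C) (hD : IsPreconnected D)
    (hCX : Disjoint C X) (hDY : Disjoint D Y) {p q : ℂ} (hpC : p ∈ C) (hqC : q ∈ C)
    (hpD : p ∈ D) (hqD : q ∈ D) : q ∈ connectedComponentIn (X ∪ Y)ᶜ p := by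
  refine mem_connectedComponentIn_of_hasLogOn (hX.union hY) ?_ ?_
    (HasLogOn.union hX.isClosed hY.isClosed
      (hasLogOn_of_isPreconnected hX.isClosed hC hCX hpC hqC)
      (hasLogOn_of_isPreconnected hY.isClosed hD hDY hpD hqD) hXY)
  · rintro (h | h)
    exacts [disjoint_left.1 hCX hpC h, disjoint_left.1 hDY hpD h]
  · rintro (h | h)
    exacts [disjoint_left.1 hCX hqC h, disjoint_left.1 hDY hqD h]

theorem hasLogOn_sub_of_isPreconnected_compl {K : Set ℂ} (hK : IsCompact K)
    (hc : IsPreconnected Kᶜ) {q : ℂ} (hq : q ∉ K) : HasLogOn (fun z => z - q) K := by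
  obtain ⟨R, hR, hKR⟩ := hK.isBounded.subset_ball_lt 0 0
  have hRn : ‖(R : ℂ)‖ = R := by simp [abs_of_pos hR]
  have hRK : (R : ℂ) ∉ K := fun h => by
    have := hKR h
    rw [mem_ball_zero_iff, hRn] at this
    exact lt_irrefl _ this
  have h1 := hasLogOn_of_isPreconnected hK.isClosed hc disjoint_compl_left hq hRK
  have h2 : HasLogOn (fun z => z - (R : ℂ)) K := by
    refine HasLogOn.of_close (c := -(R : ℂ)) (by fun_prop) fun z hz => ?_
    have := hKR hz
    rw [mem_ball_zero_iff] at this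
    simpa [hRn, abs_of_pos hR] using this
  refine (h1.mul h2).congr fun z hz => ?_
  have : z - (R : ℂ) ≠ 0 := fun h => hRK (by rwa [← sub_eq_zero.1 h])
  field_simp

theorem HasLogOn.comp {g φ : ℂ → ℂ} {X Y : Set ℂ} (h : HasLogOn g Y) (hφ : ContinuousOn φ X)
    (hm : MapsTo φ X Y) : HasLogOn (fun z => g (φ z)) X := by
  obtain ⟨l, hl, hle⟩ := h
  exact ⟨fun z => l (φ z), hl.comp hφ hm, fun z hz => hle _ (hm hz)⟩

/-- Jumps along the line `re = c` which are differences of locally constant functions on the two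
sides of the line in `X`. -/
def IsSplitJump (X : Set ℂ) (c : ℝ) (d : ℝ → ℂ) : Prop :=
  ∃ a b : ℂ → ℂ, ContinuousOn a (X ∩ {z | z.re ≤ c}) ∧ ContinuousOn b (X ∩ {z | c ≤ z.re}) ∧
    (∀ z ∈ X ∩ {z | z.re ≤ c}, Complex.exp (a z) = 1) ∧
    (∀ z ∈ X ∩ {z | c ≤ z.re}, Complex.exp (b z) = 1) ∧
    ∀ z ∈ X, z.re = c → a z - b z = d z.im

namespace IsSplitJump

variable {X : Set ℂ} {c : ℝ} {d e : ℝ → ℂ}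

theorem congr (hd : IsSplitJump X c d) (h : ∀ z ∈ X, z.re = c → d z.im = e z.im) :
    IsSplitJump X c e := by
  obtain ⟨a, b, ha, hb, ha1, hb1, hab⟩ := hd
  exact ⟨a, b, ha, hb, ha1, hb1, fun z hz hc => (hab z hz hc).trans (h z hz hc)⟩

theorem add (hd : IsSplitJump X c d) (he : IsSplitJump X c e) :
    IsSplitJump X c (fun y => d y + e y) := by
  obtain ⟨a, b, ha, hb, ha1, hb1, hab⟩ := hd
  obtain ⟨a', b', ha', hb', ha1', hb1', hab'⟩ := he
  refine ⟨fun z => a z + a' z, fun z => b z + b' z, ha.add ha', hb.add hb', ?_, ?_, ?_⟩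
  · intro z hz; rw [Complex.exp_add, ha1 z hz, ha1' z hz, one_mul]
  · intro z hz; rw [Complex.exp_add, hb1 z hz, hb1' z hz, one_mul]
  · intro z hz hc; linear_combination hab z hz hc + hab' z hz hc

theorem int_mul (hd : IsSplitJump X c d) (n : ℤ) : IsSplitJump X c (fun y => n * d y) := by
  obtain ⟨a, b, ha, hb, ha1, hb1, hab⟩ := hd
  refine ⟨fun z => n * a z, fun z => n * b z, continuousOn_const.mul ha, continuousOn_const.mul hb,
    ?_, ?_, ?_⟩
  · intro z hz; rw [Complex.exp_int_mul, ha1 z hz, one_zpow]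
  · intro z hz; rw [Complex.exp_int_mul, hb1 z hz, one_zpow]
  · intro z hz hc; linear_combination (n : ℂ) * hab z hz hc

theorem const {v : ℂ} (hv : Complex.exp v = 1) : IsSplitJump X c (fun _ => v) :=
  ⟨fun _ => v, fun _ => 0, continuousOn_const, continuousOn_const, fun _ _ => hv,
    fun _ _ => Complex.exp_zero, fun _ _ _ => sub_zero v⟩

theorem log_neg_I_mul {y : ℝ} (hy : y ≠ 0) :
    Complex.log (-(y * Complex.I)) - Real.pi * Complex.I - Complex.log (y * Complex.I) =
      if 0 < y then -(2 * Real.pi * Complex.I) else 0 := by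
  split_ifs with h
  · have h1 : (y * Complex.I : ℂ) = (y : ℂ) * Complex.I := rfl
    have h2 : -(y * Complex.I : ℂ) = (y : ℂ) * -Complex.I := by ring
    rw [h2, Complex.log_ofReal_mul h (neg_ne_zero.2 Complex.I_ne_zero),
      Complex.log_ofReal_mul h Complex.I_ne_zero, Complex.log_I, Complex.log_neg_I]
    ring
  · have h' : 0 < -y := by
      rcases lt_or_gt_of_ne hy with h1 | h1
      · linarith
      · exact absurd h1 h
    have h1 : (y * Complex.I : ℂ) = ((-y : ℝ) : ℂ) * -Complex.I := by push_cast; ring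
    have h2 : -(y * Complex.I : ℂ) = ((-y : ℝ) : ℂ) * Complex.I := by push_cast; ring
    rw [h2, h1, Complex.log_ofReal_mul h' (neg_ne_zero.2 Complex.I_ne_zero),
      Complex.log_ofReal_mul h' Complex.I_ne_zero, Complex.log_I, Complex.log_neg_I]
    ring

theorem step {q : ℝ} (h : HasLogOn (fun z => z - (c + q * Complex.I)) X)
    (hq : (c + q * Complex.I : ℂ) ∉ X) :
    IsSplitJump X c (fun y => if q < y then -(2 * Real.pi * Complex.I) else 0) := by
  obtain ⟨m, hm, hme⟩ := h
  set p : ℂ := c + q * Complex.I with hp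
  have hpre : p.re = c := by simp [hp]
  have hpim : p.im = q := by simp [hp]
  have hL : ∀ z ∈ X ∩ {z | z.re ≤ c}, -(z - p) ∈ Complex.slitPlane := by
    rintro z ⟨hz, hzc : z.re ≤ c⟩
    rw [Complex.mem_slitPlane_iff]
    by_contra! h
    simp only [Complex.neg_re, Complex.sub_re, hpre, Complex.neg_im, Complex.sub_im, hpim] at h
    refine hq ?_
    have : z = p := Complex.ext (by rw [hpre]; linarith [h.1]) (by rw [hpim]; linarith [h.2])
    rwa [← this]
  have hR : ∀ z ∈ X ∩ {z | c ≤ z.re}, z - p ∈ Complex.slitPlane := by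
    rintro z ⟨hz, hzc : c ≤ z.re⟩
    rw [Complex.mem_slitPlane_iff]
    by_contra! h
    simp only [Complex.sub_re, hpre, Complex.sub_im, hpim] at h
    refine hq ?_
    have : z = p := Complex.ext (by rw [hpre]; linarith [h.1]) (by rw [hpim]; linarith [h.2])
    rwa [← this]
  refine ⟨fun z => Complex.log (-(z - p)) - Real.pi * Complex.I - m z,
    fun z => Complex.log (z - p) - m z, ?_, ?_, ?_, ?_, ?_⟩
  · exact ((ContinuousOn.clog (by fun_prop) hL).sub continuousOn_const).sub
      (hm.mono inter_subset_left)
  · exact (ContinuousOn.clog (by fun_prop) hR).sub (hm.mono inter_subset_left)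
  · intro z hz
    have h0 := Complex.slitPlane_ne_zero (hL z hz)
    rw [Complex.exp_sub, Complex.exp_sub, Complex.exp_log h0, Complex.exp_pi_mul_I, hme z hz.1]
    have : z - p ≠ 0 := neg_ne_zero.1 h0
    field_simp
  · intro z hz
    have h0 := Complex.slitPlane_ne_zero (hR z hz)
    rw [Complex.exp_sub, Complex.exp_log h0, hme z hz.1, div_self h0]
  · intro z hz hzc
    have hzp : z - p = (z.im - q : ℝ) * Complex.I := by
      apply Complex.ext <;> simp [hp, hzc]
    have hne : z.im - q ≠ 0 := fun h0 => hq (by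
      rw [h0] at hzp
      have : z = p := by simpa [sub_eq_zero] using hzp
      rwa [← this])
    have := log_neg_I_mul hne
    rw [← hzp] at this
    simp only [sub_pos] at this
    linear_combination this

/-- Every locally constant `2πi ℤ`-valued jump splits, provided the differences `z - p` have
logarithms for all missing points `p` of the line. -/
theorem of_modulus {δ : ℝ} (hδ : 0 < δ) (hXc : IsCompact X)
    (hstep : ∀ q : ℝ, (∃ z ∈ X, z.re = c ∧ z.im ≤ q) → (∃ z ∈ X, z.re = c ∧ q ≤ z.im) →
      (c + q * Complex.I : ℂ) ∉ X → HasLogOn (fun z => z - (c + q * Complex.I)) X)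
    (hd1 : ∀ z ∈ X, z.re = c → Complex.exp (d z.im) = 1)
    (hdm : ∀ z ∈ X, ∀ w ∈ X, z.re = c → w.re = c → |z.im - w.im| < δ → d z.im = d w.im) :
    IsSplitJump X c d := by
  obtain ⟨R, hR, hXR⟩ := hXc.isBounded.subset_ball_lt 0 0
  have key : ∀ n : ℕ, ∀ t : ℝ, R ≤ t + n * (δ / 2) → ∀ d : ℝ → ℂ,
      (∀ z ∈ X, z.re = c → Complex.exp (d z.im) = 1) →
      (∀ z ∈ X, ∀ w ∈ X, z.re = c → w.re = c → |z.im - w.im| < δ → d z.im = d w.im) →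
      (∀ z ∈ X, z.re = c → z.im ≤ t → d z.im = 0) → IsSplitJump X c d := by
    intro n
    induction n with
    | zero =>
      intro t ht d _ _ h0
      refine (const Complex.exp_zero).congr fun z hz hzc => (h0 z hz hzc ?_).symm
      have h1 := mem_ball_zero_iff.1 (hXR hz)
      have h2 := (le_abs_self _).trans (Complex.abs_im_le_norm z)
      simp at ht
      linarith
    | succ n ih =>
      intro t ht d hd1 hdm h0
      have ht' : R ≤ t + δ / 2 + n * (δ / 2) := by push_cast at ht; linarith
      by_cases hex : ∃ x ∈ X, x.re = c ∧ t < x.im ∧ x.im ≤ t + δ / 2 ∧ d x.im ≠ 0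
      swap
      · refine ih _ ht' d hd1 hdm fun z hz hzc hzt => ?_
        push Not at hex
        rcases le_or_gt z.im t with h | h
        · exact h0 z hz hzc h
        · exact hex z hz hzc h hzt
      obtain ⟨x, hx, hxc, hxt, hxt', hv⟩ := hex
      have hconst : ∀ z ∈ X, z.re = c → t < z.im → z.im < t + δ → d z.im = d x.im := by
        intro z hz hzc h1 h2
        exact hdm z hz x hx hzc hxc (abs_sub_lt_iff.2 ⟨by linarith, by linarith⟩)
      by_cases hem : ∃ s ∈ X, s.re = c ∧ s.im ≤ t
      swap
      · push Not at hem
        have h1 : IsSplitJump X c (fun y => d y + -d x.im) := by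
          refine ih _ ht' _ ?_ ?_ ?_
          · intro z hz hzc
            rw [Complex.exp_add, Complex.exp_neg, hd1 z hz hzc, hd1 x hx hxc]; simp
          · intro z hz w hw hzc hwc h
            rw [hdm z hz w hw hzc hwc h]
          · intro z hz hzc hzt
            rw [hconst z hz hzc (hem z hz hzc) (by linarith)]; ring
        exact (h1.add (const (hd1 x hx hxc))).congr fun z _ _ => by ring
      have htX : (c + t * Complex.I : ℂ) ∉ X := by
        intro htX
        have h1 : (c + t * Complex.I : ℂ).im = t := by simp
        have h2 := h0 _ htX (by simp) h1.le
        have h3 := hdm _ htX x hx (by simp) hxc (by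
          rw [h1]; exact abs_sub_lt_iff.2 ⟨by linarith, by linarith⟩)
        exact hv (h3.symm.trans h2)
      have hJ := step (hstep t hem ⟨x, hx, hxc, hxt.le⟩ htX) htX
      obtain ⟨n, hn⟩ := Complex.exp_eq_one_iff.1 (hd1 x hx hxc)
      have hJ' := hJ.int_mul n
      have h1 : IsSplitJump X c (fun y => d y +
          n * (if t < y then -(2 * Real.pi * Complex.I) else 0)) := by
        refine ih _ ht' _ ?_ ?_ ?_
        · intro z hz hzc
          rw [Complex.exp_add, hd1 z hz hzc, one_mul, Complex.exp_int_mul]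
          split_ifs
          · rw [Complex.exp_neg, Complex.exp_two_pi_mul_I, inv_one, one_zpow]
          · rw [Complex.exp_zero, one_zpow]
        · have aux : ∀ z ∈ X, ∀ w ∈ X, z.re = c → w.re = c → |z.im - w.im| < δ → z.im ≤ t →
              ¬ t < w.im := by
            intro z hz w hw hzc hwc h hzt hwt
            have h2 := (abs_sub_lt_iff.1 h).2
            rw [← hconst w hw hwc hwt (by linarith), ← hdm z hz w hw hzc hwc h,
              h0 z hz hzc hzt] at hv
            exact hv rfl
          intro z hz w hw hzc hwc h
          have h3 := aux z hz w hw hzc hwc h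
          have h4 := aux w hw z hz hwc hzc (by rwa [abs_sub_comm])
          rw [hdm z hz w hw hzc hwc h]
          by_cases h5 : t < z.im
          · have : t < w.im := by by_contra h6; exact h4 (not_lt.1 h6) h5
            rw [if_pos h5, if_pos this]
          · have : ¬ t < w.im := h3 (not_lt.1 h5)
            rw [if_neg h5, if_neg this]
        · intro z hz hzc hzt
          by_cases h5 : t < z.im
          · rw [if_pos h5, hconst z hz hzc h5 (by linarith), hn]; ring
          · rw [if_neg h5, h0 z hz hzc (not_lt.1 h5)]; ring
      exact (h1.add (hJ.int_mul (-n))).congr fun z _ _ => by push_cast; ring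
  obtain ⟨n, hn⟩ := exists_nat_ge ((2 * R) / (δ / 2))
  rw [div_le_iff₀ (by positivity)] at hn
  refine key n (-R) (by linarith) d hd1 hdm fun z hz _ hzt => ?_
  have h1 := mem_ball_zero_iff.1 (hXR hz)
  have h2 := (neg_abs_le _).trans' (neg_le_neg (Complex.abs_im_le_norm z))
  linarith

end IsSplitJump

theorem HasLogOn.glue_re {g : ℂ → ℂ} {K C : Set ℂ} (hK : IsCompact K) (hc : IsPreconnected Kᶜ)
    (hCc : IsClosed C) (hC : Convex ℝ C) (c : ℝ) (hl : HasLogOn g (K ∩ C ∩ {z | z.re ≤ c}))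
    (hr : HasLogOn g (K ∩ C ∩ {z | c ≤ z.re})) : HasLogOn g (K ∩ C) := by
  obtain ⟨l, hl, hle⟩ := hl
  obtain ⟨m, hm, hme⟩ := hr
  set X := K ∩ C with hX
  have hXc : IsCompact X := hK.inter_right hCc
  have hcl1 : IsClosed {z : ℂ | z.re ≤ c} := isClosed_le Complex.continuous_re continuous_const
  have hcl2 : IsClosed {z : ℂ | c ≤ z.re} := isClosed_le continuous_const Complex.continuous_re
  set T := X ∩ {z : ℂ | z.re ≤ c} ∩ {z : ℂ | c ≤ z.re} with hT
  have hTc : IsCompact T := (hXc.inter_right hcl1).inter_right hcl2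
  have hcont : ContinuousOn (fun z => l z - m z) T :=
    (hl.mono fun z hz => hz.1).sub (hm.mono fun z hz => ⟨hz.1.1, hz.2⟩)
  have huc := hTc.uniformContinuousOn_of_continuous hcont
  have h1T : ∀ z ∈ T, Complex.exp (l z - m z) = 1 := fun z hz => by
    rw [Complex.exp_sub, hle z hz.1, hme z ⟨hz.1.1, hz.2⟩, div_self]
    rw [← hle z hz.1]; exact Complex.exp_ne_zero _
  obtain ⟨δ, hδ, hmod⟩ := Metric.uniformContinuousOn_iff.1 huc 1 one_pos
  have hTm : ∀ z ∈ X, z.re = c → z ∈ T := fun z hz h => ⟨⟨hz, h.le⟩, h.ge⟩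
  have hco : ∀ z : ℂ, z.re = c → (c + z.im * Complex.I : ℂ) = z := fun z h => by
    apply Complex.ext <;> simp [h]
  have hsplit : IsSplitJump X c
      (fun y => l (c + y * Complex.I) - m (c + y * Complex.I)) := by
    refine IsSplitJump.of_modulus hδ hXc ?_ ?_ ?_
    · rintro q ⟨z, hz, hzc, hzq⟩ ⟨w, hw, hwc, hwq⟩ hq
      have hqC : (c + q * Complex.I : ℂ) ∈ C := by
        rcases hzq.eq_or_lt with h | h
        · have := hz.2; rwa [← hco z hzc, h] at this
        have hne : w.im - z.im ≠ 0 := by intro h'; linarith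
        have : (c + q * Complex.I : ℂ) =
            ((w.im - q) / (w.im - z.im) : ℝ) • z + ((q - z.im) / (w.im - z.im) : ℝ) • w := by
          apply Complex.ext
          · rw [Complex.add_re, Complex.add_re, Complex.smul_re, Complex.smul_re, hzc, hwc]
            simp; field_simp; ring
          · rw [Complex.add_im, Complex.add_im, Complex.smul_im, Complex.smul_im]
            simp; field_simp; ring
        rw [this]
        refine hC hz.2 hw.2 (div_nonneg ?_ ?_) (div_nonneg ?_ ?_) ?_
        iterate 4 linarith
        field_simp; ring
      exact (hasLogOn_sub_of_isPreconnected_compl hK hc fun h => hq ⟨h, hqC⟩).mono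
        inter_subset_left
    · intro z hz hzc
      rw [hco z hzc]
      exact h1T z (hTm z hz hzc)
    · intro z hz w hw hzc hwc h
      rw [hco z hzc, hco w hwc]
      have hd := hmod z (hTm z hz hzc) w (hTm w hw hwc) (by
        rw [Complex.dist_of_re_eq (hzc.trans hwc.symm), Real.dist_eq]; exact h)
      obtain ⟨a, ha⟩ := Complex.exp_eq_one_iff.1 (h1T z (hTm z hz hzc))
      obtain ⟨b, hb⟩ := Complex.exp_eq_one_iff.1 (h1T w (hTm w hw hwc))
      rw [ha, hb, dist_eq_norm, ← sub_mul, norm_mul] at hd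
      have hpi : (1 : ℝ) < ‖(2 * Real.pi * Complex.I : ℂ)‖ := by
        simp [abs_of_pos Real.pi_pos]; linarith [Real.pi_gt_three]
      rw [ha, hb]
      congr 1
      by_contra hab
      have hab' : a - b ≠ 0 := fun h => hab (by rw [sub_eq_zero.1 h])
      have : (1 : ℝ) ≤ ‖(a - b : ℂ)‖ := by
        have := Int.one_le_abs hab'
        rw [← Int.cast_sub, Complex.norm_intCast]
        exact_mod_cast this
      nlinarith
  obtain ⟨a, b, ha, hb, ha1, hb1, hab⟩ := hsplit
  obtain ⟨k, hk, hk1, hk2⟩ := ContinuousOn.exists_glue (hXc.inter_right hcl1).isClosed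
    (hXc.inter_right hcl2).isClosed (hl.sub ha) (hm.sub hb) (by
      rintro z ⟨⟨hz, h1⟩, -, h2⟩
      have h3 : z.re = c := le_antisymm h1 h2
      have := hab z hz h3
      simp only [hco z h3] at this
      simp only [Pi.sub_apply]
      linear_combination -this)
  have hun : X ∩ {z | z.re ≤ c} ∪ X ∩ {z | c ≤ z.re} = X := by
    rw [← inter_union_distrib_left, inter_eq_left]
    exact fun z _ => le_total z.re c
  rw [hun] at hk
  refine ⟨k, hk, fun z hz => ?_⟩
  rcases le_total z.re c with h | h
  · rw [hk1 ⟨hz, h⟩, Pi.sub_apply, Complex.exp_sub, hle z ⟨hz, h⟩, ha1 z ⟨hz, h⟩, div_one]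
  · rw [hk2 ⟨hz, h⟩, Pi.sub_apply, Complex.exp_sub, hme z ⟨hz, h⟩, hb1 z ⟨hz, h⟩, div_one]

theorem HasLogOn.glue_im {g : ℂ → ℂ} {K C : Set ℂ} (hK : IsCompact K) (hc : IsPreconnected Kᶜ)
    (hCc : IsClosed C) (hC : Convex ℝ C) (c : ℝ) (hl : HasLogOn g (K ∩ C ∩ {z | z.im ≤ c}))
    (hr : HasLogOn g (K ∩ C ∩ {z | c ≤ z.im})) : HasLogOn g (K ∩ C) := by
  let e : ℂ ≃ₜ ℂ := Homeomorph.mulLeft₀ Complex.I Complex.I_ne_zero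
  have he : ∀ z, e z = Complex.I * z := fun _ => rfl
  have heim : ∀ z, (e z).im = z.re := fun z => by simp [he]
  have hes : ∀ z, (e.symm z).re = z.im := fun z => by
    rw [← heim, e.apply_symm_apply]
  have key : HasLogOn (fun z => g (e z)) (e ⁻¹' K ∩ e ⁻¹' C) := by
    refine HasLogOn.glue_re (e.isCompact_preimage.2 hK) ?_ (hCc.preimage e.continuous)
      (hC.is_linear_preimage ⟨fun x y => mul_add _ _ _, fun r x => by simp [he]; ring⟩) c
      (hl.comp e.continuous.continuousOn fun z hz => ?_)
      (hr.comp e.continuous.continuousOn fun z hz => ?_)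
    · rw [← preimage_compl]
      exact e.isPreconnected_preimage.2 hc
    · exact ⟨hz.1, by rw [mem_ofPred_eq, heim]; exact hz.2⟩
    · exact ⟨hz.1, by rw [mem_ofPred_eq, heim]; exact hz.2⟩
  refine (key.comp e.symm.continuous.continuousOn (X := K ∩ C) fun z hz => ?_).congr fun z _ => ?_
  · simpa using hz
  · simp

theorem Real.interval_induction {P : ℝ → ℝ → Prop} {δ : ℝ} (hδ : 0 < δ)
    (hs : ∀ a b, b - a ≤ δ → P a b) (hg : ∀ a m b, P a m → P m b → P a b) (a b : ℝ) : P a b := by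
  have key : ∀ n : ℕ, ∀ a b, b - a ≤ n * δ → P a b := by
    intro n
    induction n with
    | zero => intro a b h; exact hs a b (by simp at h; linarith)
    | succ n ih =>
      intro a b h
      exact hg a (a + δ) b (hs _ _ (by simp)) (ih _ _ (by push_cast at h; linarith))
  obtain ⟨n, hn⟩ := exists_nat_ge ((b - a) / δ)
  exact key n a b ((div_le_iff₀ hδ).1 hn)

/-- **Borsuk's theorem**: continuous logarithms exist on compact sets with connected
complement. -/
theorem allLogs_of_isPreconnected_compl {K : Set ℂ} (hK : IsCompact K) (hc : IsPreconnected Kᶜ) :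
    AllLogs K := by
  intro g hg h0
  rcases K.eq_empty_or_nonempty with rfl | hne
  · exact ⟨fun _ => 0, continuousOn_empty _, fun _ h => h.elim⟩
  obtain ⟨x, hx, hmin⟩ := hK.exists_isMinOn hne hg.norm
  have hpos : 0 < ‖g x‖ := norm_pos_iff.2 (h0 x hx)
  obtain ⟨δ, hδ, hmod⟩ := Metric.uniformContinuousOn_iff.1
    (hK.uniformContinuousOn_of_continuous hg) _ hpos
  let C : ℝ → ℝ → ℝ → ℝ → Set ℂ := fun a b a' b' =>
    {z | a ≤ z.re} ∩ {z | z.re ≤ b} ∩ {z | a' ≤ z.im} ∩ {z | z.im ≤ b'}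
  have hCc : ∀ a b a' b', IsClosed (C a b a' b') := fun a b a' b' =>
    (((isClosed_le continuous_const Complex.continuous_re).inter
      (isClosed_le Complex.continuous_re continuous_const)).inter
      (isClosed_le continuous_const Complex.continuous_im)).inter
      (isClosed_le Complex.continuous_im continuous_const)
  have hCv : ∀ a b a' b', Convex ℝ (C a b a' b') := fun a b a' b' =>
    (((convex_halfSpace_re_ge a).inter (convex_halfSpace_re_le b)).inter
      (convex_halfSpace_im_ge a')).inter (convex_halfSpace_im_le b')
  have key : ∀ a b a' b', HasLogOn g (K ∩ C a b a' b') := by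
    intro a b
    refine Real.interval_induction (δ := δ / 3) (by positivity) (fun a' b' h' => ?_)
      fun a' m b' h1 h2 => ?_
    swap
    · by_cases h3 : a' ≤ m ∧ m ≤ b'
      · refine HasLogOn.glue_im hK hc (hCc _ _ _ _) (hCv _ _ _ _) m (h1.mono ?_) (h2.mono ?_)
        · rintro z ⟨⟨h, h4⟩, h5⟩; exact ⟨h, h4.1, h5⟩
        · rintro z ⟨⟨h, h4⟩, h5⟩; exact ⟨h, ⟨h4.1.1, h5⟩, h4.2⟩
      · rcases not_and_or.1 h3 with h3 | h3
        · refine h2.mono ?_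
          rintro z ⟨h, h4⟩; exact ⟨h, ⟨h4.1.1, (not_le.1 h3).le.trans h4.1.2⟩, h4.2⟩
        · refine h1.mono ?_
          rintro z ⟨h, h4⟩; exact ⟨h, h4.1, le_trans h4.2 (not_le.1 h3).le⟩
    revert a b
    refine Real.interval_induction (δ := δ / 3) (by positivity) (fun a b h => ?_)
      fun a m b h1 h2 => ?_
    swap
    · by_cases h3 : a ≤ m ∧ m ≤ b
      · refine HasLogOn.glue_re hK hc (hCc _ _ _ _) (hCv _ _ _ _) m (h1.mono ?_) (h2.mono ?_)
        · rintro z ⟨⟨h, h4⟩, h5⟩; exact ⟨h, ⟨⟨h4.1.1.1, h5⟩, h4.1.2⟩, h4.2⟩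
        · rintro z ⟨⟨h, h4⟩, h5⟩; exact ⟨h, ⟨⟨h5, h4.1.1.2⟩, h4.1.2⟩, h4.2⟩
      · rcases not_and_or.1 h3 with h3 | h3
        · refine h2.mono ?_
          rintro z ⟨h, h4⟩
          exact ⟨h, ⟨⟨(not_le.1 h3).le.trans h4.1.1.1, h4.1.1.2⟩, h4.1.2⟩, h4.2⟩
        · refine h1.mono ?_
          rintro z ⟨h, h4⟩
          exact ⟨h, ⟨⟨h4.1.1.1, le_trans h4.1.1.2 (not_le.1 h3).le⟩, h4.1.2⟩, h4.2⟩
    rcases (K ∩ C a b a' b').eq_empty_or_nonempty with he | ⟨w, hwK, hw⟩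
    · rw [he]
      exact ⟨fun _ => 0, continuousOn_empty _, fun _ h => h.elim⟩
    refine HasLogOn.of_close (c := g w) (hg.mono inter_subset_left) fun z hz => ?_
    rw [← dist_eq_norm]
    refine (hmod z hz.1 w hwK ?_).trans_le (hmin hwK)
    obtain ⟨-, ⟨⟨z1 : a ≤ z.re, z2 : z.re ≤ b⟩, z3 : a' ≤ z.im⟩, z4 : z.im ≤ b'⟩ := hz
    obtain ⟨⟨⟨w1 : a ≤ w.re, w2 : w.re ≤ b⟩, w3 : a' ≤ w.im⟩, w4 : w.im ≤ b'⟩ := hw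
    rw [dist_eq_norm]
    refine (Complex.norm_le_abs_re_add_abs_im _).trans_lt ?_
    have e1 : |(z - w).re| ≤ δ / 3 := by rw [Complex.sub_re, abs_le]; constructor <;> linarith
    have e2 : |(z - w).im| ≤ δ / 3 := by rw [Complex.sub_im, abs_le]; constructor <;> linarith
    linarith
  obtain ⟨R, hR, hKR⟩ := hK.isBounded.subset_ball_lt 0 0
  refine (key (-R) R (-R) R).mono fun z hz => ⟨hz, ?_⟩
  have h1 := mem_ball_zero_iff.1 (hKR hz)
  have h2 := abs_le.1 ((Complex.abs_re_le_norm z).trans h1.le)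
  have h3 := abs_le.1 ((Complex.abs_im_le_norm z).trans h1.le)
  exact ⟨⟨⟨h2.1, h2.2⟩, h3.1⟩, h3.2⟩

/-- Two continua meeting in exactly two points separate the plane. -/
theorem not_isPreconnected_compl_of_inter_eq_pair {X Y : Set ℂ} (hX : IsCompact X)
    (hY : IsCompact Y) (hXc : IsPreconnected X) (hYc : IsPreconnected Y) {u v : ℂ} (huv : u ≠ v)
    (h : X ∩ Y = {u, v}) : ¬ IsPreconnected (X ∪ Y)ᶜ := by
  intro hc
  have hu : u ∈ X ∩ Y := by rw [h]; simp
  have hv : v ∈ X ∩ Y := by rw [h]; simp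
  let φ : ℂ → ℂ := fun z => 2 * Real.pi * Complex.I * (‖z - u‖ / ‖v - u‖ : ℝ)
  have hφ : Continuous φ := by fun_prop
  have hφu : φ u = 0 := by simp [φ]
  have hφv : φ v = 2 * Real.pi * Complex.I := by
    have : ‖v - u‖ ≠ 0 := norm_ne_zero_iff.2 (sub_ne_zero.2 huv.symm)
    simp only [φ, div_self this]; simp
  obtain ⟨g, hg, hgX, hgY⟩ := ContinuousOn.exists_glue hX.isClosed hY.isClosed
    (l := fun z => Complex.exp (φ z)) (m := fun _ => 1)
    (Complex.continuous_exp.comp hφ).continuousOn continuousOn_const (by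
      rw [h]
      rintro z (rfl | rfl)
      · rw [hφu, Complex.exp_zero]
      · rw [hφv, Complex.exp_two_pi_mul_I])
  obtain ⟨l, hl, hle⟩ := allLogs_of_isPreconnected_compl (hX.union hY) hc g hg (by
    rintro z (hz | hz)
    · rw [hgX hz]; exact Complex.exp_ne_zero _
    · rw [hgY hz]; exact one_ne_zero)
  have h1 := hYc.eq_of_exp_eq_one (hl.mono subset_union_right)
    (fun z hz => (hle z (.inr hz)).trans (hgY hz)) hu.2 hv.2
  have h2 := hXc.sub_eq_sub_of_exp_eq (hl.mono subset_union_left) hφ.continuousOn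
    (fun z hz => (hle z (.inl hz)).trans (hgX hz)) hu.1 hv.1
  rw [h1, hφu, hφv] at h2
  exact Complex.two_pi_I_ne_zero (by linear_combination h2)

theorem IsCompact.exists_continuousOn_leftInverse {X Y : Type*} [TopologicalSpace X]
    [TopologicalSpace Y] [T2Space Y] [Nonempty X] {K : Set X} (hK : IsCompact K) {h : X → Y}
    (hc : ContinuousOn h K) (hi : InjOn h K) :
    ∃ k : Y → X, ContinuousOn k (h '' K) ∧ ∀ z ∈ K, k (h z) = z := by
  classical
  have hk : ∀ z ∈ K, Function.invFunOn h K (h z) = z := fun z hz => hi.leftInvOn_invFunOn hz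
  refine ⟨Function.invFunOn h K, continuousOn_iff_isClosed.2 fun t ht =>
    ⟨h '' (K ∩ t), ((hK.inter_right ht).image_of_continuousOn
      (hc.mono inter_subset_left)).isClosed, ?_⟩, hk⟩
  ext y
  constructor
  · rintro ⟨hy, z, hz, rfl⟩
    rw [mem_preimage, hk z hz] at hy
    exact ⟨⟨z, ⟨hz, hy⟩, rfl⟩, z, hz, rfl⟩
  · rintro ⟨⟨z, ⟨hz, hzt⟩, rfl⟩, -⟩
    exact ⟨by rwa [mem_preimage, hk z hz], z, hz, rfl⟩

theorem AllLogs.image {K : Set ℂ} (hK : IsCompact K) (hl : AllLogs K) {h : ℂ → ℂ}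
    (hc : ContinuousOn h K) (hi : InjOn h K) : AllLogs (h '' K) := by
  intro g hg h0
  obtain ⟨k, hk, hkh⟩ := hK.exists_continuousOn_leftInverse hc hi
  obtain ⟨l, hl, hle⟩ := hl (fun z => g (h z)) (hg.comp hc (mapsTo_image h K))
    fun z hz => h0 _ (mem_image_of_mem h hz)
  have hm : MapsTo k (h '' K) K := by rintro _ ⟨z, hz, rfl⟩; rwa [hkh z hz]
  refine ⟨fun z => l (k z), hl.comp hk hm, ?_⟩
  rintro _ ⟨z, hz, rfl⟩
  simp only [hkh z hz, hle z hz]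

theorem AllLogs.of_retraction {K : Set ℂ} {r : ℂ → ℂ} (hr : Continuous r) (hm : ∀ z, r z ∈ K)
    (he : ∀ z ∈ K, r z = z) : AllLogs K := by
  intro g hg h0
  obtain ⟨l, hl, hle⟩ := allLogs_univ (fun z => g (r z))
    (hg.comp_continuous hr hm).continuousOn fun z _ => h0 _ (hm z)
  exact ⟨l, hl.mono (subset_univ K), fun z hz => by simp only [hle z (mem_univ z), he z hz]⟩

theorem allLogs_closedBall : AllLogs (closedBall 0 1) := by
  refine AllLogs.of_retraction (r := fun z => ((max 1 ‖z‖)⁻¹ : ℝ) * z) ?_ ?_ ?_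
  · refine Continuous.mul (Complex.continuous_ofReal.comp (Continuous.inv₀ (by fun_prop) ?_))
      continuous_id
    intro z
    exact (zero_lt_one.trans_le (le_max_left _ _)).ne'
  · intro z
    have : 0 < max 1 ‖z‖ := zero_lt_one.trans_le (le_max_left _ _)
    rw [mem_closedBall_zero_iff, norm_mul, Complex.norm_real, Real.norm_eq_abs,
      abs_of_pos (inv_pos.2 this), inv_mul_le_one₀ this]
    exact le_max_right _ _
  · intro z hz
    rw [max_eq_left (mem_closedBall_zero_iff.1 hz)]
    simp

theorem allLogs_image_Icc {p q : ℝ} (hpq : p ≤ q) {γ : ℝ → ℂ} (hc : ContinuousOn γ (Icc p q))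
    (hi : InjOn γ (Icc p q)) : AllLogs (γ '' Icc p q) := by
  have h1 : AllLogs (Complex.ofReal '' Icc p q) := by
    refine AllLogs.of_retraction (r := fun z => ((projIcc p q hpq z.re : ℝ) : ℂ)) ?_ ?_ ?_
    · exact Complex.continuous_ofReal.comp
        (continuous_subtype_val.comp (continuous_projIcc.comp Complex.continuous_re))
    · exact fun z => ⟨_, (projIcc p q hpq z.re).2, rfl⟩
    · rintro _ ⟨t, ht, rfl⟩
      rw [Complex.ofReal_re, projIcc_of_mem hpq ht]
  have hm : MapsTo Complex.re (Complex.ofReal '' Icc p q) (Icc p q) := by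
    rintro _ ⟨t, ht, rfl⟩; simpa using ht
  have h2 := h1.image (isCompact_Icc.image Complex.continuous_ofReal) (h := fun z => γ z.re)
    (hc.comp Complex.continuous_re.continuousOn hm) (by
      rintro _ ⟨t, ht, rfl⟩ _ ⟨s, hs, rfl⟩ h
      rw [hi ht hs h])
  rwa [image_image] at h2

/-- The image of a circle under an embedding separates the plane. -/
theorem not_isPreconnected_compl_image_sphere {h : ℂ → ℂ} (hc : ContinuousOn h (sphere 0 1))
    (hi : InjOn h (sphere 0 1)) : ¬ IsPreconnected (h '' sphere 0 1)ᶜ := by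
  intro hp
  obtain ⟨k, hk, hkh⟩ := (isCompact_sphere (0 : ℂ) 1).exists_continuousOn_leftInverse hc hi
  obtain ⟨l, hl, hle⟩ := allLogs_of_isPreconnected_compl
    ((isCompact_sphere (0 : ℂ) 1).image_of_continuousOn hc) hp k hk (by
      rintro _ ⟨z, hz, rfl⟩
      rw [hkh z hz]
      exact ne_of_mem_sphere hz one_ne_zero)
  refine not_hasLogOn_sphere 0 one_pos ⟨fun z => l (h z), hl.comp hc (mapsTo_image _ _), ?_⟩
  intro z hz
  simp only [hle _ (mem_image_of_mem h hz), hkh z hz, sub_zero]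

/-- Invariance of domain for the disk. -/
theorem isOpen_image_ball {h : ℂ → ℂ} (hc : ContinuousOn h (closedBall 0 1))
    (hi : InjOn h (closedBall 0 1)) : IsOpen (h '' ball 0 1) := by
  have hD := isPreconnected_compl_of_allLogs
    ((isCompact_closedBall (0 : ℂ) 1).image_of_continuousOn hc)
    (allLogs_closedBall.image (isCompact_closedBall 0 1) hc hi)
  have hcs := hc.mono (sphere_subset_closedBall (x := (0 : ℂ)) (ε := 1))
  have hS := not_isPreconnected_compl_image_sphere hcs (hi.mono sphere_subset_closedBall)
  have hSc := ((isCompact_sphere (0 : ℂ) 1).image_of_continuousOn hcs).isClosed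
  have hO : IsPreconnected (h '' ball 0 1) :=
    (convex_ball (0 : ℂ) 1).isPreconnected.image h (hc.mono ball_subset_closedBall)
  have hdisj : Disjoint (h '' ball 0 1) (h '' sphere 0 1) :=
    sphere_disjoint_ball.symm.image hi ball_subset_closedBall sphere_subset_closedBall
  have hun : (h '' sphere 0 1)ᶜ = h '' ball 0 1 ∪ (h '' closedBall 0 1)ᶜ := by
    rw [← ball_union_sphere, image_union]
    ext z
    have : z ∈ h '' ball 0 1 → z ∉ h '' sphere 0 1 := fun hz => disjoint_left.1 hdisj hz
    simp only [mem_compl_iff, mem_union] at *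
    tauto
  rw [isOpen_iff_mem_nhds]
  intro x hx
  by_contra hn
  have hcl : x ∈ closure (h '' closedBall 0 1)ᶜ := by
    rw [mem_closure_iff_nhds]
    intro t ht
    have h1 : ¬ (t ∩ (h '' sphere 0 1)ᶜ) ⊆ h '' ball 0 1 := fun hs => hn (mem_of_superset
      (inter_mem ht (hSc.isOpen_compl.mem_nhds (disjoint_left.1 hdisj hx))) hs)
    obtain ⟨y, ⟨hy, hyS⟩, hyO⟩ := not_subset.1 h1
    rw [hun] at hyS
    exact ⟨y, hy, hyS.resolve_left hyO⟩
  apply hS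
  rw [hun]
  have h2 : IsPreconnected (insert x (h '' closedBall 0 1)ᶜ) :=
    hD.subset_closure (subset_insert _ _) (insert_subset hcl subset_closure)
  have := hO.union x hx (mem_insert _ _) h2
  rwa [union_insert, ← insert_union, insert_eq_of_mem hx] at this

/-- Near a point `x` of `A` such that `A` minus a small neighbourhood of `x` lies in a continuum
missing `x`, connected subsets of the complement of `A` are uniformly locally connected. -/
theorem exists_isPreconnected_subset_ball {A B W : Set ℂ} (hA : IsCompact A) (hB : IsCompact B)
    (hBA : B ⊆ A) (hBc : IsPreconnected B) (hW : IsPreconnected W) (hWA : Disjoint W A) {x : ℂ}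
    {ε δ : ℝ} (hxA : A ⊆ B ∪ ball x ε) (hδε : δ ≤ ε) (hxB : Disjoint (ball x δ) B) {p q : ℂ}
    (hp : p ∈ W) (hq : q ∈ W) (hpx : p ∈ ball x δ) (hqx : q ∈ ball x δ) :
    ∃ S, IsPreconnected S ∧ p ∈ S ∧ q ∈ S ∧ S ⊆ ball x ε ∧ Disjoint S A := by
  have hint : A ∩ (B ∪ sphere x ε) = B := by
    refine Subset.antisymm ?_ fun z hz => ⟨hBA hz, .inl hz⟩
    rintro z ⟨hzA, hz | hz⟩
    · exact hz
    · exact (hxA hzA).resolve_right fun h => disjoint_left.1 sphere_disjoint_ball hz h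
  have hsub : ball x δ ⊆ ball x ε := ball_subset_ball hδε
  have hj := janiszewski hA (hB.union (isCompact_sphere x ε)) (by rwa [hint]) hW
    (convex_ball x δ).isPreconnected hWA (disjoint_union_right.2 ⟨hxB,
      sphere_disjoint_ball.symm.mono_left hsub⟩) hp hq hpx hqx
  have hun : A ∪ (B ∪ sphere x ε) = A ∪ sphere x ε := by
    rw [← union_assoc, union_eq_left.2 hBA]
  rw [hun] at hj
  have hpA : p ∈ (A ∪ sphere x ε)ᶜ := by
    rintro (h | h)
    · exact disjoint_left.1 hWA hp h
    · exact disjoint_left.1 sphere_disjoint_ball h (hsub hpx)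
  have hss := connectedComponentIn_subset (A ∪ sphere x ε)ᶜ p
  refine ⟨connectedComponentIn (A ∪ sphere x ε)ᶜ p, isPreconnected_connectedComponentIn,
    mem_connectedComponentIn hpA, hj, ?_, ?_⟩
  · by_contra hn
    obtain ⟨y, hy, hyn⟩ := not_subset.1 hn
    have := isPreconnected_connectedComponentIn.intermediate_value (mem_connectedComponentIn hpA) hy
      (f := fun z => dist z x) (by fun_prop)
    obtain ⟨z, hz, hzε⟩ := this ⟨(hsub hpx).le, not_lt.1 hyn⟩
    exact hss hz (.inr hzε)
  · exact disjoint_left.2 fun z hz hzA => hss hz (.inl hzA)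

theorem exists_isCompact_isPreconnected_compl {U C : Set ℂ} (hU : IsOpen U)
    (hb : Bornology.IsBounded U) (hUc : IsPreconnected Uᶜ) (hC : IsCompact C) (hCU : C ⊆ U) :
    ∃ K, IsCompact K ∧ C ⊆ K ∧ K ⊆ U ∧ IsPreconnected Kᶜ := by
  obtain ⟨δ, hδ, hδU⟩ := hC.exists_thickening_subset_open hU hCU
  have hsub : (thickening δ Uᶜ)ᶜ ⊆ U := by
    intro z hz
    by_contra h
    exact hz (self_subset_thickening hδ _ h)
  refine ⟨(thickening δ Uᶜ)ᶜ, Metric.isCompact_of_isClosed_isBounded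
    isOpen_thickening.isClosed_compl (hb.subset hsub), ?_, hsub, ?_⟩
  · intro z hz hzt
    obtain ⟨w, hw, hzw⟩ := mem_thickening_iff.1 hzt
    exact hw (hδU (mem_thickening_iff.2 ⟨z, hz, by rwa [dist_comm]⟩))
  · rw [compl_compl]
    rcases Uᶜ.eq_empty_or_nonempty with he | ⟨x, hx⟩
    · rw [he, thickening_empty]; exact isPreconnected_empty
    refine isPreconnected_of_forall x fun y hy => ?_
    obtain ⟨w, hw, hyw⟩ := mem_thickening_iff.1 hy
    refine ⟨Uᶜ ∪ ball w δ, union_subset (self_subset_thickening hδ _)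
      (ball_subset_thickening hw δ), .inl hx, .inr hyw, ?_⟩
    exact hUc.union w hw (mem_ball_self hδ) (convex_ball w δ).isPreconnected

/-- Continuous logarithms exist on bounded domains with connected complement. -/
theorem allLogs_of_isOpen {U : Set ℂ} (hU : IsOpen U) (hUp : IsPreconnected U)
    (hb : Bornology.IsBounded U) (hUc : IsPreconnected Uᶜ) : AllLogs U := by
  intro g hg h0
  rcases U.eq_empty_or_nonempty with rfl | ⟨z0, hz0⟩
  · exact ⟨fun _ => 0, continuousOn_empty _, fun _ h => h.elim⟩
  set c0 := Complex.log (g z0)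
  have hlog : ∀ C, IsCompact C → C ⊆ U → z0 ∈ C → ∃ m : ℂ → ℂ, ContinuousOn m C ∧
      (∀ z ∈ C, Complex.exp (m z) = g z) ∧ m z0 = c0 := by
    intro C hC hCU hzC
    obtain ⟨K, hK, hCK, hKU, hKc⟩ := exists_isCompact_isPreconnected_compl hU hb hUc hC hCU
    obtain ⟨l, hl, hle⟩ := allLogs_of_isPreconnected_compl hK hKc g (hg.mono hKU)
      fun z hz => h0 z (hKU hz)
    refine ⟨fun z => l z - l z0 + c0, ((hl.mono hCK).sub continuousOn_const).add
      continuousOn_const, fun z hz => ?_, by ring⟩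
    rw [Complex.exp_add, Complex.exp_sub, hle z (hCK hz), hle z0 (hCK hzC),
      Complex.exp_log (h0 z0 hz0), div_mul_cancel₀ _ (h0 z0 hz0)]
  let Φ : ℂ → ℂ → Prop := fun z w => ∃ C, IsCompact C ∧ IsPreconnected C ∧ C ⊆ U ∧ z0 ∈ C ∧
    z ∈ C ∧ ∃ l : ℂ → ℂ, ContinuousOn l C ∧ (∀ x ∈ C, Complex.exp (l x) = g x) ∧ l z0 = c0 ∧
      l z = w
  have huniq : ∀ z w w', Φ z w → Φ z w' → w = w' := by
    rintro z w w' ⟨C, hC, hCp, hCU, h0C, hzC, l, hl, hle, hl0, rfl⟩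
      ⟨C', hC', hCp', hCU', h0C', hzC', l', hl', hle', hl0', rfl⟩
    obtain ⟨m, hm, hme, hm0⟩ := hlog (C ∪ C') (hC.union hC') (union_subset hCU hCU') (.inl h0C)
    have h1 := hCp.sub_eq_sub_of_exp_eq hl (hm.mono subset_union_left)
      (fun x hx => (hle x hx).trans (hme x (.inl hx)).symm) h0C hzC
    have h2 := hCp'.sub_eq_sub_of_exp_eq hl' (hm.mono subset_union_right)
      (fun x hx => (hle' x hx).trans (hme x (.inr hx)).symm) h0C' hzC'
    rw [hl0, hm0, sub_self] at h1
    rw [hl0', hm0, sub_self] at h2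
    linear_combination h2 - h1
  have hC : ∀ z ∈ U, ∃ C, IsCompact C ∧ IsPreconnected C ∧ C ⊆ U ∧ z0 ∈ C ∧ z ∈ C := by
    intro z hz
    have hpc : IsPathConnected U := hU.isConnected_iff_isPathConnected.1 ⟨⟨z0, hz0⟩, hUp⟩
    obtain ⟨γ, hγ⟩ := hpc.joinedIn z0 hz0 z hz
    exact ⟨range γ, isCompact_range γ.continuous, isPreconnected_range γ.continuous,
      range_subset_iff.2 hγ, ⟨0, γ.source⟩, ⟨1, γ.target⟩⟩
  have hex : ∀ z ∈ U, ∃ w, Φ z w := by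
    intro z hz
    obtain ⟨C, hC, hCp, hCU, h0C, hzC⟩ := hC z hz
    obtain ⟨m, hm, hme, hm0⟩ := hlog C hC hCU h0C
    exact ⟨m z, C, hC, hCp, hCU, h0C, hzC, m, hm, hme, hm0, rfl⟩
  choose! L hL using hex
  refine ⟨L, fun z hz => ?_, fun z hz => ?_⟩
  · obtain ⟨C, hC, hCp, hCU, h0C, hzC⟩ := hC z hz
    obtain ⟨ε, hε, hball⟩ := nhds_basis_closedBall.mem_iff.1 (hU.mem_nhds hz)
    have hsub : C ∪ closedBall z ε ⊆ U := union_subset hCU hball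
    obtain ⟨m, hm, hme, hm0⟩ := hlog (C ∪ closedBall z ε) (hC.union (isCompact_closedBall z ε))
      hsub (.inl h0C)
    have heq : ∀ x ∈ closedBall z ε, L x = m x := fun x hx =>
      huniq x _ _ (hL x (hball hx)) ⟨C ∪ closedBall z ε, hC.union (isCompact_closedBall z ε),
        hCp.union z hzC (mem_closedBall_self hε.le) (convex_closedBall z ε).isPreconnected,
        hsub, .inl h0C, .inr hx, m, hm, hme, hm0, rfl⟩
    have hn : closedBall z ε ∈ 𝓝 z := closedBall_mem_nhds z hε
    have h1 : ContinuousAt m z := (hm.mono subset_union_right).continuousAt hn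
    exact (h1.congr (mem_of_superset hn fun x hx => (heq x hx).symm)).continuousWithinAt
  · obtain ⟨C, hC, hCp, hCU, h0C, hzC, l, hl, hle, hl0, hlz⟩ := hL z hz
    rw [← hlz, hle z hzC]

/-- A continuous logarithm of a differentiable function is differentiable. -/
theorem HasDerivAt.of_exp_comp {l g : ℂ → ℂ} {g' z : ℂ} (hl : ContinuousAt l z)
    (he : ∀ᶠ x in 𝓝 z, Complex.exp (l x) = g x) (hg : HasDerivAt g g' z) :
    HasDerivAt l (g' / g z) z := by
  have hz : Complex.exp (l z) = g z := he.self_of_nhds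
  have h0 : g z ≠ 0 := hz ▸ Complex.exp_ne_zero _
  have h1 : HasDerivAt (fun x => Complex.log (g x / g z)) (g' / g z) z := by
    have := (hg.div_const (g z)).clog (by rw [div_self h0]; exact Complex.one_mem_slitPlane)
    rwa [div_self h0, div_one] at this
  refine (h1.add_const (l z)).congr_of_eventuallyEq ?_
  have h2 : Tendsto (fun x => (l x - l z).im) (𝓝 z) (𝓝 0) := by
    have : ContinuousAt (fun x => (l x - l z).im) z :=
      Complex.continuous_im.continuousAt.comp (hl.sub continuousAt_const)
    simpa [ContinuousAt] using this
  filter_upwards [he, h2.eventually (Ioo_mem_nhds (neg_lt_zero.2 Real.pi_pos) Real.pi_pos)]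
    with x hx hx2
  rw [← hx, ← hz, ← Complex.exp_sub, Complex.log_exp hx2.1 hx2.2.le, sub_add_cancel]

/-- **Hurwitz's theorem**, local form. -/
theorem TendstoLocallyUniformlyOn.eventually_eq_zero {ι : Type*} {φ : Filter ι} [φ.NeBot]
    {G : ι → ℂ → ℂ} {g : ℂ → ℂ} {U : Set ℂ} (hU : IsOpen U)
    (h : TendstoLocallyUniformlyOn G g φ U) (hd : ∀ᶠ n in φ, DifferentiableOn ℂ (G n) U)
    (h0 : ∀ᶠ n in φ, ∀ z ∈ U, G n z ≠ 0) {z : ℂ} (hz : z ∈ U) (hgz : g z = 0) :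
    ∀ᶠ x in 𝓝 z, g x = 0 := by
  have hg : DifferentiableOn ℂ g U := h.differentiableOn hd hU
  refine ((hg.analyticAt (hU.mem_nhds hz)).eventually_eq_zero_or_eventually_ne_zero).resolve_right
    fun hne => ?_
  rw [eventually_nhdsWithin_iff] at hne
  obtain ⟨r, hr, hball⟩ := nhds_basis_closedBall.mem_iff.1 (inter_mem (hU.mem_nhds hz) hne)
  have hrU : closedBall z r ⊆ U := fun x hx => (hball hx).1
  have hsU : sphere z r ⊆ U := sphere_subset_closedBall.trans hrU
  obtain ⟨w, hw, hmin⟩ := (isCompact_sphere z r).exists_isMinOn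
    (NormedSpace.sphere_nonempty.2 hr.le) (hg.continuousOn.mono hsU).norm
  have hpos : 0 < ‖g w‖ :=
    norm_pos_iff.2 ((hball (sphere_subset_closedBall hw)).2 (ne_of_mem_sphere hw hr.ne'))
  have hu := (tendstoLocallyUniformlyOn_iff_tendstoUniformlyOn_of_compact
    (isCompact_closedBall z r)).1 (h.mono hrU)
  obtain ⟨n, hn, hdn, h0n⟩ := ((Metric.tendstoUniformlyOn_iff.1 hu _ (half_pos hpos)).and
    (hd.and h0)).exists
  have hcl : closure (ball z r) = closedBall z r := closure_ball z hr.ne'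
  have hinv : DiffContOnCl ℂ (fun x => (G n x)⁻¹) (ball z r) := by
    refine DiffContOnCl.inv ?_ fun x hx => h0n x (hrU (hcl ▸ hx))
    exact (hdn.mono (hcl ▸ hrU)).diffContOnCl
  have hb := Complex.norm_le_of_forall_mem_frontier_norm_le isBounded_ball hinv
    (C := (‖g w‖ / 2)⁻¹) (fun x hx => by
      rw [frontier_ball z hr.ne'] at hx
      have h1 := hn x (sphere_subset_closedBall hx)
      have h2 : ‖g w‖ ≤ ‖g x‖ := hmin hx
      rw [dist_eq_norm] at h1
      have h3 := norm_sub_norm_le (g x) (G n x)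
      rw [norm_inv]
      exact inv_anti₀ (half_pos hpos) (by linarith)) (z := z) (by
      rw [hcl]; exact mem_closedBall_self hr.le)
  have h1 := hn z (mem_closedBall_self hr.le)
  rw [hgz, dist_zero_left] at h1
  rw [norm_inv] at hb
  exact absurd (inv_strictAnti₀ (norm_pos_iff.2 (h0n z hz)) h1) (not_lt.2 hb)

/-- **Montel's theorem**: a sequence of holomorphic maps to the disk converges locally uniformly
along any ultrafilter. -/
theorem exists_tendstoLocallyUniformlyOn {U : Set ℂ} (hU : IsOpen U) {f : ℕ → ℂ → ℂ}
    (hf : ∀ n, DifferentiableOn ℂ (f n) U) (hm : ∀ n, MapsTo (f n) U (ball 0 1))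
    (φ : Ultrafilter ℕ) : ∃ F : ℂ → ℂ, TendstoLocallyUniformlyOn f F φ U := by
  have hex : ∀ z ∈ U, ∃ w, Tendsto (fun n => f n z) φ (𝓝 w) := by
    intro z hz
    obtain ⟨w, -, hw⟩ := (isCompact_closedBall (0 : ℂ) 1).ultrafilter_le_nhds
      (φ.map fun n => f n z) (by
        rw [le_principal_iff]
        exact Eventually.of_forall (f := (φ : Filter ℕ))
          fun n => ball_subset_closedBall (hm n hz))
    exact ⟨w, hw⟩
  choose! F hF using hex
  refine ⟨F, Metric.tendstoLocallyUniformlyOn_iff.2 fun ε hε x hx => ?_⟩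
  obtain ⟨R, hR, hRU⟩ := Metric.isOpen_iff.1 hU x hx
  have hlip : ∀ n, ∀ y ∈ ball x R, dist (f n y) (f n x) ≤ 2 / R * dist y x := by
    intro n y hy
    refine Complex.dist_le_div_mul_dist_of_mapsTo_ball ((hf n).mono hRU) (fun w hw => ?_) hy
    have h1 := mem_ball_zero_iff.1 (hm n (hRU hw))
    have h2 := mem_ball_zero_iff.1 (hm n hx)
    rw [mem_closedBall, dist_eq_norm]
    exact (norm_sub_le _ _).trans (by linarith)
  have hpos : 0 < min R (ε * R / 8) := lt_min hR (by positivity)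
  refine ⟨ball x (min R (ε * R / 8)), mem_nhdsWithin_of_mem_nhds (ball_mem_nhds x hpos), ?_⟩
  filter_upwards [Metric.tendsto_nhds.1 (hF x hx) (ε / 4) (by positivity)] with n hn y hy
  have hyR : y ∈ ball x R := ball_subset_ball (min_le_left _ _) hy
  have hd : 2 / R * dist y x ≤ ε / 4 := by
    have : dist y x ≤ ε * R / 8 := (mem_ball.1 hy).le.trans (min_le_right _ _)
    calc 2 / R * dist y x ≤ 2 / R * (ε * R / 8) := by gcongr
      _ = ε / 4 := by field_simp; norm_num
  have hlim : dist (F y) (F x) ≤ ε / 4 :=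
    le_of_tendsto ((hF y (hRU hyR)).dist (hF x hx))
      (Eventually.of_forall fun m => (hlip m y hyR).trans hd)
  have h3 := (hlip n y hyR).trans hd
  have h4 := dist_triangle4 (F y) (F x) (f n x) (f n y)
  rw [dist_comm (F x)] at h4
  rw [dist_comm (f n x) (f n y)] at h4
  linarith

/-- The disk automorphism exchanging `a` and `0`, up to sign. -/
noncomputable def diskShift (a z : ℂ) : ℂ := (z - a) / (1 - starRingEnd ℂ a * z)

theorem diskShift_denom_ne_zero {a z : ℂ} (ha : ‖a‖ < 1) (hz : ‖z‖ < 1) :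
    1 - starRingEnd ℂ a * z ≠ 0 := by
  intro h
  have h1 : ‖starRingEnd ℂ a * z‖ = 1 := by rw [← sub_eq_zero.1 h, norm_one]
  rw [norm_mul, Complex.norm_conj] at h1
  nlinarith [norm_nonneg a, norm_nonneg z]

theorem norm_diskShift_lt_one {a z : ℂ} (ha : ‖a‖ < 1) (hz : ‖z‖ < 1) : ‖diskShift a z‖ < 1 := by
  have h0 := diskShift_denom_ne_zero ha hz
  rw [diskShift, norm_div, div_lt_one (norm_pos_iff.2 h0), ← sq_lt_sq₀ (norm_nonneg _)
    (norm_nonneg _), ← Complex.normSq_eq_norm_sq, ← Complex.normSq_eq_norm_sq]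
  have h1 : Complex.normSq a < 1 := by
    rw [Complex.normSq_eq_norm_sq]; nlinarith [norm_nonneg a]
  have h2 : Complex.normSq z < 1 := by
    rw [Complex.normSq_eq_norm_sq]; nlinarith [norm_nonneg z]
  rw [Complex.normSq_apply] at *
  simp only [Complex.normSq_apply, Complex.sub_re, Complex.sub_im, Complex.mul_re, Complex.mul_im,
    Complex.one_re, Complex.one_im, Complex.conj_re, Complex.conj_im] at *
  nlinarith

theorem hasDerivAt_diskShift {a z : ℂ} (ha : ‖a‖ < 1) (hz : ‖z‖ < 1) :
    HasDerivAt (diskShift a) ((1 - starRingEnd ℂ a * a) / (1 - starRingEnd ℂ a * z) ^ 2) z := by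
  have h0 := diskShift_denom_ne_zero ha hz
  have := ((hasDerivAt_id z).sub_const a).div
    (((hasDerivAt_id z).const_mul (starRingEnd ℂ a)).const_sub 1) h0
  refine this.congr_deriv ?_
  simp only [id]
  congr 1
  ring

theorem diskShift_injOn {a : ℂ} (ha : ‖a‖ < 1) : InjOn (diskShift a) (ball 0 1) := by
  intro z hz w hw h
  rw [mem_ball_zero_iff] at hz hw
  have h1 := diskShift_denom_ne_zero ha ha
  rw [diskShift, diskShift, div_eq_div_iff (diskShift_denom_ne_zero ha hz)
    (diskShift_denom_ne_zero ha hw)] at h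
  refine mul_right_cancel₀ h1 ?_
  linear_combination h

/-- Univalent holomorphic maps from `U` into the unit disk sending `z0` to `0`. -/
def IsDiskChart (U : Set ℂ) (z0 : ℂ) (f : ℂ → ℂ) : Prop :=
  DifferentiableOn ℂ f U ∧ MapsTo f U (ball 0 1) ∧ InjOn f U ∧ (∀ z ∈ U, deriv f z ≠ 0) ∧ f z0 = 0

theorem IsDiskChart.exists_norm_deriv_lt {U : Set ℂ} (hU : IsOpen U) (hl : AllLogs U) {z0 : ℂ}
    (hz0 : z0 ∈ U) {F : ℂ → ℂ} (hF : IsDiskChart U z0 F) {w : ℂ} (hw : ‖w‖ < 1)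
    (hwF : w ∉ F '' U) : ∃ G, IsDiskChart U z0 G ∧ ‖deriv F z0‖ < ‖deriv G z0‖ := by
  obtain ⟨hd, hm, hi, hne, hF0⟩ := hF
  have hFn : ∀ z ∈ U, ‖F z‖ < 1 := fun z hz => mem_ball_zero_iff.1 (hm hz)
  have hFd : ∀ z ∈ U, HasDerivAt F (deriv F z) z := fun z hz =>
    (hd.differentiableAt (hU.mem_nhds hz)).hasDerivAt
  have hgd : ∀ z ∈ U, HasDerivAt (fun z => diskShift w (F z))
      ((1 - starRingEnd ℂ w * w) / (1 - starRingEnd ℂ w * F z) ^ 2 * deriv F z) z := fun z hz =>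
    (hasDerivAt_diskShift hw (hFn z hz)).comp z (hFd z hz)
  have hg0 : ∀ z ∈ U, diskShift w (F z) ≠ 0 := fun z hz =>
    div_ne_zero (sub_ne_zero.2 fun h => hwF ⟨z, hz, h⟩) (diskShift_denom_ne_zero hw (hFn z hz))
  obtain ⟨l, hlc, hle⟩ := hl (fun z => diskShift w (F z))
    (fun z hz => (hgd z hz).continuousAt.continuousWithinAt) hg0
  have hld : ∀ z ∈ U, HasDerivAt l _ z := fun z hz =>
    HasDerivAt.of_exp_comp (hlc.continuousAt (hU.mem_nhds hz))
      (by filter_upwards [hU.mem_nhds hz] with x hx using hle x hx) (hgd z hz)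
  set h : ℂ → ℂ := fun z => Complex.exp (l z / 2) with hh
  have hsq : ∀ z ∈ U, h z ^ 2 = diskShift w (F z) := fun z hz => by
    refine Eq.trans ?_ (hle z hz)
    rw [hh, ← Complex.exp_nat_mul]; congr 1; push_cast; ring
  have hn : ∀ z ∈ U, ‖h z‖ < 1 := fun z hz => by
    have : ‖h z‖ ^ 2 < 1 := by
      rw [← norm_pow, hsq z hz]; exact norm_diskShift_lt_one hw (hFn z hz)
    nlinarith [norm_nonneg (h z)]
  have hhd := fun z hz => ((hld z hz).div_const 2).cexp
  set v := h z0 with hv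
  have hv1 : ‖v‖ < 1 := hn z0 hz0
  have hv0 : v ≠ 0 := Complex.exp_ne_zero _
  have hGd : ∀ z (hz : z ∈ U), HasDerivAt (fun z => diskShift v (h z)) _ z := fun z hz =>
    (hasDerivAt_diskShift hv1 (hn z hz)).comp z (hhd z hz)
  refine ⟨fun z => diskShift v (h z), ⟨fun z hz =>
    (hGd z hz).differentiableAt.differentiableWithinAt, fun z hz => mem_ball_zero_iff.2
    (norm_diskShift_lt_one hv1 (hn z hz)), ?_, ?_, ?_⟩, ?_⟩
  · intro x hx y hy hxy
    have h1 := diskShift_injOn hv1 (mem_ball_zero_iff.2 (hn x hx))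
      (mem_ball_zero_iff.2 (hn y hy)) hxy
    have h2 : diskShift w (F x) = diskShift w (F y) := by rw [← hsq x hx, h1, hsq y hy]
    exact hi hx hy (diskShift_injOn hw (hm hx) (hm hy) h2)
  · intro z hz
    rw [(hGd z hz).deriv]
    refine mul_ne_zero (div_ne_zero (diskShift_denom_ne_zero hv1 hv1)
      (pow_ne_zero 2 (diskShift_denom_ne_zero hv1 (hn z hz)))) (mul_ne_zero (Complex.exp_ne_zero _)
      (div_ne_zero (div_ne_zero (mul_ne_zero (div_ne_zero (diskShift_denom_ne_zero hw hw)
      (pow_ne_zero 2 (diskShift_denom_ne_zero hw (hFn z hz)))) (hne z hz)) (hg0 z hz)) two_ne_zero))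
  · simp [diskShift, hv]
  · have hw2 : v ^ 2 = -w := by rw [hv, hsq z0 hz0, hF0]; simp [diskShift]
    have hvc := diskShift_denom_ne_zero hv1 hv1
    have key : deriv (fun z => diskShift v (h z)) z0 =
        (1 + starRingEnd ℂ v * v) / (2 * v) * deriv F z0 := by
      rw [(hGd z0 hz0).deriv, ← hsq z0 hz0, hF0]
      change _ / _ * (v * _) = _
      rw [← hv]
      have hw3 : w = - v ^ 2 := by rw [hw2, neg_neg]
      rw [hw3]
      simp only [map_neg, map_pow]
      field_simp
      ring
    rw [key, norm_mul, norm_div, norm_mul]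
    have h1 : 1 + starRingEnd ℂ v * v = ((1 + ‖v‖ ^ 2 : ℝ) : ℂ) := by
      rw [Complex.conj_mul']; push_cast; ring
    have hvp := norm_pos_iff.2 hv0
    rw [h1, Complex.norm_real, Real.norm_of_nonneg (by positivity), Complex.norm_ofNat]
    have h2 : 1 < (1 + ‖v‖ ^ 2) / (2 * ‖v‖) := by
      rw [one_lt_div (by positivity)]
      nlinarith [sq_pos_of_pos (sub_pos.2 hv1)]
    exact lt_mul_of_one_lt_left (norm_pos_iff.2 (hne z0 hz0)) h2

theorem IsDiskChart.of_tendsto {ι : Type*} {φ : Filter ι} [φ.NeBot] {U : Set ℂ} (hU : IsOpen U)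
    (hUp : IsPreconnected U) {z0 : ℂ} (hz0 : z0 ∈ U) {f : ι → ℂ → ℂ} {F : ℂ → ℂ}
    (hf : ∀ n, IsDiskChart U z0 (f n)) (h : TendstoLocallyUniformlyOn f F φ U)
    (hF' : deriv F z0 ≠ 0) : IsDiskChart U z0 F := by
  have hfd : ∀ᶠ n in φ, DifferentiableOn ℂ (f n) U := Eventually.of_forall fun n => (hf n).1
  have hd : DifferentiableOn ℂ F U := h.differentiableOn hfd hU
  have ha : AnalyticOnNhd ℂ F U := hd.analyticOnNhd hU
  have hnc : ∀ z ∈ U, ∀ c, ¬ ∀ᶠ x in 𝓝 z, F x = c := by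
    intro z hz c hc
    have h1 := ha.eqOn_of_preconnected_of_eventuallyEq (g := fun _ => c)
      (fun _ _ => analyticAt_const) hUp hz hc
    refine hF' ?_
    have : F =ᶠ[𝓝 z0] fun _ => c := by filter_upwards [hU.mem_nhds hz0] with x hx using h1 hx
    rw [this.deriv_eq, deriv_const]
  have h0 : F z0 = 0 := by
    refine tendsto_nhds_unique (h.tendsto_at hz0) ?_
    simp only [fun n => (hf n).2.2.2.2]
    exact tendsto_const_nhds
  have hle : ∀ z ∈ U, ‖F z‖ ≤ 1 := fun z hz => le_of_tendsto (h.tendsto_at hz).norm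
    (Eventually.of_forall fun n => (mem_ball_zero_iff.1 ((hf n).2.1 hz)).le)
  refine ⟨hd, fun z hz => ?_, ?_, ?_, h0⟩
  · rw [mem_ball_zero_iff]
    refine lt_of_le_of_ne (hle z hz) fun h1 => ?_
    have := Complex.eqOn_of_isPreconnected_of_isMaxOn_norm hUp hU hd hz
      (fun x hx => by simp [h1, hle x hx])
    exact hnc z hz (F z) (by filter_upwards [hU.mem_nhds hz] with x hx using this hx)
  · intro z1 hz1 z2 hz2 h12
    by_contra hne
    have hV : IsOpen (U \ {z2}) := hU.sdiff isClosed_singleton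
    have hsub : TendstoLocallyUniformlyOn (fun n z => f n z - f n z2) (fun z => F z - F z2) φ
        (U \ {z2}) := by
      have hc : TendstoLocallyUniformlyOn (fun n (_ : ℂ) => f n z2) (fun _ => F z2) φ
          (U \ {z2}) :=
        ((h.tendsto_at hz2).tendstoUniformlyOn_const _).tendstoLocallyUniformlyOn
      exact (h.mono sdiff_subset).fun_sub hc
    have := TendstoLocallyUniformlyOn.eventually_eq_zero hV hsub
      (Eventually.of_forall fun n => ((hf n).1.mono sdiff_subset).sub_const _)
      (Eventually.of_forall fun n z hz h =>
        hz.2 ((hf n).2.2.1 hz.1 hz2 (sub_eq_zero.1 h)))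
      (show z1 ∈ U \ {z2} from ⟨hz1, hne⟩) (sub_eq_zero.2 h12)
    exact hnc z1 hz1 (F z2) (this.mono fun x hx => sub_eq_zero.1 hx)
  · intro z hz hz'
    have h1 := TendstoLocallyUniformlyOn.eventually_eq_zero hU (h.deriv hfd hU)
      (hfd.mono fun n hn => hn.deriv hU)
      (Eventually.of_forall fun n z hz => (hf n).2.2.2.1 z hz) hz hz'
    have h2 := (hd.deriv hU).analyticOnNhd hU |>.eqOn_of_preconnected_of_eventuallyEq
      (g := fun _ => 0) (fun _ _ => analyticAt_const) hUp hz h1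
    exact hF' (h2 hz0)

theorem exists_surjective_isDiskChart {U : Set ℂ} (hU : IsOpen U) (hUp : IsPreconnected U)
    (hb : Bornology.IsBounded U) (hl : AllLogs U) {z0 : ℂ} (hz0 : z0 ∈ U) :
    ∃ F, IsDiskChart U z0 F ∧ F '' U = ball 0 1 := by
  obtain ⟨R, hR, hUR⟩ := hb.subset_ball_lt 0 z0
  obtain ⟨r, hr, hrU⟩ := Metric.isOpen_iff.1 hU z0 hz0
  set S : Set ℝ := (fun f : ℂ → ℂ => ‖deriv f z0‖) '' {f | IsDiskChart U z0 f}
  have hchart : IsDiskChart U z0 (fun z => (z - z0) / R) := by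
    have hR' : (R : ℂ) ≠ 0 := Complex.ofReal_ne_zero.2 hR.ne'
    have hd : ∀ z, HasDerivAt (fun z : ℂ => (z - z0) / R) (1 / R) z := fun z =>
      ((hasDerivAt_id z).sub_const z0).div_const _
    refine ⟨fun z _ => (hd z).differentiableAt.differentiableWithinAt, fun z hz => ?_,
      fun z _ w _ h => ?_, fun z _ => ?_, by simp⟩
    · have := mem_ball_iff_norm.1 (hUR hz)
      rw [mem_ball_zero_iff, norm_div, Complex.norm_real, Real.norm_of_nonneg hR.le]
      exact (div_lt_one hR).2 this
    · simpa [div_left_inj' hR'] using h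
    · rw [(hd z).deriv]; exact one_div_ne_zero hR'
  have hSne : S.Nonempty := ⟨_, _, hchart, rfl⟩
  have hSb : BddAbove S := by
    refine ⟨1 / r, ?_⟩
    rintro _ ⟨f, hf, rfl⟩
    refine Complex.norm_deriv_le_div_of_mapsTo_ball (hf.1.mono hrU) (fun z hz => ?_) hr
    rw [hf.2.2.2.2]
    exact ball_subset_closedBall (hf.2.1 (hrU hz))
  obtain ⟨u, -, hu, huS⟩ := exists_seq_tendsto_sSup hSne hSb
  choose f hf hfu using huS
  obtain ⟨F, hF⟩ := exists_tendstoLocallyUniformlyOn hU (fun n => (hf n).1)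
    (fun n => (hf n).2.1) (hyperfilter ℕ)
  have hlim : ‖deriv F z0‖ = sSup S := by
    refine tendsto_nhds_unique ((hF.deriv (Eventually.of_forall fun n => (hf n).1)
      hU).tendsto_at hz0).norm ?_
    have : (fun n => ‖(deriv ∘ f) n z0‖) = u := funext hfu
    rw [this]
    exact hu.mono_left Nat.hyperfilter_le_atTop
  have hpos : deriv F z0 ≠ 0 := by
    rw [← norm_pos_iff, hlim]
    exact (norm_pos_iff.2 (hchart.2.2.2.1 z0 hz0)).trans_le (le_csSup hSb ⟨_, hchart, rfl⟩)
  have hFc := IsDiskChart.of_tendsto hU hUp hz0 hf hF hpos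
  refine ⟨F, hFc, subset_antisymm (image_subset_iff.2 hFc.2.1) fun w hw => ?_⟩
  by_contra hwF
  obtain ⟨G, hG, hlt⟩ := hFc.exists_norm_deriv_lt hU hl hz0 (mem_ball_zero_iff.1 hw) hwF
  exact absurd (le_csSup hSb ⟨G, hG, rfl⟩) (not_le.2 (hlim ▸ hlt))

/-- The **Riemann mapping theorem** for bounded domains. -/
theorem exists_riemann_map {U : Set ℂ} (hU : IsOpen U) (hUp : IsPreconnected U)
    (hb : Bornology.IsBounded U) (hl : AllLogs U) {z0 : ℂ} (hz0 : z0 ∈ U) :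
    ∃ f : ℂ → ℂ, DifferentiableOn ℂ f (ball 0 1) ∧ InjOn f (ball 0 1) ∧ f '' ball 0 1 = U ∧
      f 0 = z0 := by
  obtain ⟨F, ⟨hd, hm, hi, hne, h0⟩, hsurj⟩ := exists_surjective_isDiskChart hU hUp hb hl hz0
  have hinv : ∀ z ∈ U, Function.invFunOn F U (F z) = z := fun z hz => hi.leftInvOn_invFunOn hz
  have hmem : ∀ w ∈ ball (0 : ℂ) 1, ∃ z ∈ U, F z = w := fun w hw => by rwa [← hsurj] at hw
  refine ⟨Function.invFunOn F U, fun w hw => ?_, fun w hw w' hw' h => ?_, ?_, ?_⟩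
  · obtain ⟨z, hz, rfl⟩ := hmem w hw
    have hs : HasStrictDerivAt F (deriv F z) z :=
      (hd.analyticAt (hU.mem_nhds hz)).hasStrictDerivAt
    have hc : ContinuousAt (Function.invFunOn F U) (F z) := by
      rw [ContinuousAt, hinv z hz, ← hs.map_nhds_eq (hne z hz), tendsto_map'_iff]
      refine tendsto_id.congr' ?_
      filter_upwards [hU.mem_nhds hz] with x hx using (hinv x hx).symm
    refine (HasDerivAt.of_local_left_inverse hc (f := F) (f' := deriv F z) ?_ (hne z hz)
      ?_).differentiableAt.differentiableWithinAt
    · rw [hinv z hz]; exact hs.hasDerivAt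
    · filter_upwards [isOpen_ball.mem_nhds hw] with y hy
      obtain ⟨x, hx, rfl⟩ := hmem y hy
      rw [hinv x hx]
  · obtain ⟨z, hz, rfl⟩ := hmem w hw
    obtain ⟨z', hz', rfl⟩ := hmem w' hw'
    rw [hinv z hz, hinv z' hz'] at h
    rw [h]
  · rw [← hsurj, image_image]
    exact (image_congr hinv).trans (image_id' U)
  · rw [← h0, hinv z0 hz0]

section LengthArea

open MeasureTheory
open scoped Real ENNReal

theorem lintegral_deriv_sq_eq_volume_image {g : ℂ → ℂ} {W : Set ℂ} (hW : IsOpen W)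
    (hd : DifferentiableOn ℂ g W) (hi : InjOn g W) :
    ∫⁻ w in W, ENNReal.ofReal (‖deriv g w‖ ^ 2) = volume (g '' W) := by
  rw [← lintegral_abs_det_fderiv_eq_addHaar_image volume hW.measurableSet
    (f' := fun w => ContinuousLinearMap.mul ℝ ℂ (deriv g w)) (fun w hw => ?_) hi]
  · refine lintegral_congr fun w => ?_
    have h1 : (ContinuousLinearMap.mul ℝ ℂ (deriv g w)).det = Algebra.norm ℝ (deriv g w) := rfl
    rw [h1, Algebra.norm_complex_eq]
    simp [Complex.normSq_eq_norm_sq]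
  · have h1 := ((hd.differentiableAt (hW.mem_nhds hw)).hasDerivAt.hasFDerivAt.restrictScalars
      ℝ).hasFDerivWithinAt (s := W)
    convert h1 using 1
    ext; simp [mul_comm]

/-- A lower bound for the energy of a holomorphic function along an arc across which it
oscillates. -/
theorem le_intervalIntegral_deriv_sq {g : ℂ → ℂ} {s ε θ₁ θ₂ : ℝ} (hs : 0 < s) (hε : 0 < ε)
    (h12 : θ₁ ≤ θ₂) (hπ : θ₂ - θ₁ ≤ π)
    (hg : ∀ θ ∈ Icc θ₁ θ₂, AnalyticAt ℂ g (s * Complex.exp (θ * Complex.I)))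
    (hosc : ε ≤ ‖g (s * Complex.exp (θ₂ * Complex.I)) - g (s * Complex.exp (θ₁ * Complex.I))‖) :
    ε ^ 2 / 8 / s ≤ s * ∫ θ in θ₁..θ₂, ‖deriv g (s * Complex.exp (θ * Complex.I))‖ ^ 2 := by
  set c : ℝ → ℂ := fun θ => s * Complex.exp (θ * Complex.I)
  have hc : ∀ θ, HasDerivAt c (c θ * Complex.I) θ := fun θ => by
    have := (((hasDerivAt_id θ).ofReal_comp.mul_const Complex.I).cexp.const_mul (s : ℂ))
    refine this.congr_deriv ?_
    simp [c, mul_assoc]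
  have hcn : ∀ θ, ‖c θ‖ = s := fun θ => by
    simp [c, Complex.norm_exp_ofReal_mul_I, abs_of_pos hs]
  have hcc : Continuous c := continuous_iff_continuousAt.2 fun θ => (hc θ).continuousAt
  rw [← uIcc_of_le h12] at hg
  have hdc : ContinuousOn (fun θ => deriv g (c θ)) (uIcc θ₁ θ₂) := fun θ hθ =>
    ((hg θ hθ).deriv.continuousAt.comp (f := c) hcc.continuousAt).continuousWithinAt
  have hγ : ∀ θ ∈ uIcc θ₁ θ₂, HasDerivAt (fun θ => g (c θ)) (deriv g (c θ) * (c θ * Complex.I)) θ :=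
    fun θ hθ => (hg θ hθ).differentiableAt.hasDerivAt.comp θ (hc θ)
  have hint := intervalIntegral.integral_eq_sub_of_hasDerivAt hγ
    (hdc.mul (by fun_prop)).intervalIntegrable
  rw [← hint] at hosc
  have h1 := hosc.trans (intervalIntegral.norm_integral_le_integral_norm h12)
  have hpt : ∀ θ, ‖deriv g (c θ) * (c θ * Complex.I)‖ ≤
      ε / (4 * π) + π / ε * s ^ 2 * ‖deriv g (c θ)‖ ^ 2 := by
    intro θ
    rw [norm_mul, norm_mul, hcn, Complex.norm_I, mul_one]
    have hp := Real.pi_pos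
    have : ε / (4 * π) + π / ε * s ^ 2 * ‖deriv g (c θ)‖ ^ 2 - ‖deriv g (c θ)‖ * s
        = (ε - 2 * π * (s * ‖deriv g (c θ)‖)) ^ 2 / (4 * π * ε) := by
      field_simp
      ring
    have : 0 ≤ (ε - 2 * π * (s * ‖deriv g (c θ)‖)) ^ 2 / (4 * π * ε) := by positivity
    linarith
  have hsq : IntervalIntegrable (fun θ => ‖deriv g (c θ)‖ ^ 2) volume θ₁ θ₂ :=
    (hdc.norm.pow 2).intervalIntegrable
  have h2 := intervalIntegral.integral_mono_on h12
    (hdc.mul (g := fun θ => c θ * Complex.I) (by fun_prop)).norm.intervalIntegrable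
    ((intervalIntegrable_const (c := ε / (4 * π))).add (hsq.const_mul (π / ε * s ^ 2)))
    (fun θ _ => hpt θ)
  rw [intervalIntegral.integral_add intervalIntegrable_const (hsq.const_mul _),
    intervalIntegral.integral_const, intervalIntegral.integral_const_mul, smul_eq_mul] at h2
  have h3 := h1.trans h2
  set J := ∫ θ in θ₁..θ₂, ‖deriv g (c θ)‖ ^ 2
  have hp := Real.pi_pos
  have h4 : (θ₂ - θ₁) * (ε / (4 * π)) ≤ ε / 4 := by
    calc (θ₂ - θ₁) * (ε / (4 * π)) ≤ π * (ε / (4 * π)) := by gcongr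
      _ = ε / 4 := by field_simp
  have h5 : 3 / 4 * ε ≤ π / ε * s ^ 2 * J := by linarith
  have h6 : 3 / 4 * ε ^ 2 ≤ π * (s ^ 2 * J) := by
    have := mul_le_mul_of_nonneg_left h5 hε.le
    calc 3 / 4 * ε ^ 2 = ε * (3 / 4 * ε) := by ring
      _ ≤ _ := this
      _ = _ := by field_simp
  have h7 : ε ^ 2 / 8 ≤ s ^ 2 * J := by
    have := Real.pi_lt_four
    by_contra! h
    nlinarith [sq_pos_of_pos hε]
  rw [div_le_iff₀ hs]
  linarith

theorem mul_exp_mem_ball_one_iff {s : ℝ} (hs : 0 < s) (θ : ℝ) :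
    (s * Complex.exp (θ * Complex.I) : ℂ) ∈ ball (1 : ℂ) 1 ↔ s < 2 * Real.cos θ := by
  have h1 : ‖(s * Complex.exp (θ * Complex.I) : ℂ) - 1‖ ^ 2 - 1 = s * (s - 2 * Real.cos θ) := by
    rw [← Complex.normSq_eq_norm_sq, Complex.exp_mul_I, ← Complex.ofReal_cos,
      ← Complex.ofReal_sin, Complex.normSq_apply]
    simp only [Complex.sub_re, Complex.mul_re, Complex.ofReal_re, Complex.add_re, Complex.I_re,
      Complex.I_im, Complex.ofReal_im, Complex.add_im, Complex.mul_im, Complex.one_re,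
      Complex.sub_im, Complex.one_im]
    linear_combination s ^ 2 * Real.sin_sq_add_cos_sq θ
  rw [mem_ball, dist_eq_norm, ← sq_lt_sq₀ (norm_nonneg _) zero_le_one, one_pow, ← sub_neg, h1,
    mul_neg_iff, sub_neg]
  constructor
  · rintro (h | h)
    · exact h.2
    · exact absurd h.1 hs.not_gt
  · exact fun h => Or.inl ⟨hs, h⟩

theorem exists_eq_mul_exp_of_mem_ball_one {z : ℂ} (hz : z ∈ ball (1 : ℂ) 1) :
    ∃ θ ∈ Ioo (-(π / 2)) (π / 2), z = ‖z‖ * Complex.exp (θ * Complex.I) := by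
  refine ⟨z.arg, abs_lt.1 (Complex.abs_arg_lt_pi_div_two_iff.2 (Or.inl ?_)),
    by rw [Complex.norm_mul_exp_arg_mul_I]⟩
  rw [mem_ball_iff_norm'] at hz
  have := (Complex.abs_re_le_norm (1 - z)).trans_lt hz
  rw [abs_lt, Complex.sub_re, Complex.one_re] at this
  linarith

/-- **Length–area principle**: a bounded univalent function on the disk `ball 1 1` has small
oscillation on arbitrarily small circular arcs around the boundary point `0`. -/
theorem exists_forall_dist_le_of_norm_eq {g : ℂ → ℂ} (hd : DifferentiableOn ℂ g (ball 1 1))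
    (hi : InjOn g (ball 1 1)) (hb : Bornology.IsBounded (g '' ball 1 1)) {ε ρ : ℝ} (hε : 0 < ε)
    (hρ : 0 < ρ) : ∃ r ∈ Ioo 0 ρ, ∀ z ∈ ball (1 : ℂ) 1, ∀ w ∈ ball (1 : ℂ) 1, ‖z‖ = r → ‖w‖ = r →
      dist (g z) (g w) ≤ ε := by
  by_contra! hcon
  set F : ℂ → ℝ≥0∞ := (ball (1 : ℂ) 1).indicator fun w => ENNReal.ofReal (‖deriv g w‖ ^ 2) with hF
  have hFm : Measurable F :=
    (((measurable_deriv g).norm.pow_const 2).ennreal_ofReal).indicator measurableSet_ball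
  have hfin : ∫⁻ w, F w < ∞ := by
    rw [hF, lintegral_indicator measurableSet_ball,
      lintegral_deriv_sq_eq_volume_image isOpen_ball hd hi]
    exact hb.measure_lt_top
  have harc : ∀ s ∈ Ioo 0 ρ, ENNReal.ofReal (ε ^ 2 / 8 / s) ≤
      ∫⁻ θ in Ioo (-π) π, ENNReal.ofReal s * F (Complex.polarCoord.symm (s, θ)) := by
    intro s hs
    have hs0 := hs.1
    have hpol : ∀ θ : ℝ, Complex.polarCoord.symm (s, θ) = s * Complex.exp (θ * Complex.I) := by
      intro θ
      rw [Complex.polarCoord_symm_apply, Complex.exp_mul_I]; simp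
    have hball : ∀ θ : ℝ, (s * Complex.exp (θ * Complex.I) : ℂ) ∈ ball (1 : ℂ) 1 ↔
        s < 2 * Real.cos θ := mul_exp_mem_ball_one_iff hs0
    obtain ⟨z, hz, w, hw, hzs, hws, hzw⟩ := hcon s hs
    have harg : ∀ z ∈ ball (1 : ℂ) 1, ‖z‖ = s → ∃ θ ∈ Ioo (-(π / 2)) (π / 2),
        z = s * Complex.exp (θ * Complex.I) := by
      rintro z hz rfl
      exact exists_eq_mul_exp_of_mem_ball_one hz
    obtain ⟨a, ha, rfl⟩ := harg z hz hzs
    obtain ⟨b, hb, rfl⟩ := harg w hw hws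
    clear harg hzs hws
    wlog hab : a ≤ b generalizing a b
    · exact this b hb hw a ha hz (by rwa [dist_comm]) (le_of_not_ge hab)
    rw [hball] at hz hw
    have hin : ∀ θ ∈ Icc a b, (s * Complex.exp (θ * Complex.I) : ℂ) ∈ ball (1 : ℂ) 1 := by
      intro θ hθ
      rw [hball]
      rcases le_total 0 θ with h0 | h0
      · have := Real.cos_le_cos_of_nonneg_of_le_pi h0 (by linarith [hb.2, Real.pi_pos]) hθ.2
        linarith
      · have := Real.cos_le_cos_of_nonneg_of_le_pi (x := -θ) (y := -a) (by linarith)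
          (by linarith [ha.1, Real.pi_pos]) (by linarith [hθ.1])
        rw [Real.cos_neg, Real.cos_neg] at this
        linarith
    have han : ∀ θ ∈ Icc a b, AnalyticAt ℂ g (s * Complex.exp (θ * Complex.I)) := fun θ hθ =>
      hd.analyticAt (isOpen_ball.mem_nhds (hin θ hθ))
    have hle := le_intervalIntegral_deriv_sq hs0 hε hab (by linarith [ha.1, hb.2]) han
      (by rw [dist_comm, dist_eq_norm] at hzw; exact hzw.le)
    rw [intervalIntegral.integral_of_le hab] at hle
    have hcont : ContinuousOn (fun θ : ℝ => ‖deriv g (s * Complex.exp (θ * Complex.I))‖ ^ 2)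
        (Icc a b) := fun θ hθ => (((han θ hθ).deriv.continuousAt.comp
          (f := fun θ : ℝ => (s * Complex.exp (θ * Complex.I) : ℂ))
          (by fun_prop)).norm.pow 2).continuousWithinAt
    calc ENNReal.ofReal (ε ^ 2 / 8 / s) ≤ ENNReal.ofReal s *
        ∫⁻ θ in Ioc a b, ENNReal.ofReal (‖deriv g (s * Complex.exp (θ * Complex.I))‖ ^ 2) := by
          rw [← ofReal_integral_eq_lintegral_ofReal
            (hcont.integrableOn_Icc.mono_set Ioc_subset_Icc_self)
            (Eventually.of_forall fun _ => by positivity), ← ENNReal.ofReal_mul hs0.le]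
          exact ENNReal.ofReal_le_ofReal hle
      _ = ∫⁻ θ in Ioc a b, ENNReal.ofReal s * F (Complex.polarCoord.symm (s, θ)) := by
          rw [← lintegral_const_mul' _ _ ENNReal.ofReal_ne_top]
          refine setLIntegral_congr_fun measurableSet_Ioc fun θ hθ => ?_
          rw [hpol, hF, indicator_of_mem (hin θ (Ioc_subset_Icc_self hθ))]
      _ ≤ _ := by
          refine lintegral_mono_set fun θ hθ => ?_
          exact ⟨by linarith [ha.1, hθ.1, Real.pi_pos], by linarith [hb.2, hθ.2, Real.pi_pos]⟩
  have hsm : Measurable fun p : ℝ × ℝ => Complex.polarCoord.symm p := by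
    simp only [Complex.polarCoord_symm_apply]
    fun_prop
  have hprod : Measurable fun p : ℝ × ℝ =>
      ENNReal.ofReal p.1 • F (Complex.polarCoord.symm p) :=
    measurable_fst.ennreal_ofReal.smul (hFm.comp hsm)
  have hpolar := Complex.lintegral_comp_polarCoord_symm F
  rw [polarCoord_target, Measure.volume_eq_prod, ← Measure.prod_restrict,
    lintegral_prod _ hprod.aemeasurable] at hpolar
  have hfin2 : ∫⁻ s in Ioo 0 ρ, ENNReal.ofReal (ε ^ 2 / 8 / s) < ∞ := by
    refine lt_of_le_of_lt ?_ hfin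
    rw [← hpolar]
    refine (setLIntegral_mono' measurableSet_Ioo fun s hs => harc s hs).trans ?_
    exact lintegral_mono_set Ioo_subset_Ioi_self
  have hint : IntegrableOn (fun s : ℝ => ε ^ 2 / 8 / s) (Ioo 0 ρ) := by
    refine ⟨by fun_prop, ?_⟩
    rw [hasFiniteIntegral_iff_ofReal]
    · exact hfin2
    · refine (ae_restrict_iff' measurableSet_Ioo).2 (Eventually.of_forall fun s hs => ?_)
      have := hs.1
      change 0 ≤ ε ^ 2 / 8 / s
      positivity
  have hrp : IntegrableOn (fun s : ℝ => s ^ (-1 : ℝ)) (Ioo 0 ρ) := by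
    refine IntegrableOn.congr_fun (f := fun s => (ε ^ 2 / 8)⁻¹ * (ε ^ 2 / 8 / s))
      (hint.const_mul (ε ^ 2 / 8)⁻¹) (fun s hs => ?_) measurableSet_Ioo
    rw [Real.rpow_neg_one]
    field_simp
  exact lt_irrefl _ ((intervalIntegral.integrableOn_Ioo_rpow_iff hρ).1 hrp)

/-- **Invariance of domain** in the plane. -/
theorem isOpen_image_of_injOn {f : ℂ → ℂ} {O : Set ℂ} (hO : IsOpen O) (hc : ContinuousOn f O)
    (hi : InjOn f O) : IsOpen (f '' O) := by
  rw [isOpen_iff_mem_nhds]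
  rintro _ ⟨z, hz, rfl⟩
  obtain ⟨r, hr, hrO⟩ := nhds_basis_closedBall.mem_iff.1 (hO.mem_nhds hz)
  have hr' : (r : ℂ) ≠ 0 := Complex.ofReal_ne_zero.2 hr.ne'
  have hmaps : MapsTo (fun x : ℂ => z + r * x) (closedBall 0 1) (closedBall z r) := fun x hx => by
    rw [mem_closedBall_zero_iff] at hx
    rw [mem_closedBall, dist_eq_norm, add_sub_cancel_left, norm_mul, Complex.norm_real,
      Real.norm_of_nonneg hr.le]
    exact mul_le_of_le_one_right hr.le hx
  have h1 := isOpen_image_ball (h := fun x => f (z + r * x))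
    ((hc.mono hrO).comp (by fun_prop) hmaps) (fun x hx y hy hxy => by
      have := hi (hrO (hmaps hx)) (hrO (hmaps hy)) hxy
      simpa [hr'] using this)
  refine mem_of_superset (h1.mem_nhds ⟨0, mem_ball_self one_pos, by simp⟩) ?_
  rintro _ ⟨x, hx, rfl⟩
  exact ⟨_, hrO (hmaps (ball_subset_closedBall hx)), rfl⟩

theorem sub_mul_mem_ball_iff {ζ : ℂ} (hζ : ‖ζ‖ = 1) (w : ℂ) :
    ζ * (1 - w) ∈ ball (0 : ℂ) 1 ↔ w ∈ ball (1 : ℂ) 1 := by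
  rw [mem_ball_zero_iff, mem_ball_iff_norm', norm_mul, hζ, one_mul]

theorem dist_sub_mul {ζ : ℂ} (hζ : ‖ζ‖ = 1) (w : ℂ) : dist (ζ * (1 - w)) ζ = ‖w‖ := by
  rw [dist_eq_norm, mul_sub, mul_one, sub_sub_cancel_left, norm_neg, norm_mul, hζ, one_mul]

theorem exists_eq_sub_mul {ζ : ℂ} (hζ : ‖ζ‖ = 1) (z : ℂ) : ∃ w, z = ζ * (1 - w) := by
  have h0 : ζ ≠ 0 := norm_ne_zero_iff.1 (by rw [hζ]; exact one_ne_zero)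
  exact ⟨1 - z / ζ, by field_simp; ring⟩

theorem exists_mem_ball_inter_sphere {ζ : ℂ} (hζ : ‖ζ‖ = 1) {r : ℝ} (hr : r ∈ Ioo (0 : ℝ) 2) :
    ∃ z ∈ ball (0 : ℂ) 1, dist z ζ = r := by
  refine ⟨ζ * (1 - (r : ℂ)), ?_, ?_⟩
  · rw [sub_mul_mem_ball_iff hζ, mem_ball_iff_norm', ← Complex.ofReal_one, ← Complex.ofReal_sub,
      Complex.norm_real, Real.norm_eq_abs, abs_lt]
    constructor <;> linarith [hr.1, hr.2]
  · rw [dist_sub_mul hζ, Complex.norm_real, Real.norm_of_nonneg hr.1.le]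

/-- The images of suitable small arcs around a boundary point concentrate at a single point. -/
theorem exists_forall_image_arc_subset_ball {f : ℂ → ℂ} (hd : DifferentiableOn ℂ f (ball 0 1))
    (hi : InjOn f (ball 0 1)) (hb : Bornology.IsBounded (f '' ball 0 1)) {ζ : ℂ} (hζ : ‖ζ‖ = 1) :
    ∃ p, ∀ η > 0, ∀ ρ > 0, ∃ r ∈ Ioo 0 ρ, ∀ z ∈ ball (0 : ℂ) 1, dist z ζ = r →
      f z ∈ ball p η := by
  have h0 : ζ ≠ 0 := norm_ne_zero_iff.1 (by rw [hζ]; exact one_ne_zero)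
  have hmaps : MapsTo (fun w : ℂ => ζ * (1 - w)) (ball 1 1) (ball 0 1) := fun w hw =>
    (sub_mul_mem_ball_iff hζ w).2 hw
  have hosc : ∀ n : ℕ, ∃ r ∈ Ioo (0 : ℝ) (1 / (n + 1)), ∀ z ∈ ball (0 : ℂ) 1,
      ∀ w ∈ ball (0 : ℂ) 1, dist z ζ = r → dist w ζ = r → dist (f z) (f w) ≤ 1 / (n + 1) := by
    intro n
    obtain ⟨r, hr, h⟩ := exists_forall_dist_le_of_norm_eq (g := fun w => f (ζ * (1 - w)))
      (hd.comp (by fun_prop) hmaps) (hi.comp (fun x _ y _ h => by simpa [h0] using h) hmaps)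
      (hb.subset (by rintro _ ⟨w, hw, rfl⟩; exact ⟨_, hmaps hw, rfl⟩))
      (Nat.one_div_pos_of_nat (α := ℝ) (n := n)) (Nat.one_div_pos_of_nat (α := ℝ) (n := n))
    refine ⟨r, hr, fun z hz w hw hzr hwr => ?_⟩
    obtain ⟨z, rfl⟩ := exists_eq_sub_mul hζ z
    obtain ⟨w, rfl⟩ := exists_eq_sub_mul hζ w
    rw [sub_mul_mem_ball_iff hζ] at hz hw
    rw [dist_sub_mul hζ] at hzr hwr
    exact h z hz w hw hzr hwr
  choose r hr hosc using hosc
  have hle1 : ∀ n : ℕ, (1 : ℝ) / (n + 1) ≤ 1 := fun n => by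
    rw [div_le_one (by positivity)]; linarith [n.cast_nonneg (α := ℝ)]
  choose q hq hqr using fun n => exists_mem_ball_inter_sphere hζ
    (r := r n) ⟨(hr n).1, by linarith [(hr n).2, hle1 n]⟩
  obtain ⟨p, -, φ, hφ, hp⟩ := tendsto_subseq_of_bounded hb (fun n => mem_image_of_mem f (hq n))
  refine ⟨p, fun η hη ρ hρ => ?_⟩
  have ht := tendsto_one_div_add_atTop_nhds_zero_nat (𝕜 := ℝ)
  obtain ⟨n, h1, h2, h3⟩ := ((Metric.tendsto_nhds.1 hp (η / 2) (half_pos hη)).and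
    (((ht.comp hφ.tendsto_atTop).eventually_lt_const (half_pos hη)).and
    ((ht.comp hφ.tendsto_atTop).eventually_lt_const hρ))).exists
  refine ⟨r (φ n), ⟨(hr _).1, (hr _).2.trans h3⟩, fun z hz hzr => ?_⟩
  have h4 := hosc (φ n) z hz (q (φ n)) (hq _) hzr (hqr _)
  have := dist_triangle (f z) (f (q (φ n))) p
  rw [mem_ball]
  simp only [Function.comp_apply] at h1 h2
  linarith

theorem isPreconnected_ball_sdiff_closedBall {ζ : ℂ} (hζ : ‖ζ‖ = 1) {r : ℝ} (hr : 0 < r) :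
    IsPreconnected (ball (0 : ℂ) 1 \ closedBall ζ r) := by
  have hconv : Convex ℝ ({p : ℝ × ℝ | p.1 ∈ Icc (-(π / 2)) (π / 2) ∧ p.2 < 2 * Real.cos p.1} ∩
      {p | r < p.2}) := by
    have hcos : ConcaveOn ℝ (Icc (-(π / 2)) (π / 2)) fun θ => 2 * Real.cos θ :=
      strictConcaveOn_cos_Icc.concaveOn.smul zero_le_two
    exact hcos.convex_strict_hypograph.inter
      (convex_halfSpace_gt (f := fun p : ℝ × ℝ => p.2) ⟨fun _ _ => rfl, fun _ _ => rfl⟩ r)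
  have himg : ball (0 : ℂ) 1 \ closedBall ζ r = (fun p : ℝ × ℝ =>
      ζ * (1 - p.2 * Complex.exp (p.1 * Complex.I))) ''
      ({p : ℝ × ℝ | p.1 ∈ Icc (-(π / 2)) (π / 2) ∧ p.2 < 2 * Real.cos p.1} ∩ {p | r < p.2}) := by
    ext z
    constructor
    · rintro ⟨hz, hzr⟩
      obtain ⟨w, rfl⟩ := exists_eq_sub_mul hζ z
      rw [mem_closedBall, dist_sub_mul hζ, not_le] at hzr
      rw [sub_mul_mem_ball_iff hζ] at hz
      obtain ⟨θ, hθ, hw⟩ := exists_eq_mul_exp_of_mem_ball_one hz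
      rw [hw, mul_exp_mem_ball_one_iff (hr.trans hzr)] at hz
      exact ⟨(θ, ‖w‖), ⟨⟨Ioo_subset_Icc_self hθ, hz⟩, hzr⟩, by
        simp only; rw [← hw]⟩
    · rintro ⟨⟨θ, s⟩, ⟨⟨-, hs⟩, hrs : r < s⟩, rfl⟩
      have hs0 : 0 < s := hr.trans hrs
      refine ⟨(sub_mul_mem_ball_iff hζ _).2 ((mul_exp_mem_ball_one_iff hs0 θ).2 hs), ?_⟩
      rw [mem_closedBall, dist_sub_mul hζ, norm_mul, Complex.norm_real,
        Complex.norm_exp_ofReal_mul_I, mul_one, Real.norm_of_nonneg hs0.le]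
      exact not_le.2 hrs
  rw [himg]
  exact hconv.isPreconnected.image _ (by fun_prop)

/-- A circular arc around a boundary point cuts the image of the disk in two pieces. -/
theorem subset_image_sdiff_closedBall {f : ℂ → ℂ} (hc : ContinuousOn f (ball 0 1))
    (hi : InjOn f (ball 0 1)) {ζ : ℂ} {r : ℝ} {S : Set ℂ} (hS : IsPreconnected S)
    (hSf : S ⊆ f '' ball 0 1) (hdis : ∀ z ∈ ball (0 : ℂ) 1, dist z ζ = r → f z ∉ S) {z : ℂ}
    (hz : z ∈ ball (0 : ℂ) 1) (hzS : f z ∈ S) (hzr : r < dist z ζ) :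
    S ⊆ f '' (ball 0 1 \ closedBall ζ r) := by
  have hO : ∀ O : Set ℂ, IsOpen O → O ⊆ ball 0 1 → IsOpen (f '' O) := fun O hO hs =>
    isOpen_image_of_injOn hO (hc.mono hs) (hi.mono hs)
  refine hS.subset_left_of_subset_union (hO _ (isOpen_ball.sdiff isClosed_closedBall) sdiff_subset)
    (hO (ball 0 1 ∩ ball ζ r) (isOpen_ball.inter isOpen_ball) inter_subset_left) ?_ ?_
    ⟨f z, hzS, z, ⟨hz, by rwa [mem_closedBall, not_le]⟩, rfl⟩
  · refine Disjoint.image ?_ hi sdiff_subset inter_subset_left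
    exact disjoint_left.2 fun x hx hx' => hx.2 (ball_subset_closedBall hx'.2)
  · intro s hs
    obtain ⟨x, hx, rfl⟩ := hSf hs
    rcases lt_trichotomy (dist x ζ) r with h | h | h
    · exact Or.inr ⟨x, ⟨hx, h⟩, rfl⟩
    · exact absurd hs (hdis x hx h)
    · exact Or.inl ⟨x, ⟨hx, by rwa [mem_closedBall, not_le]⟩, rfl⟩

theorem notMem_image_of_forall_mem_closure {f : ℂ → ℂ} (hc : ContinuousOn f (ball 0 1))
    (hi : InjOn f (ball 0 1)) {ζ : ℂ} (hζ : ‖ζ‖ = 1) {w : ℂ}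
    (hw : ∀ r > 0, w ∈ closure (f '' (ball 0 1 ∩ ball ζ r))) : w ∉ f '' ball 0 1 := by
  rintro ⟨z, hz, rfl⟩
  have hne : 0 < dist z ζ := dist_pos.2 fun h => by
    rw [h, mem_ball_zero_iff, hζ] at hz; exact lt_irrefl _ hz
  have hs : ball (0 : ℂ) 1 ∩ ball z (dist z ζ / 2) ⊆ ball 0 1 := inter_subset_left
  have hopen : IsOpen (f '' (ball 0 1 ∩ ball z (dist z ζ / 2))) :=
    isOpen_image_of_injOn (isOpen_ball.inter isOpen_ball) (hc.mono hs) (hi.mono hs)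
  obtain ⟨_, ⟨x, hx, rfl⟩, y, hy, hxy⟩ := mem_closure_iff.1 (hw _ (half_pos hne)) _ hopen
    ⟨z, ⟨hz, mem_ball_self (half_pos hne)⟩, rfl⟩
  have := hi hy.1 hx.1 hxy
  subst this
  have h1 := mem_ball.1 hx.2
  have h2 := mem_ball'.1 hy.2
  have := dist_triangle z y ζ
  rw [dist_comm z y, dist_comm y ζ] at this
  linarith

/-- If `f` has no limit at a boundary point of the disk, then its cluster set meets all small
circles around the point at which the images of small arcs concentrate. -/
theorem exists_dist_eq_forall_mem_closure {f : ℂ → ℂ} (hc : ContinuousOn f (ball 0 1))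
    (hb : Bornology.IsBounded (f '' ball 0 1)) {ζ : ℂ} (hζ : ‖ζ‖ = 1) {p : ℂ}
    (hp : ∀ η > 0, ∀ ρ > 0, ∃ r ∈ Ioo 0 ρ, ∀ z ∈ ball (0 : ℂ) 1, dist z ζ = r → f z ∈ ball p η)
    (hlim : ¬ Tendsto f (𝓝[ball 0 1] ζ) (𝓝 p)) :
    ∃ d > 0, ∀ e ∈ Ioo 0 d, ∃ w, dist w p = e ∧
      ∀ r > 0, w ∈ closure (f '' (ball 0 1 ∩ ball ζ r)) := by
  rw [Metric.tendsto_nhds] at hlim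
  push Not at hlim
  obtain ⟨d, hd, hfr⟩ := hlim
  refine ⟨d, hd, fun e he => ?_⟩
  have hex : ∀ n : ℕ, ∃ z ∈ ball (0 : ℂ) 1 ∩ ball ζ (1 / (n + 1)), dist (f z) p = e := by
    intro n
    have hn : (0 : ℝ) < 1 / (n + 1) := Nat.one_div_pos_of_nat
    obtain ⟨r, hr, hrp⟩ := hp e he.1 (min 1 (1 / (n + 1))) (lt_min one_pos hn)
    obtain ⟨a, ha, har⟩ := exists_mem_ball_inter_sphere hζ
      (r := r) ⟨hr.1, by linarith [hr.2.trans_le (min_le_left _ _)]⟩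
    obtain ⟨b, hbd, hb⟩ := (hfr.and_eventually (inter_mem self_mem_nhdsWithin
      (mem_nhdsWithin_of_mem_nhds (ball_mem_nhds ζ hn)))).exists
    have hpre : IsPreconnected (ball (0 : ℂ) 1 ∩ ball ζ (1 / (n + 1))) :=
      ((convex_ball 0 1).inter (convex_ball ζ _)).isPreconnected
    have hcont : ContinuousOn (fun z => dist (f z) p) (ball (0 : ℂ) 1 ∩ ball ζ (1 / (n + 1))) :=
      (continuous_id.dist continuous_const).comp_continuousOn (hc.mono inter_subset_left)
    exact hpre.intermediate_value (a := a)
      ⟨ha, mem_ball.2 (har.trans_lt (hr.2.trans_le (min_le_right _ _)))⟩ hb hcont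
      ⟨(hrp a ha har).le, he.2.le.trans hbd⟩
  choose z hz hze using hex
  obtain ⟨w, -, φ, hφ, hw⟩ := tendsto_subseq_of_bounded hb
    (fun n => mem_image_of_mem f (hz n).1)
  refine ⟨w, tendsto_nhds_unique (hw.dist tendsto_const_nhds) ?_, fun r hr => ?_⟩
  · simp only [Function.comp_apply, hze]
    exact tendsto_const_nhds
  · refine mem_closure_of_tendsto hw ?_
    have ht := (tendsto_one_div_add_atTop_nhds_zero_nat (𝕜 := ℝ)).comp hφ.tendsto_atTop
    filter_upwards [ht.eventually_lt_const hr] with n hn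
    exact ⟨_, ⟨(hz _).1, ball_subset_ball hn.le (hz _).2⟩, rfl⟩

/-- Extension of a univalent function having limits at all boundary points. -/
theorem exists_continuousOn_closedBall_extension {f : ℂ → ℂ} (hc : ContinuousOn f (ball 0 1))
    (hi : InjOn f (ball 0 1))
    (hlim : ∀ ζ : ℂ, ‖ζ‖ = 1 → ∃ p, Tendsto f (𝓝[ball 0 1] ζ) (𝓝 p)) :
    ∃ F : ℂ → ℂ, ContinuousOn F (closedBall 0 1) ∧ EqOn F f (ball 0 1) ∧
      F '' closedBall 0 1 = closure (f '' ball 0 1) ∧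
      ∀ ζ, ‖ζ‖ = 1 → F ζ ∉ f '' ball 0 1 := by
  have hcl : closure (ball (0 : ℂ) 1) = closedBall 0 1 := closure_ball 0 one_ne_zero
  have hcF : ContinuousOn (extendFrom (ball 0 1) f) (closedBall 0 1) := by
    refine continuousOn_extendFrom hcl.ge fun x hx => ?_
    rcases (mem_closedBall_zero_iff.1 hx).lt_or_eq with h | h
    · exact ⟨f x, hc x (mem_ball_zero_iff.2 h)⟩
    · exact hlim x h
  have heq : EqOn (extendFrom (ball 0 1) f) f (ball 0 1) := fun x hx =>
    extendFrom_eq (subset_closure hx) (hc x hx)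
  refine ⟨_, hcF, heq, ?_, fun ζ hζ => ?_⟩
  · rw [← heq.image_eq]
    refine subset_antisymm ?_ ?_
    · rw [← hcl]
      exact ContinuousOn.image_closure (hcl.symm ▸ hcF)
    · exact closure_minimal (image_mono ball_subset_closedBall)
        ((isCompact_closedBall 0 1).image_of_continuousOn hcF).isClosed
  · refine notMem_image_of_forall_mem_closure hc hi hζ fun r hr => ?_
    have hζc : ζ ∈ closure (ball (0 : ℂ) 1) := by
      rw [hcl, mem_closedBall_zero_iff, hζ]
    have := mem_closure_iff_nhdsWithin_neBot.1 hζc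
    obtain ⟨p, hp⟩ := hlim ζ hζ
    rw [extendFrom_eq hζc hp]
    refine mem_closure_of_tendsto hp ?_
    filter_upwards [self_mem_nhdsWithin, mem_nhdsWithin_of_mem_nhds (ball_mem_nhds ζ hr)]
      with x h1 h2 using ⟨x, ⟨h1, h2⟩, rfl⟩

end LengthArea

/-- `K` is an arc from `a` to `b` in the plane, or a single point `a = b`. -/
def IsArc (K : Set ℂ) (a b : ℂ) : Prop :=
  ∃ (γ : ℝ → ℂ) (p q : ℝ), p ≤ q ∧ ContinuousOn γ (Icc p q) ∧ InjOn γ (Icc p q) ∧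
    γ p = a ∧ γ q = b ∧ γ '' Icc p q = K

namespace IsArc

variable {K K₁ K₂ C M : Set ℂ} {a b y : ℂ}

theorem left_mem (h : IsArc K a b) : a ∈ K := by
  obtain ⟨γ, p, q, hpq, -, -, rfl, -, rfl⟩ := h
  exact mem_image_of_mem _ (left_mem_Icc.2 hpq)

theorem right_mem (h : IsArc K a b) : b ∈ K := by
  obtain ⟨γ, p, q, hpq, -, -, -, rfl, rfl⟩ := h
  exact mem_image_of_mem _ (right_mem_Icc.2 hpq)

theorem isCompact (h : IsArc K a b) : IsCompact K := by
  obtain ⟨γ, p, q, -, hc, -, -, -, rfl⟩ := h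
  exact isCompact_Icc.image_of_continuousOn hc

theorem isPreconnected (h : IsArc K a b) : IsPreconnected K := by
  obtain ⟨γ, p, q, -, hc, -, -, -, rfl⟩ := h
  exact isPreconnected_Icc.image _ hc

theorem allLogs (h : IsArc K a b) : AllLogs K := by
  obtain ⟨γ, p, q, hpq, hc, hi, -, -, rfl⟩ := h
  exact allLogs_image_Icc hpq hc hi

theorem symm (h : IsArc K a b) : IsArc K b a := by
  obtain ⟨γ, p, q, hpq, hc, hi, rfl, rfl, rfl⟩ := h
  have hm : MapsTo (fun t : ℝ => -t) (Icc (-q) (-p)) (Icc p q) := fun t ht =>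
    ⟨by linarith [ht.2], by linarith [ht.1]⟩
  refine ⟨fun t => γ (-t), -q, -p, by linarith, hc.comp (by fun_prop) hm,
    hi.comp neg_injective.injOn hm, by simp, by simp, ?_⟩
  rw [← image_image γ (fun t => -t), image_neg_Icc, neg_neg, neg_neg]

theorem singleton (a : ℂ) : IsArc {a} a a :=
  ⟨fun _ => a, 0, 0, le_rfl, continuousOn_const, by simp, rfl, rfl, by simp⟩

theorem of_segment (a b : ℂ) : IsArc (segment ℝ a b) a b := by
  rcases eq_or_ne a b with rfl | hab
  · rw [segment_same]; exact singleton a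
  refine ⟨AffineMap.lineMap a b, 0, 1, zero_le_one, AffineMap.lineMap_continuous.continuousOn,
    (AffineMap.lineMap_injective ℝ hab).injOn, AffineMap.lineMap_apply_zero _ _,
    AffineMap.lineMap_apply_one _ _, (segment_eq_image_lineMap ℝ a b).symm⟩

theorem split (h : IsArc K a b) (hy : y ∈ K) :
    ∃ K₁ K₂, IsArc K₁ a y ∧ IsArc K₂ y b ∧ K₁ ∪ K₂ = K ∧ K₁ ∩ K₂ = {y} := by
  obtain ⟨γ, p, q, hpq, hc, hi, rfl, rfl, rfl⟩ := h
  obtain ⟨t, ht, rfl⟩ := hy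
  have h1 : Icc p t ⊆ Icc p q := Icc_subset_Icc_right ht.2
  have h2 : Icc t q ⊆ Icc p q := Icc_subset_Icc_left ht.1
  refine ⟨γ '' Icc p t, γ '' Icc t q, ⟨γ, p, t, ht.1, hc.mono h1, hi.mono h1, rfl, rfl, rfl⟩,
    ⟨γ, t, q, ht.2, hc.mono h2, hi.mono h2, rfl, rfl, rfl⟩, ?_, ?_⟩
  · rw [← image_union, Icc_union_Icc_eq_Icc ht.1 ht.2]
  · rw [← hi.image_inter h1 h2, Icc_inter_Icc_eq_singleton ht.1 ht.2, image_singleton]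

theorem join (h₁ : IsArc K₁ a y) (h₂ : IsArc K₂ y b) (h : K₁ ∩ K₂ ⊆ {y}) :
    IsArc (K₁ ∪ K₂) a b := by
  obtain ⟨γ, p, q, hpq, hc, hi, rfl, rfl, rfl⟩ := h₁
  obtain ⟨δ, p', q', hpq', hc', hi', hp', rfl, rfl⟩ := h₂
  set f : ℝ → ℂ := fun t => if t ≤ q then γ t else δ (t - q + p') with hf
  have hf1 : EqOn f γ (Icc p q) := fun t ht => if_pos ht.2
  have hf2 : EqOn f (fun t => δ (t - q + p')) (Icc q (q + (q' - p'))) := by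
    intro t ht
    rcases ht.1.eq_or_lt with rfl | hlt
    · simp [hf, hp']
    · exact if_neg (not_le.2 hlt)
  have hm : MapsTo (fun t => t - q + p') (Icc q (q + (q' - p'))) (Icc p' q') := fun t ht =>
    ⟨by linarith [ht.1], by linarith [ht.2]⟩
  have hU : Icc p (q + (q' - p')) = Icc p q ∪ Icc q (q + (q' - p')) :=
    (Icc_union_Icc_eq_Icc hpq (by linarith)).symm
  have hmix : ∀ s ∈ Icc p q, ∀ t ∈ Icc q (q + (q' - p')), f s = f t → s = t := by
    intro s hs t ht hst
    rw [hf1 hs, hf2 ht] at hst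
    have h1 : γ s = γ q := h ⟨⟨s, hs, rfl⟩, ⟨_, hm ht, hst.symm⟩⟩
    have h2 := hi hs (right_mem_Icc.2 hpq) h1
    have h3 := hi' (hm ht) (left_mem_Icc.2 hpq') (by rw [hp', ← h1, hst])
    linarith
  refine ⟨f, p, q + (q' - p'), by linarith, ?_, ?_, hf1 (left_mem_Icc.2 hpq), ?_, ?_⟩
  · rw [hU]
    exact (hc.congr hf1).union_of_isClosed ((hc'.comp (by fun_prop) hm).congr hf2)
      isClosed_Icc isClosed_Icc
  · rw [hU]
    rintro s (hs | hs) t (ht | ht) hst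
    · exact hi hs ht (by rwa [hf1 hs, hf1 ht] at hst)
    · exact hmix s hs t ht hst
    · exact (hmix t ht s hs hst.symm).symm
    · rw [hf2 hs, hf2 ht] at hst
      have := hi' (hm hs) (hm ht) hst
      linarith
  · rw [hf2 (right_mem_Icc.2 (by linarith))]
    change δ (q + (q' - p') - q + p') = δ q'
    congr 1; ring
  · have h1 : (fun t => t - q + p') '' Icc q (q + (q' - p')) = Icc p' q' := by
      have : (fun t => t - q + p') = fun t => t + (p' - q) := by ext; ring
      rw [this, image_add_const_Icc, add_sub_cancel]
      ring_nf
    rw [hU, image_union, hf1.image_eq, hf2.image_eq, ← image_image δ (fun t => t - q + p'), h1]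

/-- The initial part of an arc until it first meets a closed set. -/
theorem exists_first_hit (h : IsArc K a b) (hC : IsClosed C) (hKC : (K ∩ C).Nonempty) :
    ∃ y K₁, IsArc K₁ a y ∧ K₁ ⊆ K ∧ K₁ ∩ C = {y} := by
  obtain ⟨γ, p, q, hpq, hc, hi, rfl, rfl, rfl⟩ := h
  obtain ⟨_, ⟨s, hs, rfl⟩, hsC⟩ := hKC
  obtain ⟨t, ⟨ht, htC⟩, hmin⟩ := (isCompact_Icc.of_isClosed_subset
    (hc.preimage_isClosed_of_isClosed isClosed_Icc hC) inter_subset_left).exists_isLeast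
    ⟨s, hs, hsC⟩
  have h1 : Icc p t ⊆ Icc p q := Icc_subset_Icc_right ht.2
  refine ⟨γ t, γ '' Icc p t, ⟨γ, p, t, ht.1, hc.mono h1, hi.mono h1, rfl, rfl, rfl⟩,
    image_mono h1, subset_antisymm ?_ (singleton_subset_iff.2
      ⟨mem_image_of_mem _ (right_mem_Icc.2 ht.1), htC⟩)⟩
  rintro _ ⟨⟨r, hr, rfl⟩, hrC⟩
  have := le_antisymm hr.2 (hmin ⟨h1 hr, hrC⟩)
  rw [this]; rfl

/-- All but the last piece of an arc. -/
theorem exists_truncation (h : IsArc K a b) (hab : a ≠ b) {ε : ℝ} (hε : 0 < ε) :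
    ∃ K' c, IsArc K' a c ∧ K' ⊆ K ∧ b ∉ K' ∧ K ⊆ K' ∪ ball b ε := by
  obtain ⟨γ, p, q, hpq, hc, hi, rfl, rfl, rfl⟩ := h
  have hlt : p < q := lt_of_le_of_ne hpq fun h => hab (by rw [h])
  obtain ⟨δ, hδ, hball⟩ := Metric.continuousWithinAt_iff.1 (hc q (right_mem_Icc.2 hpq)) ε hε
  have hm : max p (q - δ / 2) < q := max_lt hlt (by linarith)
  have h1 : Icc p (max p (q - δ / 2)) ⊆ Icc p q := Icc_subset_Icc_right hm.le
  refine ⟨_, _, ⟨γ, p, max p (q - δ / 2), le_max_left _ _, hc.mono h1, hi.mono h1, rfl, rfl, rfl⟩,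
    image_mono h1, ?_, ?_⟩
  · rintro ⟨t, ht, htq⟩
    rw [hi (h1 ht) (right_mem_Icc.2 hpq) htq] at ht
    exact absurd ht.2 (not_le.2 hm)
  · rintro _ ⟨t, ht, rfl⟩
    rcases le_or_gt t (max p (q - δ / 2)) with h | h
    · exact Or.inl ⟨t, ⟨ht.1, h⟩, rfl⟩
    · refine Or.inr (hball ht ?_)
      have := (le_max_right _ _).trans_lt h
      rw [Real.dist_eq, abs_lt]
      constructor <;> linarith [ht.2]

theorem isPreconnected_sdiff (h : IsArc K a b) : IsPreconnected (K \ {a, b}) := by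
  obtain ⟨γ, p, q, hpq, hc, hi, rfl, rfl, rfl⟩ := h
  have : γ '' Icc p q \ {γ p, γ q} = γ '' Ioo p q := by
    rw [← image_pair, ← hi.image_sdiff_subset (pair_subset (left_mem_Icc.2 hpq)
      (right_mem_Icc.2 hpq)), Icc_sdiff_both]
  rw [this]
  exact isPreconnected_Ioo.image _ (hc.mono Ioo_subset_Icc_self)

theorem isPreconnected_sdiff_right (h : IsArc K a b) : IsPreconnected (K \ {b}) := by
  obtain ⟨γ, p, q, hpq, hc, hi, rfl, rfl, rfl⟩ := h
  have : γ '' Icc p q \ {γ q} = γ '' Ico p q := by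
    rw [← image_singleton, ← hi.image_sdiff_subset (singleton_subset_iff.2 (right_mem_Icc.2 hpq)),
      Icc_sdiff_right]
  rw [this]
  exact isPreconnected_Ico.image _ (hc.mono Ico_subset_Icc_self)

/-- The starting point of an arc in a domain can be chosen freely. -/
theorem exists_of_mem (hM : IsOpen M) (hMp : IsPreconnected M) (h : IsArc K a b)
    (hK : K ⊆ insert b M) (ha : a ∈ M) {u : ℂ} (hu : u ∈ M) :
    ∃ K', IsArc K' u b ∧ K' ⊆ insert b M := by
  have step : ∀ x z, segment ℝ z x ⊆ M → (∃ K', IsArc K' x b ∧ K' ⊆ insert b M) →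
      ∃ K', IsArc K' z b ∧ K' ⊆ insert b M := by
    rintro x z hxz ⟨K', hK', hsub⟩
    obtain ⟨y, S, hS, hSs, hSK⟩ := (of_segment z x).exists_first_hit hK'.isCompact.isClosed
      ⟨x, right_mem_segment ℝ z x, hK'.left_mem⟩
    have hy : y ∈ S ∩ K' := by rw [hSK]; rfl
    obtain ⟨K₁, K₂, -, h2, hun, -⟩ := hK'.split hy.2
    refine ⟨S ∪ K₂, hS.join h2 ?_, union_subset ((hSs.trans hxz).trans (subset_insert _ _)) ?_⟩
    · rw [← hSK]; exact inter_subset_inter_right _ (hun ▸ subset_union_right)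
    · exact (hun ▸ subset_union_right : K₂ ⊆ K').trans hsub
  refine (hMp.induction₂ (fun x z => (∃ K', IsArc K' x b ∧ K' ⊆ insert b M) ↔
    ∃ K', IsArc K' z b ∧ K' ⊆ insert b M) (fun x hx => ?_) (fun _ _ _ _ _ _ h1 h2 => h1.trans h2)
    (fun _ _ _ _ h => h.symm) ha hu).1 ⟨K, h, hK⟩
  obtain ⟨r, hr, hball⟩ := Metric.isOpen_iff.1 hM x hx
  filter_upwards [mem_nhdsWithin_of_mem_nhds (ball_mem_nhds x hr)] with z hz
  have h1 := (convex_ball x r).segment_subset hz (mem_ball_self hr)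
  exact ⟨step x z (h1.trans hball), step z x (segment_symm ℝ z x ▸ h1.trans hball)⟩

end IsArc

/-- `w` is the endpoint of arbitrarily small arcs running in `U`. -/
def ArcAccessible (U : Set ℂ) (w : ℂ) : Prop :=
  ∀ ε > 0, ∃ a ∈ U, ∃ K, IsArc K a w ∧ K ⊆ insert w U ∧ K ⊆ ball w ε

theorem ArcAccessible.mem_closure {U : Set ℂ} {w : ℂ} (h : ArcAccessible U w) : w ∈ closure U := by
  refine Metric.mem_closure_iff.2 fun ε hε => ?_
  obtain ⟨a, ha, K, hK, -, hb⟩ := h ε hε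
  exact ⟨a, ha, by rw [dist_comm]; exact hb hK.left_mem⟩

theorem arcAccessible_of_path {U : Set ℂ} {w : ℂ} {φ : unitInterval → ℂ} (hc : Continuous φ)
    (hi : Function.Injective φ) (hU : ∀ t : unitInterval, (t : ℝ) < 1 → φ t ∈ U) (h1 : φ 1 = w) :
    ArcAccessible U w := by
  intro ε hε
  obtain ⟨δ, hδ, hball⟩ := Metric.continuous_iff.1 hc 1 ε hε
  have hp : max 0 (1 - δ / 2) < 1 := max_lt one_pos (by linarith)
  have hsub : Icc (max 0 (1 - δ / 2)) 1 ⊆ Icc (0 : ℝ) 1 := Icc_subset_Icc_left (le_max_left _ _)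
  have hval : ∀ t (ht : t ∈ Icc (0 : ℝ) 1), IccExtend zero_le_one φ t = φ ⟨t, ht⟩ :=
    fun t ht => IccExtend_of_mem _ _ ht
  have hpm : max 0 (1 - δ / 2) ∈ Icc (0 : ℝ) 1 := hsub (left_mem_Icc.2 hp.le)
  refine ⟨φ ⟨_, hpm⟩, hU _ hp, _, ⟨IccExtend zero_le_one φ, _, 1, hp.le,
    hc.Icc_extend'.continuousOn, ?_, hval _ hpm, ?_, rfl⟩, ?_, ?_⟩
  · intro s hs t ht hst
    rw [hval s (hsub hs), hval t (hsub ht)] at hst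
    exact congrArg Subtype.val (hi hst)
  · rw [hval 1 (right_mem_Icc.2 zero_le_one), ← h1]; rfl
  · rintro _ ⟨t, ht, rfl⟩
    rw [hval t (hsub ht)]
    rcases ht.2.eq_or_lt with rfl | hlt
    · exact Or.inl h1
    · exact Or.inr (hU _ hlt)
  · rintro _ ⟨t, ht, rfl⟩
    rw [hval t (hsub ht), mem_ball, ← h1]
    refine hball _ ?_
    have := (le_max_right _ _).trans ht.1
    rw [Subtype.dist_eq, Real.dist_eq, abs_lt]
    constructor <;> simp <;> linarith [ht.2]

/-- Three points accessible from a domain can be joined inside it by a tripod. -/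
theorem exists_tripod {M K₁ K₂ K₃ : Set ℂ} {a₁ a₂ a₃ w₁ w₂ w₃ : ℂ} (hM : IsOpen M)
    (hMp : IsPreconnected M) (h₁ : IsArc K₁ a₁ w₁) (h₂ : IsArc K₂ a₂ w₂) (h₃ : IsArc K₃ a₃ w₃)
    (hs₁ : K₁ ⊆ insert w₁ M) (hs₂ : K₂ ⊆ insert w₂ M) (hs₃ : K₃ ⊆ insert w₃ M)
    (ha₁ : a₁ ∈ M) (ha₂ : a₂ ∈ M) (ha₃ : a₃ ∈ M) (hw₁ : w₁ ∉ M) (hw₂ : w₂ ∉ M) (hw₃ : w₃ ∉ M)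
    (h12 : w₁ ≠ w₂) (h13 : w₁ ≠ w₃) (h23 : w₂ ≠ w₃) :
    ∃ u ∈ M, ∃ A₁ A₂ A₃, IsArc A₁ u w₁ ∧ IsArc A₂ u w₂ ∧ IsArc A₃ u w₃ ∧
      A₁ ⊆ insert w₁ M ∧ A₂ ⊆ insert w₂ M ∧ A₃ ⊆ insert w₃ M ∧
      A₁ ∩ A₂ = {u} ∧ A₁ ∩ A₃ = {u} ∧ A₂ ∩ A₃ = {u} := by
  obtain ⟨K₂', h₂', hs₂'⟩ := h₂.exists_of_mem hM hMp hs₂ ha₂ ha₁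
  obtain ⟨y, S₂, hS₂, hS₂s, hS₂i⟩ := h₂'.symm.exists_first_hit h₁.isCompact.isClosed
    ⟨a₁, h₂'.left_mem, h₁.left_mem⟩
  have hy : y ∈ S₂ ∩ K₁ := by rw [hS₂i]; rfl
  have hyM : y ∈ M := by
    rcases hs₁ hy.2 with rfl | h
    · rcases hs₂' (hS₂s hy.1) with h | h
      · exact absurd h h12
      · exact h
    · exact h
  obtain ⟨P, P', hP, -, hPu, -⟩ := h₁.symm.split hy.2
  have hPs : P ⊆ K₁ := hPu ▸ subset_union_left
  have hJ := hP.join hS₂.symm ((inter_comm P S₂).trans_subset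
    ((inter_subset_inter_right _ hPs).trans hS₂i.subset))
  have hJs : ∀ z ∈ P ∪ S₂, z = w₁ ∨ z = w₂ ∨ z ∈ M := by
    rintro z (hz | hz)
    · rcases hs₁ (hPs hz) with h | h <;> tauto
    · rcases hs₂' (hS₂s hz) with h | h <;> tauto
  obtain ⟨K₃', h₃', hs₃'⟩ := h₃.exists_of_mem hM hMp hs₃ ha₃ hyM
  obtain ⟨u, S₃, hS₃, hS₃s, hS₃i⟩ := h₃'.symm.exists_first_hit hJ.isCompact.isClosed
    ⟨y, h₃'.left_mem, Or.inr hy.1⟩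
  have hu : u ∈ S₃ ∩ (P ∪ S₂) := by rw [hS₃i]; rfl
  have huM : u ∈ M := by
    rcases hs₃' (hS₃s hu.1) with rfl | h
    · rcases hJs _ hu.2 with h | h | h
      · exact absurd h.symm h13
      · exact absurd h.symm h23
      · exact h
    · exact h
  obtain ⟨Q₁, Q₂, hQ₁, hQ₂, hQu, hQi⟩ := hJ.split hu.2
  have hQ₁s : Q₁ ⊆ P ∪ S₂ := hQu ▸ subset_union_left
  have hQ₂s : Q₂ ⊆ P ∪ S₂ := hQu ▸ subset_union_right
  have key : ∀ Q ⊆ P ∪ S₂, u ∈ Q → Q ∩ S₃ = {u} := fun Q hQ huQ => subset_antisymm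
    ((inter_comm Q S₃).trans_subset ((inter_subset_inter_right _ hQ).trans hS₃i.subset))
    (singleton_subset_iff.2 ⟨huQ, hu.1⟩)
  have hne : ∀ z ∈ Q₁ ∩ Q₂, z ∈ M := by
    rw [hQi]; rintro z rfl; exact huM
  refine ⟨u, huM, Q₁, Q₂, S₃, hQ₁.symm, hQ₂, hS₃.symm, ?_, ?_, hS₃s.trans hs₃', hQi,
    key _ hQ₁s hQ₁.right_mem, key _ hQ₂s hQ₂.left_mem⟩
  · intro z hz
    rcases hJs z (hQ₁s hz) with h | rfl | h
    · exact Or.inl h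
    · exact absurd (hne _ ⟨hz, hQ₂.right_mem⟩) hw₂
    · exact Or.inr h
  · intro z hz
    rcases hJs z (hQ₂s hz) with rfl | h | h
    · exact absurd (hne _ ⟨hQ₁.left_mem, hz⟩) hw₁
    · exact Or.inl h
    · exact Or.inr h

/-- Every point of a simple closed curve lies in the closure of every complementary component. -/
theorem mem_closure_connectedComponentIn_compl {L₁ L₂ : Set ℂ} {u v w x y : ℂ}
    (h₁ : IsArc L₁ u v) (h₂ : IsArc L₂ u v) (h : L₁ ∩ L₂ = {u, v}) (hw : w ∈ L₁)
    (hwu : u ≠ w) (hwv : v ≠ w) (hx : x ∈ (L₁ ∪ L₂)ᶜ) (hy : y ∈ (L₁ ∪ L₂)ᶜ)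
    (hxy : x ∉ connectedComponentIn (L₁ ∪ L₂)ᶜ y) :
    w ∈ closure (connectedComponentIn (L₁ ∪ L₂)ᶜ y) := by
  set S := connectedComponentIn (L₁ ∪ L₂)ᶜ y with hS
  have hcl : IsClosed (L₁ ∪ L₂) := (h₁.isCompact.union h₂.isCompact).isClosed
  have hSo : IsOpen S := hcl.isOpen_compl.connectedComponentIn
  by_contra hwS
  obtain ⟨ε, hε, hball⟩ := Metric.isOpen_iff.1 isClosed_closure.isOpen_compl w hwS
  obtain ⟨A, B, hA, hB, hun, hAB⟩ := h₁.split hw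
  obtain ⟨A', c, hA', hA's, hwA', hAA'⟩ := hA.exists_truncation hwu hε
  obtain ⟨B', d, hB', hB's, hwB', hBB'⟩ := hB.symm.exists_truncation hwv hε
  have hAL : A' ⊆ L₁ := hA's.trans (hun ▸ subset_union_left)
  have hBL : B' ⊆ L₁ := hB's.trans (hun ▸ subset_union_right)
  have hAB' : ∀ z ∈ A', z ∉ B' := by
    intro z hz hz'
    have : z ∈ A ∩ B := ⟨hA's hz, hB's hz'⟩
    rw [hAB] at this
    exact hwA' (this ▸ hz)
  have hvA : v ∉ A' := fun hv => hAB' v hv hB'.left_mem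
  have huB : u ∉ B' := fun hu => hAB' u hA'.left_mem hu
  have hi1 : A' ∩ L₂ = {u} := by
    refine subset_antisymm (fun z hz => ?_) (singleton_subset_iff.2 ⟨hA'.left_mem, h₂.left_mem⟩)
    have : z ∈ L₁ ∩ L₂ := ⟨hAL hz.1, hz.2⟩
    rw [h] at this
    rcases this with h | h
    · exact h
    · exact absurd (h ▸ hz.1) hvA
  have hi2 : (A' ∪ L₂) ∩ B' = {v} := by
    refine subset_antisymm (fun z hz => ?_)
      (singleton_subset_iff.2 ⟨Or.inr h₂.right_mem, hB'.left_mem⟩)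
    rcases hz.1 with h' | h'
    · exact absurd hz.2 (hAB' z h')
    have : z ∈ L₁ ∩ L₂ := ⟨hBL hz.2, h'⟩
    rw [h] at this
    rcases this with h | h
    · exact absurd (h ▸ hz.2) huB
    · exact h
  have hc1 : IsCompact (A' ∪ L₂) := hA'.isCompact.union h₂.isCompact
  have hlog : AllLogs (A' ∪ L₂ ∪ B') :=
    (AllLogs.union hA'.isCompact.isClosed h₂.isCompact.isClosed hA'.allLogs h₂.allLogs
      (hi1 ▸ isPreconnected_singleton)).union hc1.isClosed hB'.isCompact.isClosed hB'.allLogs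
      (hi2 ▸ isPreconnected_singleton)
  have hpre := isPreconnected_compl_of_allLogs (hc1.union hB'.isCompact) hlog
  have hsub : A' ∪ L₂ ∪ B' ⊆ L₁ ∪ L₂ := union_subset
    (union_subset (hAL.trans subset_union_left) subset_union_right) (hBL.trans subset_union_left)
  have hySm : y ∈ S := mem_connectedComponentIn hy
  refine hxy (hpre.subset_of_closure_inter_subset hSo
    ⟨y, compl_subset_compl.2 hsub hy, hySm⟩ ?_ (compl_subset_compl.2 hsub hx))
  rintro z ⟨hzS, hz⟩
  by_contra hzn
  have hzf : z ∈ L₁ ∪ L₂ := frontier_connectedComponentIn_subset hcl y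
    (by rw [hSo.frontier_eq]; exact ⟨hzS, hzn⟩)
  refine hball ?_ hzS
  rcases hzf with hz1 | hz2
  · rw [← hun] at hz1
    rcases hz1 with h' | h'
    · exact (hAA' h').resolve_left fun h => hz (Or.inl (Or.inl h))
    · exact (hBB' h').resolve_left fun h => hz (Or.inr h)
  · exact absurd (Or.inl (Or.inr hz2)) hz

theorem not_mem_closure_of_theta {L₁ L₂ L₃ N : Set ℂ} {u v w₁ w₂ w₃ : ℂ} (huv : u ≠ v)
    (h₁ : IsArc L₁ u v) (h₂ : IsArc L₂ u v) (h₃ : IsArc L₃ u v) (h12 : L₁ ∩ L₂ = {u, v})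
    (h13 : L₁ ∩ L₃ = {u, v}) (h23 : L₂ ∩ L₃ = {u, v}) (hw₁ : w₁ ∈ L₁ \ {u, v})
    (hw₂ : w₂ ∈ L₂ \ {u, v}) (hw₃ : w₃ ∈ L₃ \ {u, v}) (hN : IsPreconnected N) (hne : N.Nonempty)
    (hNd : Disjoint N (L₁ ∪ L₂ ∪ L₃)) (hN₁ : w₁ ∈ closure N) (hN₂ : w₂ ∈ closure N) :
    w₃ ∉ closure N := by
  intro hN₃
  obtain ⟨x, hx⟩ := hne
  have hNL : ∀ z ∈ N, z ∉ L₁ ∧ z ∉ L₂ ∧ z ∉ L₃ := fun z hz => by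
    have := disjoint_left.1 hNd hz
    simp only [mem_union, not_or] at this; tauto
  have hcl : IsClosed (L₁ ∪ L₂) := (h₁.isCompact.union h₂.isCompact).isClosed
  have hnot := not_isPreconnected_compl_of_inter_eq_pair h₁.isCompact h₂.isCompact
    h₁.isPreconnected h₂.isPreconnected huv h12
  have hins : ∀ {S : Set ℂ} {w}, IsPreconnected S → w ∈ closure S → IsPreconnected (insert w S) :=
    fun hS hw => hS.subset_closure (subset_insert _ _) (insert_subset hw subset_closure)
  have hT : insert w₃ N ∪ L₃ \ {u, v} ⊆ connectedComponentIn (L₁ ∪ L₂)ᶜ x := by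
    refine ((hins hN hN₃).union w₃ (mem_insert _ _) hw₃ h₃.isPreconnected_sdiff
      ).subset_connectedComponentIn (Or.inl (Or.inr hx)) ?_
    have hL : L₃ \ {u, v} ⊆ (L₁ ∪ L₂)ᶜ := by
      rintro z ⟨hz, hzn⟩ (h | h)
      · exact hzn (h13 ▸ ⟨h, hz⟩)
      · exact hzn (h23 ▸ ⟨h, hz⟩)
    refine union_subset (insert_subset (hL hw₃) fun z hz => ?_) hL
    rintro (h | h)
    exacts [(hNL z hz).1 h, (hNL z hz).2.1 h]
  have hxJ : x ∈ (L₁ ∪ L₂)ᶜ := connectedComponentIn_subset _ _ (hT (Or.inl (Or.inr hx)))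
  obtain ⟨y, hy, hyx⟩ : ∃ y ∈ (L₁ ∪ L₂)ᶜ, y ∉ connectedComponentIn (L₁ ∪ L₂)ᶜ x := by
    by_contra! hall
    exact hnot (subset_antisymm (connectedComponentIn_subset _ x) hall ▸
      isPreconnected_connectedComponentIn)
  set S := connectedComponentIn (L₁ ∪ L₂)ᶜ y with hS
  have hdis : Disjoint S (connectedComponentIn (L₁ ∪ L₂)ᶜ x) := by
    rw [disjoint_left]
    intro z hz hz'
    refine hyx ?_
    rw [connectedComponentIn_eq hz', ← connectedComponentIn_eq hz]
    exact mem_connectedComponentIn hy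
  have hxS : x ∉ S := fun h => disjoint_left.1 hdis h (hT (Or.inl (Or.inr hx)))
  have hSJ : S ⊆ (L₁ ∪ L₂)ᶜ := connectedComponentIn_subset _ _
  have hSL₃ : ∀ z ∈ S, z ∉ L₃ := by
    intro z hz hz3
    by_cases hzu : z ∈ ({u, v} : Set ℂ)
    · rw [← h12] at hzu
      exact hSJ hz (Or.inl hzu.1)
    · exact disjoint_left.1 hdis hz (hT (Or.inr ⟨hz3, hzu⟩))
  have hne' : ∀ {w : ℂ}, w ∉ ({u, v} : Set ℂ) → u ≠ w ∧ v ≠ w := fun h =>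
    ⟨fun e => h (Or.inl e.symm), fun e => h (Or.inr e.symm)⟩
  have hS₁ : w₁ ∈ closure S := mem_closure_connectedComponentIn_compl h₁ h₂ h12 hw₁.1
    (hne' hw₁.2).1 (hne' hw₁.2).2 hxJ hy hxS
  have hS₂ : w₂ ∈ closure S := by
    have := mem_closure_connectedComponentIn_compl (x := x) (y := y) h₂ h₁
      ((inter_comm _ _).trans h12) hw₂.1 (hne' hw₂.2).1 (hne' hw₂.2).2
    rw [union_comm L₂ L₁] at this
    exact this hxJ hy hxS
  have hC : ∀ {w}, w ∈ closure N → w ∈ closure S → IsPreconnected (insert w N ∪ insert w S) :=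
    fun h h' => (hins hN h).union _ (mem_insert _ _) (mem_insert _ _)
      (hins isPreconnected_connectedComponentIn h')
  have hint : (L₂ ∪ L₃) ∩ (L₁ ∪ L₃) = L₃ := by
    rw [← inter_union_distrib_right, inter_comm L₂ L₁, h12]
    exact union_eq_self_of_subset_left (pair_subset h₃.left_mem h₃.right_mem)
  have := janiszewski (h₂.isCompact.union h₃.isCompact) (h₁.isCompact.union h₃.isCompact)
    (by rw [hint]; exact h₃.isPreconnected) (hC hN₁ hS₁) (hC hN₂ hS₂) ?_ ?_ (Or.inl (Or.inr hx))
    (Or.inr (Or.inr (mem_connectedComponentIn hy))) (Or.inl (Or.inr hx))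
    (Or.inr (Or.inr (mem_connectedComponentIn hy)))
  · refine hyx (connectedComponentIn_mono _ (compl_subset_compl.2 ?_) this)
    exact union_subset (subset_union_left.trans subset_union_right)
      (subset_union_left.trans subset_union_left)
  · have : w₁ ∉ L₂ ∪ L₃ := by
      rintro (h | h)
      · exact hw₁.2 (h12 ▸ ⟨hw₁.1, h⟩)
      · exact hw₁.2 (h13 ▸ ⟨hw₁.1, h⟩)
    rw [disjoint_left]
    rintro z ((rfl | hz) | (rfl | hz))
    · exact this
    · rintro (h | h)
      exacts [(hNL z hz).2.1 h, (hNL z hz).2.2 h]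
    · exact this
    · rintro (h | h)
      exacts [hSJ hz (Or.inr h), hSL₃ z hz h]
  · have : w₂ ∉ L₁ ∪ L₃ := by
      rintro (h | h)
      · exact hw₂.2 (h12 ▸ ⟨h, hw₂.1⟩)
      · exact hw₂.2 (h23 ▸ ⟨hw₂.1, h⟩)
    rw [disjoint_left]
    rintro z ((rfl | hz) | (rfl | hz))
    · exact this
    · rintro (h | h)
      exacts [(hNL z hz).1 h, (hNL z hz).2.2 h]
    · exact this
    · rintro (h | h)
      exacts [hSJ hz (Or.inl h), hSL₃ z hz h]

/-- A connected set cannot accumulate at three points that are accessible from two disjoint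
domains missing the set. -/
theorem not_mem_closure_of_accessible {M V N K₁ K₂ K₃ H₁ H₂ H₃ : Set ℂ}
    {a₁ a₂ a₃ b₁ b₂ b₃ w₁ w₂ w₃ : ℂ} (hM : IsOpen M) (hMp : IsPreconnected M) (hV : IsOpen V)
    (hVp : IsPreconnected V) (hMV : Disjoint M V)
    (h₁ : IsArc K₁ a₁ w₁) (h₂ : IsArc K₂ a₂ w₂) (h₃ : IsArc K₃ a₃ w₃)
    (hs₁ : K₁ ⊆ insert w₁ M) (hs₂ : K₂ ⊆ insert w₂ M) (hs₃ : K₃ ⊆ insert w₃ M)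
    (ha₁ : a₁ ∈ M) (ha₂ : a₂ ∈ M) (ha₃ : a₃ ∈ M)
    (g₁ : IsArc H₁ b₁ w₁) (g₂ : IsArc H₂ b₂ w₂) (g₃ : IsArc H₃ b₃ w₃)
    (gs₁ : H₁ ⊆ insert w₁ V) (gs₂ : H₂ ⊆ insert w₂ V) (gs₃ : H₃ ⊆ insert w₃ V)
    (gb₁ : b₁ ∈ V) (gb₂ : b₂ ∈ V) (gb₃ : b₃ ∈ V)
    (hw₁ : w₁ ∉ M ∪ V ∪ N) (hw₂ : w₂ ∉ M ∪ V ∪ N) (hw₃ : w₃ ∉ M ∪ V ∪ N)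
    (h12 : w₁ ≠ w₂) (h13 : w₁ ≠ w₃) (h23 : w₂ ≠ w₃) (hN : IsPreconnected N) (hne : N.Nonempty)
    (hNM : Disjoint N M) (hNV : Disjoint N V) (hN₁ : w₁ ∈ closure N) (hN₂ : w₂ ∈ closure N) :
    w₃ ∉ closure N := by
  simp only [mem_union, not_or] at hw₁ hw₂ hw₃
  obtain ⟨u, hu, A₁, A₂, A₃, hA₁, hA₂, hA₃, sA₁, sA₂, sA₃, A12, A13, A23⟩ :=
    exists_tripod hM hMp h₁ h₂ h₃ hs₁ hs₂ hs₃ ha₁ ha₂ ha₃ hw₁.1.1 hw₂.1.1 hw₃.1.1 h12 h13 h23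
  obtain ⟨v, hv, B₁, B₂, B₃, hB₁, hB₂, hB₃, sB₁, sB₂, sB₃, B12, B13, B23⟩ :=
    exists_tripod hV hVp g₁ g₂ g₃ gs₁ gs₂ gs₃ gb₁ gb₂ gb₃ hw₁.1.2 hw₂.1.2 hw₃.1.2 h12 h13 h23
  have hself : ∀ {w : ℂ} {A B : Set ℂ}, A ⊆ insert w M → B ⊆ insert w V → A ∩ B ⊆ {w} := by
    rintro w A B hA hB z ⟨hzA, hzB⟩
    rcases hA hzA with h | h
    · exact h
    rcases hB hzB with h' | h'
    · exact h'
    exact absurd h' (disjoint_left.1 hMV h)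
  have hcross : ∀ {w w' : ℂ} {A B : Set ℂ}, w ≠ w' → w ∉ V → w' ∉ M → A ⊆ insert w M →
      B ⊆ insert w' V → A ∩ B = ∅ := by
    rintro w w' A B hne hwV hwM hA hB
    rw [← disjoint_iff_inter_eq_empty, disjoint_left]
    intro z hzA hzB
    rcases hA hzA with rfl | h <;> rcases hB hzB with rfl | h'
    exacts [hne rfl, hwV h', hwM h, disjoint_left.1 hMV h h']
  have hL : ∀ {A B A' B' : Set ℂ}, A ∩ A' = {u} → B ∩ B' = {v} → A ∩ B' = ∅ → A' ∩ B = ∅ →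
      (A ∪ B) ∩ (A' ∪ B') = {u, v} := by
    intro A B A' B' e1 e2 e3 e4
    rw [union_inter_distrib_right, inter_union_distrib_left, inter_union_distrib_left, e1, e2, e3,
      inter_comm B A', e4, union_empty, empty_union]
    rfl
  have hend : ∀ {w : ℂ}, w ∉ M → w ∉ V → w ∉ ({u, v} : Set ℂ) := by
    rintro w h h' (rfl | rfl)
    exacts [h hu, h' hv]
  refine not_mem_closure_of_theta (hMV.ne_of_mem hu hv)
    (hA₁.join hB₁.symm (hself sA₁ sB₁)) (hA₂.join hB₂.symm (hself sA₂ sB₂))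
    (hA₃.join hB₃.symm (hself sA₃ sB₃)) (hL A12 B12 (hcross h12 hw₁.1.2 hw₂.1.1 sA₁ sB₂)
      (hcross h12.symm hw₂.1.2 hw₁.1.1 sA₂ sB₁))
    (hL A13 B13 (hcross h13 hw₁.1.2 hw₃.1.1 sA₁ sB₃) (hcross h13.symm hw₃.1.2 hw₁.1.1 sA₃ sB₁))
    (hL A23 B23 (hcross h23 hw₂.1.2 hw₃.1.1 sA₂ sB₃) (hcross h23.symm hw₃.1.2 hw₂.1.1 sA₃ sB₂))
    ⟨Or.inl hA₁.right_mem, hend hw₁.1.1 hw₁.1.2⟩ ⟨Or.inl hA₂.right_mem, hend hw₂.1.1 hw₂.1.2⟩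
    ⟨Or.inl hA₃.right_mem, hend hw₃.1.1 hw₃.1.2⟩ hN hne ?_ hN₁ hN₂
  have hd : ∀ {w : ℂ} {A B : Set ℂ}, w ∉ N → A ⊆ insert w M → B ⊆ insert w V →
      Disjoint N (A ∪ B) := by
    rintro w A B hw hA hB
    rw [disjoint_left]
    rintro z hz (h | h)
    · rcases hA h with rfl | h
      exacts [hw hz, disjoint_left.1 hNM hz h]
    · rcases hB h with rfl | h
      exacts [hw hz, disjoint_left.1 hNV hz h]
  simp only [disjoint_union_right]
  simp only [disjoint_union_right] at hd
  exact ⟨⟨hd hw₁.2 sA₁ sB₁, hd hw₂.2 sA₂ sB₂⟩, hd hw₃.2 sA₃ sB₃⟩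

theorem exists_tendsto_of_arcAccessible {f : ℂ → ℂ} {V : Set ℂ}
    (hd : DifferentiableOn ℂ f (ball 0 1)) (hi : InjOn f (ball 0 1))
    (hb : Bornology.IsBounded (f '' ball 0 1)) (hV : IsOpen V) (hVp : IsPreconnected V)
    (hdis : Disjoint (f '' ball 0 1) V)
    (hU : ∀ w ∈ frontier (f '' ball 0 1), ArcAccessible (f '' ball 0 1) w)
    (hVa : ∀ w ∈ frontier (f '' ball 0 1), ArcAccessible V w) {ζ : ℂ} (hζ : ‖ζ‖ = 1) :
    ∃ p, Tendsto f (𝓝[ball 0 1] ζ) (𝓝 p) := by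
  have hc := hd.continuousOn
  have hUo : IsOpen (f '' ball 0 1) := isOpen_image_of_injOn isOpen_ball hc hi
  obtain ⟨p, hp⟩ := exists_forall_image_arc_subset_ball hd hi hb hζ
  refine ⟨p, ?_⟩
  by_contra hlim
  obtain ⟨d, hd0, hw⟩ := exists_dist_eq_forall_mem_closure hc hb hζ hp hlim
  have key : ∀ e ∈ Ico (d / 4) d, ∃ w, dist w p = e ∧
      (∀ r > 0, w ∈ closure (f '' (ball 0 1 ∩ ball ζ r))) ∧ w ∉ f '' ball 0 1 ∧ w ∉ V ∧
      (∃ b ∈ V, ∃ H, IsArc H b w ∧ H ⊆ insert w V) ∧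
      ∃ z ∈ ball (0 : ℂ) 1, ∃ K, IsArc K (f z) w ∧ ∀ r, (∀ y ∈ ball 0 1, dist y ζ = r →
        f y ∈ ball p (d / 8)) → r < dist z ζ →
        K ⊆ insert w (f '' (ball 0 1 \ closedBall ζ r)) := by
    intro e he
    obtain ⟨w, hwp, hwc⟩ := hw e ⟨by linarith [he.1], he.2⟩
    have hwU := notMem_image_of_forall_mem_closure hc hi hζ hwc
    have hwcl : w ∈ closure (f '' ball 0 1) :=
      closure_mono (image_mono inter_subset_left) (hwc 1 one_pos)
    have hwf : w ∈ frontier (f '' ball 0 1) := by rw [hUo.frontier_eq]; exact ⟨hwcl, hwU⟩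
    obtain ⟨_, ⟨z, hz, rfl⟩, K, hK, hKs, hKb⟩ := hU w hwf (d / 8) (by linarith)
    obtain ⟨b, hb, H, hH, hHs, -⟩ := hVa w hwf 1 one_pos
    refine ⟨w, hwp, hwc, hwU, disjoint_left.1 (hdis.closure_left hV) hwcl, ⟨b, hb, H, hH, hHs⟩,
      z, hz, K, hK, fun r hr hrz => ?_⟩
    have := subset_image_sdiff_closedBall hc hi (r := r) (ζ := ζ) hK.isPreconnected_sdiff_right
      (fun y hy => (hKs hy.1).resolve_left hy.2) (fun y hy hyr hyK => ?_) hz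
      ⟨hK.left_mem, fun h => hwU ⟨z, hz, h⟩⟩ hrz
    · exact sdiff_singleton_subset_iff.1 this
    · have h1 := mem_ball.1 (hr y hy hyr)
      have h2 := mem_ball.1 (hKb hyK.1)
      have h3 := dist_triangle_left w p (f y)
      linarith [he.1]
  have hζ' : ∀ z ∈ ball (0 : ℂ) 1, 0 < dist z ζ := by
    intro z hz
    refine dist_pos.2 ?_
    rintro rfl
    rw [mem_ball_zero_iff, hζ] at hz
    exact lt_irrefl _ hz
  obtain ⟨w₁, d₁, c₁, u₁, v₁, ⟨b₁, hb₁, H₁, hH₁, sH₁⟩, z₁, hz₁, K₁, hK₁, sK₁⟩ :=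
    key (d / 2) ⟨by linarith, by linarith⟩
  obtain ⟨w₂, d₂, c₂, u₂, v₂, ⟨b₂, hb₂, H₂, hH₂, sH₂⟩, z₂, hz₂, K₂, hK₂, sK₂⟩ :=
    key (d / 3) ⟨by linarith, by linarith⟩
  obtain ⟨w₃, d₃, c₃, u₃, v₃, ⟨b₃, hb₃, H₃, hH₃, sH₃⟩, z₃, hz₃, K₃, hK₃, sK₃⟩ :=
    key (d / 4) ⟨le_rfl, by linarith⟩
  obtain ⟨r, hr, hrb⟩ := hp (d / 8) (by linarith) (min (dist z₁ ζ) (min (dist z₂ ζ) (dist z₃ ζ)))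
    (lt_min (hζ' _ hz₁) (lt_min (hζ' _ hz₂) (hζ' _ hz₃)))
  have hr₁ : r < dist z₁ ζ := hr.2.trans_le (min_le_left _ _)
  have hr₂ : r < dist z₂ ζ := hr.2.trans_le ((min_le_right _ _).trans (min_le_left _ _))
  have hr₃ : r < dist z₃ ζ := hr.2.trans_le ((min_le_right _ _).trans (min_le_right _ _))
  have hMU : f '' (ball 0 1 \ closedBall ζ r) ⊆ f '' ball 0 1 := image_mono sdiff_subset
  have hNU : f '' (ball 0 1 ∩ ball ζ r) ⊆ f '' ball 0 1 := image_mono inter_subset_left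
  have hmem : ∀ {z}, z ∈ ball (0 : ℂ) 1 → r < dist z ζ →
      f z ∈ f '' (ball 0 1 \ closedBall ζ r) := fun hz h =>
    mem_image_of_mem _ ⟨hz, fun h' => (mem_closedBall.1 h').not_gt h⟩
  have hnot : ∀ {w}, w ∉ f '' ball 0 1 → w ∉ V →
      w ∉ f '' (ball 0 1 \ closedBall ζ r) ∪ V ∪ f '' (ball 0 1 ∩ ball ζ r) := by
    rintro w hU hV ((h | h) | h)
    exacts [hU (hMU h), hV h, hU (hNU h)]
  refine not_mem_closure_of_accessible
    (isOpen_image_of_injOn (isOpen_ball.sdiff isClosed_closedBall) (hc.mono sdiff_subset)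
      (hi.mono sdiff_subset))
    ((isPreconnected_ball_sdiff_closedBall hζ hr.1).image _ (hc.mono sdiff_subset)) hV hVp
    (hdis.mono_left hMU) hK₁ hK₂ hK₃ (sK₁ r hrb hr₁) (sK₂ r hrb hr₂) (sK₃ r hrb hr₃)
    (hmem hz₁ hr₁) (hmem hz₂ hr₂) (hmem hz₃ hr₃) hH₁ hH₂ hH₃ sH₁ sH₂ sH₃ hb₁ hb₂ hb₃
    (hnot u₁ v₁) (hnot u₂ v₂) (hnot u₃ v₃) ?_ ?_ ?_
    (((convex_ball _ _).inter (convex_ball _ _)).isPreconnected.image _ (hc.mono inter_subset_left))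
    (closure_nonempty_iff.1 ⟨w₁, c₁ r hr.1⟩) ?_ (hdis.mono_left hNU) (c₁ r hr.1) (c₂ r hr.1)
    (c₃ r hr.1)
  · rintro rfl; linarith
  · rintro rfl; linarith
  · rintro rfl; linarith
  · refine Disjoint.image ?_ hi inter_subset_left sdiff_subset
    rw [disjoint_left]
    exact fun z hz hz' => hz'.2 (ball_subset_closedBall hz.2)

/-- A function analytic in the disk and continuous up to the circle that takes a constant value
on an arc of the circle takes this value at the center. -/
theorem apply_zero_eq_of_eqOn_arc {F : ℂ → ℂ} {p : ℂ} {θ δ : ℝ}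
    (hd : DifferentiableOn ℂ F (ball 0 1)) (hc : ContinuousOn F (closedBall 0 1)) (hδ : 0 < δ)
    (h : ∀ t ∈ Ioo (θ - δ) (θ + δ), F (Complex.exp (t * Complex.I)) = p) : F 0 = p := by
  obtain ⟨n, hn⟩ := exists_nat_gt (2 * Real.pi / δ)
  have hn0 : (0 : ℝ) < n := (div_pos Real.two_pi_pos hδ).trans hn
  have hnC : (n : ℂ) ≠ 0 := by exact_mod_cast hn0.ne'
  set ω : ℂ := Complex.exp (2 * Real.pi / n * Complex.I) with hω
  have hω1 : ‖ω‖ = 1 := by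
    rw [hω]; exact_mod_cast Complex.norm_exp_ofReal_mul_I (2 * Real.pi / n)
  have hωn : ω ^ n = 1 := by
    rw [hω, ← Complex.exp_nat_mul, ← Complex.exp_two_pi_mul_I]
    congr 1; field_simp
  set g : ℂ → ℂ := fun z => ∏ k ∈ Finset.range n, (F (ω ^ k * z) - p) with hg
  have hm : ∀ k, ∀ z : ℂ, ‖ω ^ k * z‖ = ‖z‖ := fun k z => by simp [hω1]
  have hg0 : ∀ z : ℂ, ‖z‖ = 1 → g z = 0 := by
    intro z hz
    obtain ⟨t, rfl⟩ := (Complex.norm_eq_one_iff z).1 hz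
    set j := ⌊(θ - t) * n / (2 * Real.pi)⌋ with hj
    have hj1 : j * (2 * Real.pi / n) ≤ θ - t := by
      have := Int.floor_le ((θ - t) * n / (2 * Real.pi))
      rw [le_div_iff₀ Real.two_pi_pos] at this
      rw [mul_div_assoc', div_le_iff₀ hn0]; exact this
    have hj2 : θ - t < (j + 1) * (2 * Real.pi / n) := by
      have := Int.lt_floor_add_one ((θ - t) * n / (2 * Real.pi))
      rw [div_lt_iff₀ Real.two_pi_pos] at this
      rw [mul_div_assoc', lt_div_iff₀ hn0]; exact this
    have hlt : 2 * Real.pi / n < δ := by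
      rw [div_lt_iff₀ hδ] at hn
      rw [div_lt_iff₀ hn0]; linarith
    have hnz : (n : ℤ) ≠ 0 := by exact_mod_cast hn0.ne'
    have hk0 := Int.emod_nonneg j hnz
    have hpow : ω ^ (j % n).toNat = ω ^ j := by
      rw [← zpow_natCast, Int.toNat_of_nonneg hk0]
      conv_rhs => rw [← Int.emod_add_mul_ediv j n, zpow_add₀ (Complex.exp_ne_zero _), zpow_mul,
        zpow_natCast, hωn, one_zpow, mul_one]
    refine Finset.prod_eq_zero (i := (j % n).toNat) ?_ ?_
    · rw [Finset.mem_range, Int.toNat_lt hk0]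
      exact Int.emod_lt_of_pos j (by exact_mod_cast hn0)
    · rw [hpow, hω, ← Complex.exp_int_mul, ← Complex.exp_add, sub_eq_zero]
      rw [← h (j * (2 * Real.pi / n) + t) ⟨by linarith, by linarith⟩]
      congr 2; push_cast; ring
  have hgd : DiffContOnCl ℂ g (ball 0 1) := by
    refine ⟨?_, ?_⟩
    · refine DifferentiableOn.fun_finsetProd fun k _ => (hd.comp (by fun_prop) ?_).sub_const p
      intro z hz; rw [mem_ball_zero_iff] at hz ⊢; rwa [hm]
    · rw [closure_ball _ one_ne_zero]
      refine continuousOn_finsetProd _ fun k _ => (hc.comp (by fun_prop) ?_).sub continuousOn_const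
      intro z hz; rw [mem_closedBall_zero_iff] at hz ⊢; rwa [hm]
  have h0 := Complex.norm_le_of_forall_mem_frontier_norm_le isBounded_ball hgd (C := 0)
    (fun z hz => ?_) (subset_closure (mem_ball_self one_pos))
  · rw [norm_le_zero_iff, hg] at h0
    simp only [mul_zero, Finset.prod_const, Finset.card_range] at h0
    exact sub_eq_zero.1 (pow_eq_zero_iff (by exact_mod_cast hnC) |>.1 h0)
  · rw [frontier_ball _ one_ne_zero, mem_sphere_zero_iff_norm] at hz
    rw [hg0 z hz, norm_zero]

theorem injOn_closedBall_of_extension {F : ℂ → ℂ} {V : Set ℂ}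
    (hd : DifferentiableOn ℂ F (ball 0 1)) (hi : InjOn F (ball 0 1))
    (hc : ContinuousOn F (closedBall 0 1)) (him : F '' closedBall 0 1 = closure (F '' ball 0 1))
    (hbd : ∀ ζ, ‖ζ‖ = 1 → F ζ ∉ F '' ball 0 1) (hV : IsOpen V) (hVp : IsPreconnected V)
    (hdis : Disjoint (F '' ball 0 1) V) (hVf : frontier (F '' ball 0 1) ⊆ closure V) :
    InjOn F (closedBall 0 1) := by
  have hUo : IsOpen (F '' ball 0 1) := isOpen_image_of_injOn isOpen_ball hd.continuousOn hi
  have hfr : ∀ ζ, ‖ζ‖ = 1 → F ζ ∈ frontier (F '' ball 0 1) := fun ζ hζ => by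
    rw [hUo.frontier_eq, ← him]
    exact ⟨mem_image_of_mem _ (mem_closedBall_zero_iff.2 hζ.le), hbd ζ hζ⟩
  have hVfr : ∀ w ∈ frontier (F '' ball 0 1), w ∉ V := fun w hw =>
    disjoint_left.1 (hdis.closure_left hV) (frontier_subset_closure hw)
  have hcases : ∀ z ∈ closedBall (0 : ℂ) 1, z ∈ ball (0 : ℂ) 1 ∨ ‖z‖ = 1 := fun z hz => by
    rw [mem_ball_zero_iff]; exact (mem_closedBall_zero_iff.1 hz).lt_or_eq
  suffices hcirc : ∀ ζ₁ ζ₂ : ℂ, ‖ζ₁‖ = 1 → ‖ζ₂‖ = 1 → F ζ₁ = F ζ₂ → ζ₁ = ζ₂ by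
    intro z hz w hw hzw
    rcases hcases z hz with h | h <;> rcases hcases w hw with h' | h'
    · exact hi h h' hzw
    · exact absurd ⟨z, h, hzw⟩ (hbd w h')
    · exact absurd ⟨w, h', hzw.symm⟩ (hbd z h)
    · exact hcirc z w h h' hzw
  intro ζ₁ ζ₂ hζ₁ hζ₂ he
  by_contra hne
  have h0 : (0 : ℂ) ∈ ball (0 : ℂ) 1 := mem_ball_self one_pos
  -- radii
  have hradn : ∀ (t : ℝ) (ζ : ℂ), 0 ≤ t → ‖ζ‖ = 1 → ‖t * ζ‖ = t := fun t ζ ht hζ => by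
    rw [norm_mul, hζ, mul_one, Complex.norm_real, Real.norm_of_nonneg ht]
  have hradc : ∀ ζ : ℂ, ‖ζ‖ = 1 → MapsTo (fun t : ℝ => (t : ℂ) * ζ) (Icc 0 1) (closedBall 0 1) :=
    fun ζ hζ t ht => by rw [mem_closedBall_zero_iff, hradn t ζ ht.1 hζ]; exact ht.2
  have hradb : ∀ (t : ℝ) (ζ : ℂ), 0 ≤ t → t < 1 → ‖ζ‖ = 1 → (t : ℂ) * ζ ∈ ball (0 : ℂ) 1 :=
    fun t ζ ht ht1 hζ => by rwa [mem_ball_zero_iff, hradn t ζ ht hζ]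
  have hinj : ∀ (s t : ℝ) (ζ ζ' : ℂ), s ∈ Icc (0 : ℝ) 1 → t ∈ Icc (0 : ℝ) 1 → ‖ζ‖ = 1 → ‖ζ'‖ = 1 →
      F (s * ζ) = F (t * ζ') → (s : ℂ) * ζ = t * ζ' ∨ s = 1 ∧ t = 1 := by
    intro s t ζ ζ' hs ht hζ hζ' h
    rcases hs.2.lt_or_eq with hs1 | hs1 <;> rcases ht.2.lt_or_eq with ht1 | ht1
    · exact Or.inl (hi (hradb s ζ hs.1 hs1 hζ) (hradb t ζ' ht.1 ht1 hζ') h)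
    · refine absurd ⟨_, hradb s ζ hs.1 hs1 hζ, h⟩ (hbd _ ?_)
      rw [hradn t ζ' ht.1 hζ', ht1]
    · refine absurd ⟨_, hradb t ζ' ht.1 ht1 hζ', h.symm⟩ (hbd _ ?_)
      rw [hradn s ζ hs.1 hζ, hs1]
    · exact Or.inr ⟨hs1, ht1⟩
  set L : ℂ → Set ℂ := fun ζ => (fun t : ℝ => F (t * ζ)) '' Icc 0 1 with hL
  have harc : ∀ ζ : ℂ, ‖ζ‖ = 1 → IsArc (L ζ) (F 0) (F ζ) := by
    intro ζ hζ
    refine ⟨fun t => F (t * ζ), 0, 1, zero_le_one, hc.comp (by fun_prop) (hradc ζ hζ), ?_, by simp,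
      by simp, rfl⟩
    intro s hs t ht hst
    rcases hinj s t ζ ζ hs ht hζ hζ hst with h | h
    · rw [← hradn s ζ hs.1 hζ, h, hradn t ζ ht.1 hζ]
    · rw [h.1, h.2]
  have h₁ := harc ζ₁ hζ₁
  have h₂ := harc ζ₂ hζ₂
  rw [← he] at h₂
  have hint : L ζ₁ ∩ L ζ₂ = {F 0, F ζ₁} := by
    refine subset_antisymm ?_ (pair_subset ⟨h₁.left_mem, h₂.left_mem⟩ ⟨h₁.right_mem, h₂.right_mem⟩)
    rintro _ ⟨⟨s, hs, rfl⟩, t, ht, hst⟩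
    rcases hinj t s ζ₂ ζ₁ ht hs hζ₂ hζ₁ hst with h | h
    · have hts : t = s := by rw [← hradn t ζ₂ ht.1 hζ₂, h, hradn s ζ₁ hs.1 hζ₁]
      subst hts
      have ht0 : (t : ℂ) = 0 := by
        by_contra h'
        exact hne (mul_left_cancel₀ h' h).symm
      left; simp [ht0]
    · right; simp [h.2]
  have huv : F 0 ≠ F ζ₁ := fun h => hbd ζ₁ hζ₁ ⟨0, h0, h⟩
  have hLU : ∀ z ∈ L ζ₁ ∪ L ζ₂, z ∈ F '' ball 0 1 ∨ z = F ζ₁ := by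
    have : ∀ ζ : ℂ, ‖ζ‖ = 1 → ∀ z ∈ L ζ, z ∈ F '' ball 0 1 ∨ z = F ζ := by
      rintro ζ hζ _ ⟨t, ht, rfl⟩
      rcases ht.2.lt_or_eq with h | h
      · exact Or.inl ⟨_, hradb t ζ ht.1 h hζ, rfl⟩
      · right; simp [h]
    rintro z (hz | hz)
    · exact this ζ₁ hζ₁ z hz
    · rw [he]; exact this ζ₂ hζ₂ z hz
  have hVJ : V ⊆ (L ζ₁ ∪ L ζ₂)ᶜ := fun z hz hzJ => by
    rcases hLU z hzJ with h | rfl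
    exacts [disjoint_left.1 hdis h hz, hVfr _ (hfr ζ₁ hζ₁) hz]
  obtain ⟨x, hx⟩ : V.Nonempty := closure_nonempty_iff.1 ⟨_, hVf (hfr ζ₁ hζ₁)⟩
  obtain ⟨y, hy, hyx⟩ : ∃ y ∈ (L ζ₁ ∪ L ζ₂)ᶜ, y ∉ connectedComponentIn (L ζ₁ ∪ L ζ₂)ᶜ x := by
    by_contra! hall
    refine not_isPreconnected_compl_of_inter_eq_pair h₁.isCompact h₂.isCompact
      h₁.isPreconnected h₂.isPreconnected huv hint ?_
    exact subset_antisymm (connectedComponentIn_subset _ x) hall ▸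
      isPreconnected_connectedComponentIn
  have hJcl : IsClosed (L ζ₁ ∪ L ζ₂) := (h₁.isCompact.union h₂.isCompact).isClosed
  set S := connectedComponentIn (L ζ₁ ∪ L ζ₂)ᶜ y with hS
  have hSo : IsOpen S := hJcl.isOpen_compl.connectedComponentIn
  have hSJ : S ⊆ (L ζ₁ ∪ L ζ₂)ᶜ := connectedComponentIn_subset _ _
  have hSV : Disjoint S V := by
    rw [disjoint_left]
    intro z hz hzV
    have h1 := hVp.subset_connectedComponentIn hx hVJ hzV
    refine hyx ?_
    rw [connectedComponentIn_eq h1, ← connectedComponentIn_eq hz]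
    exact mem_connectedComponentIn hy
  have hSf : ∀ z ∈ S, z ∉ frontier (F '' ball 0 1) := fun z hz hzf =>
    disjoint_left.1 (hSV.closure_right hSo) hz (hVf hzf)
  have hxS : x ∉ S := fun h => disjoint_left.1 hSV h hx
  have hhalf : (1 / 2 : ℝ) ∈ Icc (0 : ℝ) 1 := by norm_num
  have hhalfU : F ((1 / 2 : ℝ) * ζ₁) ∈ F '' ball 0 1 :=
    ⟨_, hradb _ ζ₁ (by norm_num) (by norm_num) hζ₁, rfl⟩
  have hmid : F ((1 / 2 : ℝ) * ζ₁) ∈ closure S := by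
    refine mem_closure_connectedComponentIn_compl (x := x) h₁ h₂ hint ⟨_, hhalf, rfl⟩ ?_ ?_
      (hVJ hx) hy hxS
    · intro h
      have := hi h0 (hradb _ ζ₁ (by norm_num) (by norm_num) hζ₁) h
      have h2 := hradn (1 / 2) ζ₁ (by norm_num) hζ₁
      rw [← this, norm_zero] at h2
      norm_num at h2
    · intro h
      exact hbd ζ₁ hζ₁ (h ▸ hhalfU)
  have hSU : S ⊆ F '' ball 0 1 := by
    obtain ⟨z, hz, hz'⟩ := mem_closure_iff.1 hmid _ hUo hhalfU
    refine isPreconnected_connectedComponentIn.subset_of_closure_inter_subset hUo ⟨z, hz', hz⟩ ?_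
    rintro w ⟨hw, hwS⟩
    by_contra hwU
    exact hSf w hwS (by rw [hUo.frontier_eq]; exact ⟨hw, hwU⟩)
  obtain ⟨z₀, hz₀, hzy⟩ := hSU (mem_connectedComponentIn hy)
  have hz₀n : z₀ ≠ 0 := by
    rintro rfl
    exact hy (Or.inl (hzy ▸ h₁.left_mem))
  -- a sector around the direction of `z₀`
  have hz₀1 : ‖z₀‖ < 1 := mem_ball_zero_iff.1 hz₀
  have hexp : ∀ t : ℝ, ‖Complex.exp (t * Complex.I)‖ = 1 := Complex.norm_exp_ofReal_mul_I
  have hz₀e : (‖z₀‖ : ℂ) * Complex.exp (z₀.arg * Complex.I) = z₀ :=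
    Complex.norm_mul_exp_arg_mul_I z₀
  have hdir : ∀ ζ : ℂ, F z₀ ∉ L ζ → Complex.exp (z₀.arg * Complex.I) ≠ ζ := by
    rintro _ h rfl
    exact h ⟨‖z₀‖, ⟨norm_nonneg _, hz₀1.le⟩, by simp only [hz₀e]⟩
  have hyn : F z₀ ∉ L ζ₁ ∧ F z₀ ∉ L ζ₂ := by
    rw [hzy]; exact not_or.1 hy
  have hcont : Continuous fun t : ℝ => Complex.exp (t * Complex.I) := by fun_prop
  obtain ⟨δ, hδ, hδb⟩ := Metric.mem_nhds_iff.1 (((hcont.continuousAt (x := z₀.arg)).eventually_ne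
    (hdir ζ₁ hyn.1)).and ((hcont.continuousAt (x := z₀.arg)).eventually_ne (hdir ζ₂ hyn.2)))
  rw [Real.ball_eq_Ioo] at hδb
  set T : Set (ℝ × ℝ) := Ioo 0 1 ×ˢ Ioo (z₀.arg - δ) (z₀.arg + δ) with hT
  have hTb : MapsTo (fun q : ℝ × ℝ => (q.1 : ℂ) * Complex.exp (q.2 * Complex.I)) T (ball 0 1) :=
    fun q hq => hradb _ _ hq.1.1.le hq.1.2 (hexp _)
  have hTS : (fun q : ℝ × ℝ => F (q.1 * Complex.exp (q.2 * Complex.I))) '' T ⊆ S := by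
    refine IsPreconnected.subset_connectedComponentIn ?_ ⟨(‖z₀‖, z₀.arg),
      ⟨⟨norm_pos_iff.2 hz₀n, hz₀1⟩, by simp [hδ]⟩, ?_⟩ ?_
    · exact (isPreconnected_Ioo.prod isPreconnected_Ioo).image _
        (hd.continuousOn.comp (by fun_prop) hTb)
    · simp only [hz₀e, hzy]
    · have : ∀ ζ : ℂ, ‖ζ‖ = 1 → ∀ q ∈ T, Complex.exp (q.2 * Complex.I) ≠ ζ →
          F (q.1 * Complex.exp (q.2 * Complex.I)) ∉ L ζ := by
        rintro ζ hζ q hq hqζ ⟨t, ht, htq⟩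
        rcases hinj t q.1 ζ _ ht (Ioo_subset_Icc_self hq.1) hζ (hexp _) htq with h | h
        · have htq' : t = q.1 := by
            rw [← hradn t ζ ht.1 hζ, h, hradn q.1 _ hq.1.1.le (hexp _)]
          rw [htq'] at h
          exact hqζ (mul_left_cancel₀ (Complex.ofReal_ne_zero.2 hq.1.1.ne') h).symm
        · exact hq.1.2.ne h.2
      rintro _ ⟨q, hq, rfl⟩ (h | h)
      · exact this ζ₁ hζ₁ q hq (hδb hq.2).1 h
      · exact this ζ₂ hζ₂ q hq (hδb hq.2).2 h
  refine hbd ζ₁ hζ₁ ⟨0, h0, apply_zero_eq_of_eqOn_arc (θ := z₀.arg) hd hc hδ fun t ht => ?_⟩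
  have hlim : F (Complex.exp (t * Complex.I)) ∈ closure S := by
    have h1 : ContinuousOn (fun s : ℝ => F (s * Complex.exp (t * Complex.I))) (Icc 0 1) :=
      hc.comp (by fun_prop) (hradc _ (hexp t))
    have h2 := (h1 1 (right_mem_Icc.2 zero_le_one)).mono Ioo_subset_Icc_self |>.mem_closure
      (t := S) (by rw [closure_Ioo zero_ne_one]; exact right_mem_Icc.2 zero_le_one)
      (fun s hs => hTS ⟨(s, t), ⟨hs, ht⟩, rfl⟩)
    simpa using h2
  have hnS : F (Complex.exp (t * Complex.I)) ∉ S := fun h => hSf _ h (hfr _ (hexp t))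
  have hJ : F (Complex.exp (t * Complex.I)) ∈ L ζ₁ ∪ L ζ₂ :=
    frontier_connectedComponentIn_subset hJcl y (by rw [hSo.frontier_eq]; exact ⟨hlim, hnS⟩)
  exact (hLU _ hJ).resolve_left (hbd _ (hexp t))

theorem nonempty_homeomorph_closedBall_of_arcAccessible {D : Set ℂ} (hD : IsCompact D)
    (hne : (interior D).Nonempty) (hU : IsPreconnected (interior D)) (hV : IsPreconnected Dᶜ)
    (hUa : ∀ w ∈ frontier D, ArcAccessible (interior D) w)
    (hVa : ∀ w ∈ frontier D, ArcAccessible Dᶜ w) : Nonempty (D ≃ₜ closedBall (0 : ℂ) 1) := by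
  have hDc : closure (interior D) = D := by
    refine subset_antisymm (closure_minimal interior_subset hD.isClosed) fun w hw => ?_
    by_cases hwi : w ∈ interior D
    · exact subset_closure hwi
    · exact (hUa w (by rw [hD.isClosed.frontier_eq]; exact ⟨hw, hwi⟩)).mem_closure
  have hfr : frontier (interior D) = frontier D := by
    rw [isOpen_interior.frontier_eq, hD.isClosed.frontier_eq, hDc]
  have hUc : IsPreconnected (interior D)ᶜ := by
    rw [← closure_compl]; exact hV.closure
  have hb : Bornology.IsBounded (interior D) := hD.isBounded.subset interior_subset
  obtain ⟨z₀, hz₀⟩ := hne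
  obtain ⟨f, hd, hi, him, -⟩ := exists_riemann_map isOpen_interior hU hb
    (allLogs_of_isOpen isOpen_interior hU hb hUc) hz₀
  have hdis : Disjoint (f '' ball 0 1) Dᶜ := by
    rw [him]; exact disjoint_compl_right_iff_subset.2 interior_subset
  rw [← hfr, ← him] at hUa hVa
  obtain ⟨F, hFc, hFf, hFi, hFb⟩ := exists_continuousOn_closedBall_extension hd.continuousOn hi
    fun ζ hζ => exists_tendsto_of_arcAccessible hd hi (him ▸ hb) hD.isClosed.isOpen_compl hV hdis
      hUa hVa hζ
  have himF : F '' ball 0 1 = f '' ball 0 1 := hFf.image_eq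
  rw [← himF] at hFi hFb hdis hVa
  have hinj := injOn_closedBall_of_extension (hd.congr hFf) (hFf.injOn_iff.2 hi) hFc hFi hFb
    hD.isClosed.isOpen_compl hV hdis fun w hw => (hVa w hw).mem_closure
  rw [himF, him, hDc] at hFi
  have : CompactSpace (closedBall (0 : ℂ) 1) := isCompact_iff_compactSpace.1
    (isCompact_closedBall 0 1)
  let e : closedBall (0 : ℂ) 1 ≃ D := (BijOn.mk (hFi ▸ mapsTo_image _ _) hinj
    (by rw [SurjOn, hFi])).equiv F
  have he : Continuous e := Continuous.subtype_mk (continuousOn_iff_continuous_domRestrict.1 hFc) _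
  exact ⟨(he.homeoOfEquivCompactToT2).symm⟩

/-- A bounded injective analytic function on the disk has boundary limits if its image is locally
connected at the boundary. -/
theorem exists_tendsto_of_locallyConnected_frontier {f : ℂ → ℂ}
    (hd : DifferentiableOn ℂ f (ball 0 1)) (hi : InjOn f (ball 0 1))
    (hb : Bornology.IsBounded (f '' ball 0 1))
    (hlc : ∀ w ∈ frontier (f '' ball 0 1), ∀ ε > 0, ∃ δ > 0, ∀ p ∈ f '' ball 0 1 ∩ ball w δ,
      ∀ q ∈ f '' ball 0 1 ∩ ball w δ, ∃ S, IsPreconnected S ∧ p ∈ S ∧ q ∈ S ∧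
        S ⊆ f '' ball 0 1 ∩ ball w ε) {ζ : ℂ} (hζ : ‖ζ‖ = 1) :
    ∃ p, Tendsto f (𝓝[ball 0 1] ζ) (𝓝 p) := by
  have hc := hd.continuousOn
  have hUo : IsOpen (f '' ball 0 1) := isOpen_image_of_injOn isOpen_ball hc hi
  obtain ⟨p, hp⟩ := exists_forall_image_arc_subset_ball hd hi hb hζ
  refine ⟨p, ?_⟩
  by_contra hlim
  obtain ⟨d, hd0, hw⟩ := exists_dist_eq_forall_mem_closure hc hb hζ hp hlim
  obtain ⟨w, hwp, hwc⟩ := hw (d / 2) ⟨by linarith, by linarith⟩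
  have hwU := notMem_image_of_forall_mem_closure hc hi hζ hwc
  have hwcl : w ∈ closure (f '' ball 0 1) :=
    closure_mono (image_mono inter_subset_left) (hwc 1 one_pos)
  obtain ⟨δ, hδ, hS⟩ := hlc w (by rw [hUo.frontier_eq]; exact ⟨hwcl, hwU⟩) (d / 4) (by linarith)
  obtain ⟨_, hz₀w, z₀, hz₀, rfl⟩ := mem_closure_iff.1 hwcl _ isOpen_ball (mem_ball_self hδ)
  have hz₀ζ : 0 < dist z₀ ζ := dist_pos.2 <| by
    rintro rfl
    rw [mem_ball_zero_iff, hζ] at hz₀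
    exact lt_irrefl _ hz₀
  obtain ⟨r, hr, hrb⟩ := hp (d / 4) (by linarith) _ hz₀ζ
  obtain ⟨_, hz₁w, z₁, hz₁, rfl⟩ := mem_closure_iff.1 (hwc r hr.1) _ isOpen_ball (mem_ball_self hδ)
  obtain ⟨S, hSp, h₀, h₁, hSs⟩ := hS _ ⟨⟨z₀, hz₀, rfl⟩, hz₀w⟩ _ ⟨⟨z₁, hz₁.1, rfl⟩, hz₁w⟩
  obtain ⟨z, hz, hzz⟩ := subset_image_sdiff_closedBall hc hi hSp (hSs.trans inter_subset_left)
    (fun y hy hyr hyS => by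
      have h1 := mem_ball.1 (hrb y hy hyr)
      have h2 := mem_ball.1 (hSs hyS).2
      have h3 := dist_triangle_left w p (f y)
      linarith) hz₀ h₀ hr.2 h₁
  rw [hi hz.1 hz₁.1 hzz] at hz
  exact hz.2 (ball_subset_closedBall hz₁.2)

/-- A domain whose boundary lies on a disjoint simple closed curve is locally connected at the
points of the curve. -/
theorem locallyConnected_of_frontier_subset_image_sphere {k : ℂ → ℂ} {U : Set ℂ}
    (hc : ContinuousOn k (sphere 0 1)) (hi : InjOn k (sphere 0 1)) (hU : IsOpen U)
    (hUp : IsPreconnected U) (hd : Disjoint U (k '' sphere 0 1))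
    (hfr : frontier U ⊆ k '' sphere 0 1) {w : ℂ} (hw : w ∈ k '' sphere 0 1) {ε : ℝ} (hε : 0 < ε) :
    ∃ δ > 0, ∀ p ∈ U ∩ ball w δ, ∀ q ∈ U ∩ ball w δ, ∃ S, IsPreconnected S ∧ p ∈ S ∧ q ∈ S ∧
      S ⊆ U ∩ ball w ε := by
  obtain ⟨ξ, hξ, rfl⟩ := hw
  rw [mem_sphere_zero_iff_norm] at hξ
  have hm : ∀ t : ℝ, ξ * Complex.exp (t * Complex.I) ∈ sphere (0 : ℂ) 1 := fun t => by
    simp [hξ, Complex.norm_exp_ofReal_mul_I]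
  have hg : Continuous fun t : ℝ => k (ξ * Complex.exp (t * Complex.I)) :=
    hc.comp_continuous (by fun_prop) hm
  obtain ⟨α, hα, hαb⟩ := Metric.continuous_iff.1 hg 0 ε hε
  simp only [Complex.ofReal_zero, zero_mul, Complex.exp_zero, mul_one, Real.dist_0_eq_abs] at hαb
  set B := (fun t : ℝ => k (ξ * Complex.exp (t * Complex.I))) ''
    Icc (min α Real.pi) (2 * Real.pi - min α Real.pi) with hB
  have hα' : 0 < min α Real.pi := lt_min hα Real.pi_pos
  have hBc : IsCompact B := isCompact_Icc.image hg
  have hξB : k ξ ∉ B := by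
    rintro ⟨t, ht, htξ⟩
    have h1 := hi (hm t) (mem_sphere_zero_iff_norm.2 hξ) htξ
    have h2 : Complex.exp (t * Complex.I) = 1 :=
      mul_left_cancel₀ (norm_ne_zero_iff.1 (by rw [hξ]; exact one_ne_zero))
        (h1.trans (mul_one ξ).symm)
    obtain ⟨n, hn⟩ := Complex.exp_eq_one_iff.1 h2
    have h3 : t = n * (2 * Real.pi) := by
      have : (t : ℂ) = n * (2 * Real.pi) :=
        mul_right_cancel₀ Complex.I_ne_zero (hn.trans (by ring))
      exact_mod_cast this
    have h4 : (0 : ℝ) < n := by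
      have : 0 < n * (2 * Real.pi) := h3 ▸ hα'.trans_le ht.1
      exact pos_of_mul_pos_left this Real.two_pi_pos.le
    have h5 : (n : ℝ) < 1 := by
      have : n * (2 * Real.pi) < 2 * Real.pi := by rw [← h3]; linarith [ht.2]
      nlinarith [Real.pi_pos]
    have h6 : 0 < n := by exact_mod_cast h4
    have h7 : n < 1 := by exact_mod_cast h5
    omega
  have hcover : k '' sphere 0 1 ⊆ B ∪ ball (k ξ) ε := by
    rintro _ ⟨z, hz, rfl⟩
    rw [mem_sphere_zero_iff_norm] at hz
    have hξ0 : ξ ≠ 0 := norm_ne_zero_iff.1 (by rw [hξ]; exact one_ne_zero)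
    have hze : ξ * Complex.exp ((z / ξ).arg * Complex.I) = z := by
      have := Complex.norm_mul_exp_arg_mul_I (z / ξ)
      rw [norm_div, hz, hξ, div_one, Complex.ofReal_one, one_mul] at this
      rw [this, mul_div_cancel₀ _ hξ0]
    have h1 := Complex.neg_pi_lt_arg (z / ξ)
    have h2 := Complex.arg_le_pi (z / ξ)
    set t := (z / ξ).arg
    have hmin := min_le_right α Real.pi
    rcases lt_or_ge |t| (min α Real.pi) with h | h
    · right
      rw [mem_ball, ← hze]
      exact hαb t (h.trans_le (min_le_left _ _))
    · left
      rcases le_abs.1 h with h | h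
      · exact ⟨t, ⟨h, by linarith⟩, by simp only [hze]⟩
      · refine ⟨t + 2 * Real.pi, ⟨by linarith, by linarith⟩, ?_⟩
        have : Complex.exp (((t + 2 * Real.pi : ℝ) : ℂ) * Complex.I) =
            Complex.exp (t * Complex.I) := by
          push_cast
          rw [add_mul, Complex.exp_add, Complex.exp_two_pi_mul_I, mul_one]
        simp only [this, hze]
  obtain ⟨δ, hδ, hδB⟩ := Metric.isOpen_iff.1 hBc.isClosed.isOpen_compl (k ξ) hξB
  refine ⟨min δ ε, lt_min hδ hε, fun p hp q hq => ?_⟩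
  obtain ⟨S, hS, hpS, hqS, hSε, hSA⟩ := exists_isPreconnected_subset_ball
    ((isCompact_sphere (0 : ℂ) 1).image_of_continuousOn hc) hBc
    (image_subset_iff.2 fun t _ => mem_image_of_mem k (hm t))
    (isPreconnected_Icc.image _ hg.continuousOn)
    hUp hd hcover (min_le_right δ ε)
    (disjoint_left.2 fun z hz => hδB (ball_subset_ball (min_le_left _ _) hz)) hp.1 hq.1 hp.2 hq.2
  refine ⟨S, hS, hpS, hqS, subset_inter ?_ hSε⟩
  refine hS.subset_of_closure_inter_subset hU ⟨p, hpS, hp.1⟩ ?_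
  rintro z ⟨hz, hzS⟩
  by_contra hzU
  exact disjoint_left.1 hSA hzS (hfr (by rw [hU.frontier_eq]; exact ⟨hz, hzU⟩))

theorem image_ball_subset_interior {h : ℂ → ℂ} (hc : ContinuousOn h (closedBall 0 1))
    (hi : InjOn h (closedBall 0 1)) : h '' ball 0 1 ⊆ interior (h '' closedBall 0 1) :=
  interior_maximal (image_mono ball_subset_closedBall) (isOpen_image_ball hc hi)

theorem exists_eq_of_mem_frontier_image_closedBall {h : ℂ → ℂ}
    (hc : ContinuousOn h (closedBall 0 1)) (hi : InjOn h (closedBall 0 1)) {w : ℂ}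
    (hw : w ∈ frontier (h '' closedBall 0 1)) : ∃ ζ : ℂ, ‖ζ‖ = 1 ∧ h ζ = w := by
  rw [((isCompact_closedBall (0 : ℂ) 1).image_of_continuousOn hc).isClosed.frontier_eq] at hw
  obtain ⟨⟨ζ, hζ, rfl⟩, hn⟩ := hw
  refine ⟨ζ, (mem_closedBall_zero_iff.1 hζ).eq_of_not_lt fun hlt => hn ?_, rfl⟩
  exact image_ball_subset_interior hc hi ⟨ζ, mem_ball_zero_iff.2 hlt, rfl⟩

theorem isPreconnected_interior_image_closedBall {h : ℂ → ℂ}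
    (hc : ContinuousOn h (closedBall 0 1)) (hi : InjOn h (closedBall 0 1)) :
    IsPreconnected (interior (h '' closedBall 0 1)) := by
  refine ((convex_ball (0 : ℂ) 1).isPreconnected.image h (hc.mono ball_subset_closedBall)
    ).subset_closure (image_ball_subset_interior hc hi) (interior_subset.trans ?_)
  rw [← closure_ball (0 : ℂ) one_ne_zero] at hc ⊢
  exact hc.image_closure

theorem accessible_interior_image_closedBall {h : ℂ → ℂ} (hc : ContinuousOn h (closedBall 0 1))
    (hi : InjOn h (closedBall 0 1)) {w : ℂ} (hw : w ∈ frontier (h '' closedBall 0 1)) :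
    Accessible (interior (h '' closedBall 0 1)) w := by
  obtain ⟨ζ, hζ, rfl⟩ := exists_eq_of_mem_frontier_image_closedBall hc hi hw
  have hn : ∀ t : unitInterval, ‖((t : ℝ) : ℂ) * ζ‖ = t := fun t => by
    rw [norm_mul, hζ, mul_one, Complex.norm_real, Real.norm_of_nonneg t.2.1]
  have hm : ∀ t : unitInterval, ((t : ℝ) : ℂ) * ζ ∈ closedBall (0 : ℂ) 1 := fun t => by
    rw [mem_closedBall_zero_iff, hn]; exact t.2.2
  have hU : ∀ t : unitInterval, (t : ℝ) < 1 →
      h ((t : ℝ) * ζ) ∈ interior (h '' closedBall 0 1) := fun t ht =>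
    image_ball_subset_interior hc hi ⟨_, by rwa [mem_ball_zero_iff, hn], rfl⟩
  have hcl : h '' closedBall 0 1 ⊆ closure (interior (h '' closedBall 0 1)) := by
    refine Subset.trans ?_ (closure_mono (image_ball_subset_interior hc hi))
    rw [← closure_ball (0 : ℂ) one_ne_zero] at hc ⊢
    exact hc.image_closure
  refine ⟨fun t => h ((t : ℝ) * ζ), hc.comp_continuous (by fun_prop) hm, fun s t hst => ?_,
    fun t => hcl (mem_image_of_mem _ (hm t)), hU, by simp⟩
  have := hi (hm s) (hm t) hst
  exact Subtype.ext (by rw [← hn s, this, hn t])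

theorem isPreconnected_closedBall_sdiff_zero : IsPreconnected (closedBall (0 : ℂ) 1 \ {0}) := by
  have : closedBall (0 : ℂ) 1 \ {0} =
      (fun q : ℝ × ℝ => (q.1 : ℂ) * Complex.exp (q.2 * Complex.I)) '' Ioc 0 1 ×ˢ univ := by
    ext z
    constructor
    · rintro ⟨hz, hz0⟩
      exact ⟨(‖z‖, z.arg), ⟨⟨norm_pos_iff.2 hz0, mem_closedBall_zero_iff.1 hz⟩, mem_univ _⟩,
        Complex.norm_mul_exp_arg_mul_I z⟩
    · rintro ⟨q, ⟨hq, -⟩, rfl⟩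
      refine ⟨?_, mul_ne_zero (Complex.ofReal_ne_zero.2 hq.1.ne') (Complex.exp_ne_zero _)⟩
      rw [mem_closedBall_zero_iff, norm_mul, Complex.norm_exp_ofReal_mul_I, mul_one,
        Complex.norm_real, Real.norm_of_nonneg hq.1.le]
      exact hq.2
  rw [this]
  exact (isPreconnected_Ioc.prod isPreconnected_univ).image _ (by fun_prop)

/-- Inversion turns the complement of a disk, together with the point at infinity, into a bounded
simply connected domain. -/
theorem exists_riemann_map_compl {D : Set ℂ} (hD : IsCompact D) {c : ℂ} (hc : c ∈ interior D)
    (hDc : IsPreconnected Dᶜ) (hDp : IsPreconnected (D \ {c})) :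
    ∃ f : ℂ → ℂ, DifferentiableOn ℂ f (ball 0 1) ∧ InjOn f (ball 0 1) ∧
      f '' ball 0 1 = insert 0 ((fun z => (z - c)⁻¹) '' Dᶜ) ∧ f 0 = 0 ∧
      Bornology.IsBounded (f '' ball 0 1) := by
  have hinj : Function.Injective fun z : ℂ => (z - c)⁻¹ := fun z w h =>
    sub_left_injective (inv_injective h)
  have hsurj : Function.Surjective fun z : ℂ => (z - c)⁻¹ := fun w => ⟨w⁻¹ + c, by simp⟩
  have hcD : ∀ z ∈ Dᶜ, z - c ≠ 0 := fun z hz h =>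
    hz (sub_eq_zero.1 h ▸ interior_subset hc)
  have hcont : ContinuousOn (fun z => (z - c)⁻¹) Dᶜ := ContinuousOn.inv₀ (by fun_prop) hcD
  have hcont' : ContinuousOn (fun z => (z - c)⁻¹) (D \ {c}) :=
    ContinuousOn.inv₀ (by fun_prop) fun z hz => sub_ne_zero.2 hz.2
  obtain ⟨R, hR, hDR⟩ := hD.isBounded.subset_ball_lt 0 c
  obtain ⟨ρ, hρ, hρD⟩ := Metric.isOpen_iff.1 isOpen_interior c hc
  have hout : ∀ v : ℂ, v ≠ 0 → ‖v‖ < R⁻¹ → v ∈ (fun z => (z - c)⁻¹) '' Dᶜ := by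
    intro v hv hvR
    refine ⟨v⁻¹ + c, fun h => ?_, by simp⟩
    have := hDR h
    rw [mem_ball, dist_eq_norm, add_sub_cancel_right, norm_inv] at this
    exact ((inv_lt_comm₀ (norm_pos_iff.2 hv) hR).1 this).not_gt hvR
  have hopen : IsOpen (insert 0 ((fun z => (z - c)⁻¹) '' Dᶜ)) := by
    have h1 := isOpen_image_of_injOn hD.isClosed.isOpen_compl hcont hinj.injOn
    have : insert 0 ((fun z => (z - c)⁻¹) '' Dᶜ) = ball 0 R⁻¹ ∪ (fun z => (z - c)⁻¹) '' Dᶜ := by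
      refine subset_antisymm (insert_subset (Or.inl (mem_ball_self (inv_pos.2 hR)))
        subset_union_right) (union_subset (fun v hv => ?_) (subset_insert _ _))
      rcases eq_or_ne v 0 with rfl | h
      exacts [Or.inl rfl, Or.inr (hout v h (mem_ball_zero_iff.1 hv))]
    rw [this]
    exact isOpen_ball.union h1
  have hpre : IsPreconnected (insert 0 ((fun z => (z - c)⁻¹) '' Dᶜ)) := by
    refine (hDc.image _ hcont).subset_closure (subset_insert _ _) (insert_subset ?_ subset_closure)
    refine closure_mono (s := ball 0 R⁻¹ \ {0}) (fun v hv => hout v hv.2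
      (mem_ball_zero_iff.1 hv.1)) ?_
    have : (0 : ℂ) ∈ closure {0}ᶜ := by simp
    exact isOpen_ball.inter_closure ⟨mem_ball_self (inv_pos.2 hR), this⟩
  have hbdd : Bornology.IsBounded (insert 0 ((fun z => (z - c)⁻¹) '' Dᶜ)) := by
    refine (isBounded_closedBall (x := (0 : ℂ)) (r := ρ⁻¹)).subset (insert_subset
      (mem_closedBall_self (inv_pos.2 hρ).le) ?_)
    rintro _ ⟨z, hz, rfl⟩
    rw [mem_closedBall_zero_iff, norm_inv]
    refine inv_anti₀ hρ (le_of_not_gt fun h => hz (interior_subset (hρD ?_)))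
    rwa [mem_ball, dist_eq_norm]
  have hcompl : (insert 0 ((fun z => (z - c)⁻¹) '' Dᶜ))ᶜ = (fun z => (z - c)⁻¹) '' (D \ {c}) := by
    have : D \ {c} = (insert c Dᶜ)ᶜ := by ext; simp [and_comm]
    rw [this, image_compl_eq (s := insert c Dᶜ) ⟨hinj, hsurj⟩, image_insert_eq, sub_self, inv_zero]
  obtain ⟨f, hd, hi, him, hf0⟩ := exists_riemann_map hopen hpre hbdd
    (allLogs_of_isOpen hopen hpre hbdd (hcompl ▸ hDp.image _ hcont')) (mem_insert _ _)
  exact ⟨f, hd, hi, him, hf0, him ▸ hbdd⟩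

theorem accessible_compl_image_closedBall {h : ℂ → ℂ} (hc : ContinuousOn h (closedBall 0 1))
    (hi : InjOn h (closedBall 0 1)) {w : ℂ} (hw : w ∈ frontier (h '' closedBall 0 1)) :
    Accessible (h '' closedBall 0 1)ᶜ w := by
  set D := h '' closedBall 0 1 with hDdef
  have hD : IsCompact D := (isCompact_closedBall (0 : ℂ) 1).image_of_continuousOn hc
  have hDc : IsPreconnected Dᶜ := isPreconnected_compl_of_allLogs hD
    (allLogs_closedBall.image (isCompact_closedBall 0 1) hc hi)
  have h0 : (0 : ℂ) ∈ closedBall (0 : ℂ) 1 := mem_closedBall_self zero_le_one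
  have hcD : h 0 ∈ interior D := image_ball_subset_interior hc hi ⟨0, mem_ball_self one_pos, rfl⟩
  set k : ℂ → ℂ := fun z => (z - h 0)⁻¹ with hk
  have hkinj : Function.Injective k := fun z w h => sub_left_injective (inv_injective h)
  have hkc : ∀ z, z ≠ h 0 → ContinuousAt k z := fun z hz =>
    ContinuousAt.inv₀ (by fun_prop) (sub_ne_zero.2 hz)
  have hne : ∀ z ∈ closedBall (0 : ℂ) 1, z ≠ 0 → h z ≠ h 0 := fun z hz hz0 he => hz0 (hi hz h0 he)
  have hD0 : D \ {h 0} = h '' (closedBall 0 1 \ {0}) := by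
    rw [hi.image_sdiff_subset (singleton_subset_iff.2 h0), image_singleton]
  obtain ⟨f, hd, hfi, him, hf0, hb⟩ := exists_riemann_map_compl hD hcD hDc (by
    rw [hD0]; exact isPreconnected_closedBall_sdiff_zero.image _ (hc.mono sdiff_subset))
  have hUo : IsOpen (f '' ball 0 1) := isOpen_image_of_injOn isOpen_ball hd.continuousOn hfi
  have hUp : IsPreconnected (f '' ball 0 1) :=
    (convex_ball (0 : ℂ) 1).isPreconnected.image f hd.continuousOn
  have hkU : ∀ z, k z ∈ f '' ball 0 1 ↔ z = h 0 ∨ z ∉ D := fun z => by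
    rw [him, mem_insert_iff, hkinj.mem_set_image, mem_compl_iff]
    simp [hk, sub_eq_zero]
  have hs0 : ∀ ζ ∈ sphere (0 : ℂ) 1, h ζ ≠ h 0 := fun ζ hζ =>
    hne ζ (sphere_subset_closedBall hζ) (ne_zero_of_mem_unit_sphere ⟨ζ, hζ⟩)
  have hkhc : ContinuousOn (k ∘ h) (sphere 0 1) := fun ζ hζ =>
    (hkc _ (hs0 ζ hζ)).comp_continuousWithinAt (hc.mono sphere_subset_closedBall ζ hζ)
  have hdis : Disjoint (f '' ball 0 1) ((k ∘ h) '' sphere 0 1) := by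
    rw [disjoint_right]
    rintro _ ⟨ζ, hζ, rfl⟩ hU
    rcases (hkU _).1 hU with h' | h'
    exacts [hs0 ζ hζ h', h' (mem_image_of_mem h (sphere_subset_closedBall hζ))]
  have hfr : frontier (f '' ball 0 1) ⊆ (k ∘ h) '' sphere 0 1 := by
    rw [hUo.frontier_eq]
    rintro v ⟨hv, hvU⟩
    obtain ⟨z, rfl⟩ : ∃ z, k z = v := ⟨v⁻¹ + h 0, by simp [hk]⟩
    rw [hkU, not_or, not_not] at hvU
    obtain ⟨ζ, hζ, rfl⟩ := hvU.2
    refine ⟨ζ, ?_, rfl⟩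
    by_contra hζ'
    have hζb : ζ ∈ ball (0 : ℂ) 1 := by
      rw [mem_ball_zero_iff]
      rw [mem_sphere_zero_iff_norm] at hζ'
      exact lt_of_le_of_ne (mem_closedBall_zero_iff.1 hζ) hζ'
    have hO : IsOpen (interior D \ {h 0}) := isOpen_interior.sdiff isClosed_singleton
    have hkO : IsOpen (k '' (interior D \ {h 0})) := isOpen_image_of_injOn hO
      (fun z hz => (hkc z hz.2).continuousWithinAt) hkinj.injOn
    obtain ⟨_, ⟨z, hz, rfl⟩, hzU⟩ := mem_closure_iff.1 hv _ hkO
      ⟨h ζ, ⟨image_ball_subset_interior hc hi ⟨ζ, hζb, rfl⟩, hvU.1⟩, rfl⟩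
    rcases (hkU z).1 hzU with h' | h'
    exacts [hz.2 h', h' (interior_subset hz.1)]
  obtain ⟨F, hFc, hFf, hFi, hFb⟩ := exists_continuousOn_closedBall_extension hd.continuousOn hfi
    fun ζ hζ => exists_tendsto_of_locallyConnected_frontier hd hfi hb (fun v hv ε hε =>
      locallyConnected_of_frontier_subset_image_sphere hkhc
        (hkinj.comp_injOn (hi.mono sphere_subset_closedBall)) hUo hUp hdis hfr (hfr hv) hε) hζ
  have hwD : w ∈ D := hD.isClosed.frontier_subset hw
  have hw0 : w ≠ h 0 := by
    rintro rfl
    exact hw.2 hcD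
  have hwc : k w ∈ closure (f '' ball 0 1) := by
    have hwc : w ∈ closure Dᶜ := (frontier_compl D ▸ hw).1
    refine closure_mono ?_ ((hkc w hw0).continuousWithinAt.mem_closure_image hwc)
    rintro _ ⟨z, hz, rfl⟩
    exact (hkU z).2 (Or.inr hz)
  have hwU : k w ∉ f '' ball 0 1 := fun h' => by
    rcases (hkU w).1 h' with h' | h'
    exacts [hw0 h', h' hwD]
  rw [← hFi] at hwc
  obtain ⟨ζ, hζ, hFw⟩ := hwc
  have hζ1 : ‖ζ‖ = 1 := by
    refine (mem_closedBall_zero_iff.1 hζ).eq_of_not_lt fun hlt => hwU ?_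
    rw [← mem_ball_zero_iff] at hlt
    exact ⟨ζ, hlt, by rw [← hFw, hFf hlt]⟩
  set ρ : unitInterval → ℝ := fun t => (1 + t) / 2 with hρ
  have hn : ∀ t, ‖(ρ t : ℂ) * ζ‖ = ρ t := fun t => by
    rw [norm_mul, hζ1, mul_one, Complex.norm_real,
      Real.norm_of_nonneg (by simp only [hρ]; linarith [t.2.1])]
  have hm : ∀ t, (ρ t : ℂ) * ζ ∈ closedBall (0 : ℂ) 1 := fun t => by
    rw [mem_closedBall_zero_iff, hn]; simp only [hρ]; linarith [t.2.2]
  have hmb : ∀ t : unitInterval, (t : ℝ) < 1 → (ρ t : ℂ) * ζ ∈ ball (0 : ℂ) 1 := fun t ht => by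
    rw [mem_ball_zero_iff, hn]; simp only [hρ]; linarith
  have hρ1 : ∀ t : unitInterval, ¬ (t : ℝ) < 1 → (ρ t : ℂ) * ζ = ζ := fun t ht => by
    have : (t : ℝ) = 1 := le_antisymm t.2.2 (not_lt.1 ht)
    simp [hρ, this]
  have hFζ : F ζ ∉ f '' ball 0 1 := hFb ζ hζ1
  have hFζ0 : F ζ ≠ 0 := fun h' => hFζ ⟨0, mem_ball_self one_pos, by rw [hf0, h']⟩
  have hF0 : ∀ t, F (ρ t * ζ) ≠ 0 := by
    intro t
    by_cases ht : (t : ℝ) < 1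
    · rw [hFf (hmb t ht), ← hf0]
      intro h'
      have h1 := hn t
      rw [hfi (hmb t ht) (mem_ball_self one_pos) h', norm_zero] at h1
      simp only [hρ] at h1
      linarith [t.2.1]
    · rwa [hρ1 t ht]
  have hV : ∀ t : unitInterval, (t : ℝ) < 1 → (F (ρ t * ζ))⁻¹ + h 0 ∈ Dᶜ := by
    intro t ht
    have h1 : k ((F (ρ t * ζ))⁻¹ + h 0) ∈ f '' ball 0 1 := by
      simp only [hk, add_sub_cancel_right, inv_inv]
      exact ⟨_, hmb t ht, (hFf (hmb t ht)).symm⟩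
    refine ((hkU _).1 h1).resolve_left fun h' => ?_
    exact hF0 t (inv_eq_zero.1 (add_eq_right.1 h'))
  have h1w : (F (ρ 1 * ζ))⁻¹ + h 0 = w := by
    rw [hρ1 1 (by simp), hFw]; simp [hk]
  refine ⟨fun t => (F (ρ t * ζ))⁻¹ + h 0, ?_, ?_, ?_, hV, h1w⟩
  · refine Continuous.add (Continuous.inv₀ (hFc.comp_continuous (by fun_prop) hm) hF0)
      continuous_const
  · intro s t hst
    have hst' : F (ρ s * ζ) = F (ρ t * ζ) := inv_injective (add_left_injective _ hst)
    by_cases hs : (s : ℝ) < 1 <;> by_cases ht : (t : ℝ) < 1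
    · rw [hFf (hmb s hs), hFf (hmb t ht)] at hst'
      have h1 := hfi (hmb s hs) (hmb t ht) hst'
      have h2 : ρ s = ρ t := by rw [← hn s, h1, hn t]
      exact Subtype.ext (by simp only [hρ] at h2; linarith)
    · rw [hFf (hmb s hs), hρ1 t ht] at hst'
      exact absurd ⟨_, hmb s hs, hst'⟩ hFζ
    · rw [hFf (hmb t ht), hρ1 s hs] at hst'
      exact absurd ⟨_, hmb t ht, hst'.symm⟩ hFζ
    · exact Subtype.ext ((le_antisymm s.2.2 (not_lt.1 hs)).trans
        (le_antisymm t.2.2 (not_lt.1 ht)).symm)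
  · intro t
    by_cases ht : (t : ℝ) < 1
    · exact subset_closure (hV t ht)
    · have : t = 1 := Subtype.ext (le_antisymm t.2.2 (not_lt.1 ht))
      rw [this]
      change (F (ρ 1 * ζ))⁻¹ + h 0 ∈ closure Dᶜ
      rw [h1w]
      exact (frontier_compl D ▸ hw).1

theorem Accessible.arcAccessible {U : Set ℂ} {w : ℂ} (h : Accessible U w) : ArcAccessible U w :=
  let ⟨_, hc, hi, _, hU, h1⟩ := h
  arcAccessible_of_path hc hi hU h1

theorem Accessible.image {X Y : Type*} [TopologicalSpace X] [TopologicalSpace Y] {U : Set X}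
    {x : X} (h : Accessible U x) (e : X ≃ₜ Y) : Accessible (e '' U) (e x) := by
  obtain ⟨φ, hc, hi, hcl, hU, h1⟩ := h
  refine ⟨e ∘ φ, e.continuous.comp hc, e.injective.comp hi, fun t => ?_,
    fun t ht => mem_image_of_mem e (hU t ht), congrArg e h1⟩
  rw [← e.image_closure]
  exact mem_image_of_mem e (hcl t)

theorem accessible_image_iff {X Y : Type*} [TopologicalSpace X] [TopologicalSpace Y] {U : Set X}
    {x : X} (e : X ≃ₜ Y) : Accessible (e '' U) (e x) ↔ Accessible U x :=
  ⟨fun h => by simpa [image_image] using h.image e.symm, fun h => h.image e⟩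

theorem exists_injOn_image_closedBall_eq {D : Set ℂ} (e : D ≃ₜ closedBall (0 : ℂ) 1) :
    ∃ h : ℂ → ℂ, ContinuousOn h (closedBall 0 1) ∧ InjOn h (closedBall 0 1) ∧
      h '' closedBall 0 1 = D := by
  classical
  set h : ℂ → ℂ := fun z => if hz : z ∈ closedBall (0 : ℂ) 1 then e.symm ⟨z, hz⟩ else 0 with hh
  have hr : (closedBall (0 : ℂ) 1).domRestrict h = fun z => (e.symm z : ℂ) := by
    ext z
    simp [hh, mem_closedBall_zero_iff.1 z.2]
  refine ⟨h, ?_, ?_, ?_⟩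
  · rw [continuousOn_iff_continuous_domRestrict, hr]
    fun_prop
  · rw [injOn_iff_injective, hr]
    exact Subtype.val_injective.comp e.symm.injective
  · rw [← range_domRestrict, hr]
    exact (e.symm.surjective.range_comp _).trans Subtype.range_val

theorem nonempty_homeomorph_closedBall_iff {D : Set ℂ} (hD : IsCompact D)
    (hne : (interior D).Nonempty) :
    Nonempty (D ≃ₜ closedBall (0 : ℂ) 1) ↔
      (IsConnected (interior D) ∧ IsConnected Dᶜ ∧
        (∀ x ∈ frontier D, Accessible (interior D) x) ∧
        (∀ x ∈ frontier D, Accessible Dᶜ x)) := by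
  constructor
  · rintro ⟨e⟩
    obtain ⟨h, hc, hi, rfl⟩ := exists_injOn_image_closedBall_eq e
    exact ⟨⟨hne, isPreconnected_interior_image_closedBall hc hi⟩,
      ⟨nonempty_compl.2 hD.ne_univ, isPreconnected_compl_of_allLogs hD
        (allLogs_closedBall.image (isCompact_closedBall 0 1) hc hi)⟩,
      fun x hx => accessible_interior_image_closedBall hc hi hx,
      fun x hx => accessible_compl_image_closedBall hc hi hx⟩
  · rintro ⟨hU, hV, hUa, hVa⟩
    exact nonempty_homeomorph_closedBall_of_arcAccessible hD hne hU.isPreconnected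
      hV.isPreconnected (fun w hw => (hUa w hw).arcAccessible)
      fun w hw => (hVa w hw).arcAccessible

/-- A compact subset of the plane with nonempty interior is homeomorphic to the closed
2-dimensional disk iff its interior is connected, its complement is connected, and every
boundary point is accessible both from the interior and from the complement. -/
theorem compact_homeomorph_closedDisk_iff
    (D : Set (EuclideanSpace ℝ (Fin 2))) (hD : IsCompact D)
    (hne : (interior D).Nonempty) :
    Nonempty (D ≃ₜ (Metric.closedBall (0 : EuclideanSpace ℝ (Fin 2)) 1)) ↔
      (IsConnected (interior D) ∧ IsConnected Dᶜ ∧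
        (∀ x ∈ frontier D, Accessible (interior D) x) ∧
        (∀ x ∈ frontier D, Accessible Dᶜ x)) := by
  let L := Complex.orthonormalBasisOneI.repr
  let e : ℂ ≃ₜ EuclideanSpace ℝ (Fin 2) := L.toHomeomorph
  obtain ⟨K, rfl⟩ : ∃ K, e '' K = D := ⟨e ⁻¹' D, image_preimage_eq _ e.surjective⟩
  have hball : e '' closedBall 0 1 = closedBall 0 1 := by
    have := L.image_closedBall 0 1
    rwa [map_zero] at this
  have hcon : ∀ s : Set ℂ, IsConnected (e '' s) ↔ IsConnected s := fun s => e.isConnected_image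
  rw [← e.image_interior] at hne
  rw [← hball, ← e.image_interior, ← e.image_frontier, ← image_compl_eq e.bijective, hcon, hcon,
    forall_mem_image, forall_mem_image]
  simp only [accessible_image_iff]
  rw [← nonempty_homeomorph_closedBall_iff (e.isCompact_image.1 hD) hne.of_image]
  exact ⟨fun ⟨f⟩ => ⟨(e.image K).trans (f.trans (e.image _).symm)⟩,
    fun ⟨f⟩ => ⟨(e.image K).symm.trans (f.trans (e.image _))⟩⟩
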